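/- Let d ≥ 1 be an integer and suppose there exists a robust lattice covering of ℝ^d with density D ≤ ν_d. Then there exists a constant C = C(d, D) such that for every integer n ≥ 2 there is a lattice covering of ℝⁿ by balls of density at most C · n · (ln n)^γ, where γ := (1/2)·log₂(2πe) − (1/d)·log₂(ν_d/D); in particular Θ_n ≤ C n (ln n)^γ. -/

import Mathlib

open MeasureTheory Pointwise

noncomputable section

/-- The lattice generated by vectors `b`. -/
def latticeSet {n : ℕ} (b : Fin n → EuclideanSpace ℝ (Fin n)) :
    Set (EuclideanSpace ℝ (Fin n)) :=
  {x | ∃ c : Fin n → ℤ, x = ∑ i, (c i : ℝ) • b i}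

/-- The determinant of the lattice generated by `b`. -/
def latticeDet {n : ℕ} (b : Fin n → EuclideanSpace ℝ (Fin n)) : ℝ :=
  |(Matrix.of fun i j => b j i).det|

/-- Vertex set of the parallelepiped starting at `x` generated by `v`. -/
def vertexSet {n : ℕ} (x : EuclideanSpace ℝ (Fin n))
    (v : Fin n → EuclideanSpace ℝ (Fin n)) : Set (EuclideanSpace ℝ (Fin n)) :=
  {y | ∃ lam : Fin n → ℝ, (∀ i, lam i = 0 ∨ lam i = 1) ∧ y = x + ∑ i, lam i • v i}

/-- `P` is a fundamental parallelepiped of the lattice `Λ` with determinant `detΛ`. -/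
def IsFundParallelepiped {n : ℕ} (Λ : Set (EuclideanSpace ℝ (Fin n))) (detΛ : ℝ)
    (P : Set (EuclideanSpace ℝ (Fin n))) : Prop :=
  ∃ x v, LinearIndependent ℝ v ∧ P = convexHull ℝ (vertexSet x v) ∧
    vertexSet x v ⊆ Λ ∧ volume P = ENNReal.ofReal detΛ

/-- `(Λ(b), B_r)` is a lattice covering of `ℝⁿ`. -/
def IsLatticeCovering {n : ℕ} (b : Fin n → EuclideanSpace ℝ (Fin n)) (r : ℝ) : Prop :=
  LinearIndependent ℝ b ∧ latticeSet b + Metric.closedBall 0 r = Set.univ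

/-- `(Λ(b), B_r)` is a robust lattice covering of `ℝⁿ`. -/
def IsRobustCovering {n : ℕ} (b : Fin n → EuclideanSpace ℝ (Fin n)) (r : ℝ) : Prop :=
  IsLatticeCovering b r ∧
  ∀ c : EuclideanSpace ℝ (Fin n),
    ∃ P, IsFundParallelepiped (latticeSet b) (latticeDet b) P ∧
      P ⊆ Metric.closedBall c r

/-- The density of the lattice covering `(Λ(b), B_r)`. -/
def coveringDensity {n : ℕ} (b : Fin n → EuclideanSpace ℝ (Fin n)) (r : ℝ) : ℝ :=
  (volume (Metric.closedBall (0 : EuclideanSpace ℝ (Fin n)) r)).toReal / latticeDet b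

/-- `ν_d`, the volume of the ball of radius `√d` in `ℝ^d`. -/
def nu (d : ℕ) : ℝ :=
  (volume (Metric.closedBall (0 : EuclideanSpace ℝ (Fin d)) (Real.sqrt d))).toReal

/-!
In coordinates with respect to a basis, the points left uncovered by the balls around a lattice form
a subset of the torus, whose measure is the uncovered fraction of space.

A first lattice of density of order `n` and with an exponentially small uncovered fraction is
obtained by stacking randomly shifted copies of a lattice on the line over the integer points of
`ℝᵏ`. Each ball of radius `R` contains many integer points, whose random intervals are independent
along linearly independent sets of integer vectors; truncated inclusion–exclusion over these sets
then estimates the probability that a point stays uncovered. The error comes from independent sets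
whose span contains further points, and reduction modulo a prime shows that these are rare.

In a lattice stacked over a scaled copy of the robust `d`-dimensional lattice, a point is uncovered
only if it is uncovered from all `2 ^ d` vertices of a fundamental parallelepiped. As the edges of
the parallelepiped are linearly independent, suitable shifts, chosen one direction at a time by
Markov's inequality, raise the uncovered fraction to the power `2 ^ d` up to a constant, while the
density grows by the factor `(2πe) ^ (d / 2) * (D / ν_d)`. After `T` such steps with `2 ^ (d * T)`
of order `log n` the uncovered fraction is below `n⁻ⁿ`, so that enlarging the radius by the factor
`1 + 1 / n` covers everything; the density has then been multiplied by a constant times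
`(log n) ^ γ`.
-/

section CoordinateBall

variable {ι V : Type*} [Fintype ι] [NormedAddCommGroup V] [NormedSpace ℝ V] {b : ι → V}

lemma isCompact_setOf_norm_sum_smul_le (hb : LinearIndependent ℝ b) (r : ℝ) :
    IsCompact {t : ι → ℝ | ‖∑ i, t i • b i‖ ≤ r} := by
  let f := Fintype.linearCombination ℝ b
  obtain ⟨K, -, hK⟩ := f.exists_antilipschitzWith
    (LinearMap.ker_eq_bot.2 hb.fintypeLinearCombination_injective)
  have hball : {t : ι → ℝ | ‖∑ i, t i • b i‖ ≤ r} = f ⁻¹' Metric.closedBall 0 r := by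
    ext t
    simp [f, Fintype.linearCombination_apply]
  rw [hball]
  exact Metric.isCompact_of_isClosed_isBounded
    (Metric.isClosed_closedBall.preimage f.continuous_of_finiteDimensional)
    (hK.isBounded_preimage Metric.isBounded_closedBall)

lemma finite_setOf_norm_sum_intCast_smul_le (hb : LinearIndependent ℝ b) (r : ℝ) :
    {c : ι → ℤ | ‖∑ i, (c i : ℝ) • b i‖ ≤ r}.Finite :=
  ((Topology.IsClosedEmbedding.piMap fun _ : ι ↦ Int.isClosedEmbedding_coe_real).isCompact_preimage
    (isCompact_setOf_norm_sum_smul_le hb r)).finite_of_discrete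

end CoordinateBall

section CubeIntersection

variable {G : Type*} [AddCommGroup G]

/-- The intersection of the translates of `U` by the vertices `∑ i ∈ s, u i` of the (possibly
degenerate) parallelepiped at the origin generated by `u`. -/
def cubeIntersection {ι : Type*} (U : Set G) (u : ι → G) : Set G :=
  {g | ∀ s : Finset ι, g - ∑ i ∈ s, u i ∈ U}

lemma cubeIntersection_subset {ι : Type*} (U : Set G) (u : ι → G) : cubeIntersection U u ⊆ U :=
  fun g hg ↦ by simpa using hg ∅

lemma cubeIntersection_cons {d : ℕ} (U : Set G) (x : G) (u : Fin d → G) :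
    cubeIntersection U (Fin.cons x u : Fin (d + 1) → G) =
      cubeIntersection {g | g ∈ U ∧ g - x ∈ U} u := by
  classical
  ext g
  constructor
  · intro h s
    have hs : ∑ i ∈ s.map (Fin.succEmb d), (Fin.cons x u : Fin (d + 1) → G) i = ∑ i ∈ s, u i := by
      simp
    refine ⟨hs ▸ h (s.map (Fin.succEmb d)), ?_⟩
    have h0 := h (insert 0 (s.map (Fin.succEmb d)))
    rw [Finset.sum_insert (by simp [Fin.succ_ne_zero]), hs, Fin.cons_zero] at h0
    rwa [sub_sub, add_comm]
  · intro h s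
    have hs : ∑ i ∈ s, (Fin.cons x u : Fin (d + 1) → G) i =
        (if 0 ∈ s then x else 0) + ∑ i with i.succ ∈ s, u i := by
      rw [← Finset.sum_ite_mem_eq, Fin.sum_univ_succ, Finset.sum_filter]
      simp
    rw [hs]
    obtain ⟨h0, hx⟩ := h {i | i.succ ∈ s}
    split_ifs
    · rwa [add_comm, ← sub_sub]
    · rwa [zero_add]

end CubeIntersection

lemma measurePreserving_finCons (α : Type*) [MeasureSpace α] [SigmaFinite (volume : Measure α)]
    (d : ℕ) : MeasurePreserving
      (fun p : α × (Fin d → α) ↦ (Fin.cons p.1 p.2 : Fin (d + 1) → α)) volume volume := by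
  have hcons : (fun p : α × (Fin d → α) ↦ (Fin.cons p.1 p.2 : Fin (d + 1) → α)) =
      (MeasurableEquiv.piFinSuccAbove (fun _ ↦ α) 0).symm := by
    ext1 p
    simp [MeasurableEquiv.piFinSuccAbove, Fin.consEquiv]
  rw [hcons]
  exact (volume_preserving_piFinSuccAbove (fun _ : Fin (d + 1) ↦ α) 0).symm

section CubeIntersectionMeasure

variable {G : Type*} [AddCommGroup G] [MeasureSpace G] [MeasurableAdd₂ G] [MeasurableNeg G]
  {U : Set G}

lemma measurable_volume_cubeIntersection [SFinite (volume : Measure G)] {ι : Type*} [Finite ι]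
    (hU : MeasurableSet U) : Measurable fun u : ι → G ↦ volume (cubeIntersection U u) := by
  refine measurable_measure_prodMk_left
    (s := {p : (ι → G) × G | ∀ s : Finset ι, p.2 - ∑ i ∈ s, p.1 i ∈ U}) ?_
  rw [Set.ofPred_forall]
  refine MeasurableSet.iInter fun s ↦ Measurable.sub measurable_snd ?_ hU
  exact Finset.measurable_sum s fun i _ ↦ (measurable_pi_apply i).comp measurable_fst

lemma measurableSet_setOf_mem_and_sub_mem (hU : MeasurableSet U) :
    MeasurableSet {p : G × G | p.2 ∈ U ∧ p.2 - p.1 ∈ U} :=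
  (measurable_snd hU).inter ((measurable_snd.sub measurable_fst) hU)

lemma lintegral_volume_inter_translate [SFinite (volume : Measure G)]
    [(volume : Measure G).IsAddLeftInvariant] [(volume : Measure G).IsNegInvariant]
    (hU : MeasurableSet U) :
    ∫⁻ x : G, volume {g | g ∈ U ∧ g - x ∈ U} = volume U * volume U := by
  have hmeas := measurableSet_setOf_mem_and_sub_mem hU
  have hslice (g : G) : volume ((fun x ↦ (x, g)) ⁻¹' {p : G × G | p.2 ∈ U ∧ p.2 - p.1 ∈ U}) =
      U.indicator (fun _ ↦ volume U) g := by
    by_cases hg : g ∈ U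
    · simp only [Set.preimage_ofPred_eq, hg, true_and, Set.indicator_of_mem]
      exact (Measure.measurePreserving_sub_left volume g).measure_preimage hU.nullMeasurableSet
    · simp [hg]
  calc ∫⁻ x : G, volume {g | g ∈ U ∧ g - x ∈ U}
      = (volume.prod volume) {p : G × G | p.2 ∈ U ∧ p.2 - p.1 ∈ U} :=
        (Measure.prod_apply hmeas).symm
    _ = volume U * volume U := by
        rw [Measure.prod_apply_symm hmeas]
        simp only [hslice, lintegral_indicator hU, setLIntegral_const]

variable [IsProbabilityMeasure (volume : Measure G)] [(volume : Measure G).IsAddLeftInvariant]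
  [(volume : Measure G).IsNegInvariant]

lemma volume_setOf_lt_volume_inter_translate_le (hU : MeasurableSet U) {K : ENNReal} (hK : K ≠ 0)
    (hK' : K ≠ ⊤) :
    volume {x : G | K * (volume U * volume U) < volume {g | g ∈ U ∧ g - x ∈ U}} ≤ 1 / K := by
  have hUtop : volume U ≠ ⊤ := measure_ne_top _ _
  by_cases hU0 : volume U = 0
  · have hnull (x : G) : volume {g | g ∈ U ∧ g - x ∈ U} = 0 :=
      measure_mono_null (fun _ hg ↦ hg.1) hU0
    simp [hnull]
  calc volume {x : G | K * (volume U * volume U) < volume {g | g ∈ U ∧ g - x ∈ U}}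
      ≤ volume {x : G | K * (volume U * volume U) ≤ volume {g | g ∈ U ∧ g - x ∈ U}} :=
        measure_mono (Set.ofPred_subset_ofPred.2 fun _ ↦ le_of_lt)
    _ ≤ (∫⁻ x : G, volume {g | g ∈ U ∧ g - x ∈ U}) / (K * (volume U * volume U)) :=
        meas_ge_le_lintegral_div
          (measurable_measure_prodMk_left (measurableSet_setOf_mem_and_sub_mem hU)).aemeasurable
          (mul_ne_zero hK (mul_ne_zero hU0 hU0))
          (ENNReal.mul_ne_top hK' (ENNReal.mul_ne_top hUtop hUtop))
    _ = 1 / K := by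
        rw [lintegral_volume_inter_translate hU]
        nth_rw 1 [← one_mul (volume U * volume U)]
        exact ENNReal.mul_div_mul_right _ _ (mul_ne_zero hU0 hU0) (ENNReal.mul_ne_top hUtop hUtop)

lemma pow_two_pow_succ_sub_one_mul {M : Type*} [CommMonoid M] (a t : M) (d : ℕ) :
    a ^ (2 ^ (d + 1) - 1) * t ^ (2 ^ (d + 1)) = a ^ (2 ^ d - 1) * (a * (t * t)) ^ (2 ^ d) := by
  have exponent_eq : 2 ^ (d + 1) - 1 = 2 ^ d - 1 + 2 ^ d := by
    have := Nat.one_le_two_pow (n := d)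
    rw [pow_succ]
    omega
  rw [exponent_eq, pow_add, mul_pow, ← pow_two, ← pow_mul, pow_succ' 2, mul_assoc]

/- One direction at a time: by Markov, outside a set of measure `1 / K` replacing `U` by
`U ∩ (U + x)` squares the measure up to a factor `K`. -/
lemma volume_setOf_lt_volume_cubeIntersection_le (hU : MeasurableSet U) {K : ENNReal} (hK : K ≠ 0)
    (hK' : K ≠ ⊤) (d : ℕ) :
    volume {u : Fin d → G |
      K ^ (2 ^ d - 1) * volume U ^ (2 ^ d) < volume (cubeIntersection U u)} ≤ d / K := by
  induction d generalizing U with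
  | zero =>
    have hle (u : Fin 0 → G) := measure_mono (μ := volume) (cubeIntersection_subset U u)
    simp [(hle _).not_gt]
  | succ d ih =>
    let bad := {x : G | K * (volume U * volume U) < volume {g | g ∈ U ∧ g - x ∈ U}}
    have hbad : MeasurableSet bad := measurableSet_lt measurable_const
      (measurable_measure_prodMk_left (measurableSet_setOf_mem_and_sub_mem hU))
    have hS := measurableSet_lt (measurable_const (a := K ^ (2 ^ (d + 1) - 1) *
      volume U ^ (2 ^ (d + 1)))) (measurable_volume_cubeIntersection (ι := Fin (d + 1)) hU)
    have hslice (x : G) : volume {u : Fin d → G | K ^ (2 ^ (d + 1) - 1) * volume U ^ (2 ^ (d + 1)) <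
        volume (cubeIntersection U (Fin.cons x u : Fin (d + 1) → G))} ≤
        bad.indicator (fun _ ↦ 1) x + d / K := by
      by_cases hx : x ∈ bad
      · rw [Set.indicator_of_mem hx]
        exact prob_le_one.trans le_self_add
      rw [Set.indicator_of_notMem hx, zero_add]
      refine (measure_mono fun u hu ↦ ?_).trans (ih (hU.inter ((measurable_id.sub_const x) hU)))
      rw [Set.mem_ofPred_eq, cubeIntersection_cons] at hu
      refine lt_of_le_of_lt ?_ hu
      rw [pow_two_pow_succ_sub_one_mul]
      gcongr
      exact not_lt.1 hx
    rw [← (measurePreserving_finCons G d).measure_preimage hS.nullMeasurableSet,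
      Measure.volume_eq_prod, Measure.prod_apply ((measurePreserving_finCons G d).measurable hS)]
    refine (lintegral_mono hslice).trans ?_
    rw [lintegral_add_right _ measurable_const, lintegral_indicator hbad]
    simp only [lintegral_const, Measure.restrict_apply_univ, one_mul, measure_univ, mul_one]
    calc volume bad + d / K ≤ 1 / K + d / K := by
          gcongr
          exact volume_setOf_lt_volume_inter_translate_le hU hK hK'
      _ = (d + 1 : ℕ) / K := by rw [← ENNReal.add_div, Nat.cast_succ, add_comm]

end CubeIntersectionMeasure

section Torus

variable {ι κ n : Type*}

instance : IsProbabilityMeasure (volume : Measure UnitAddCircle) := ⟨by simp⟩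

-- Instance search times out on these when it meets them inside larger goals.
instance [Finite n] : BorelSpace (UnitAddTorus n) := inferInstance
instance [Fintype n] : (volume : Measure (UnitAddTorus n)).IsAddHaarMeasure := inferInstance
instance [Fintype n] [Fintype κ] :
    (volume : Measure (κ → UnitAddTorus n)).IsAddHaarMeasure :=
  Measure.pi.isAddHaarMeasure fun _ : κ ↦ (volume : Measure (UnitAddTorus n))

/-- The coordinatewise quotient map `ℝⁿ → (ℝ/ℤ)ⁿ`. The torus carries the coordinates, with respect
to a basis of the lattice, of points of space modulo the lattice. -/
def torusMk (n : Type*) : (n → ℝ) →+ UnitAddTorus n :=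
  (QuotientAddGroup.mk' (AddSubgroup.zmultiples (1 : ℝ))).compLeft n

@[simp]
lemma torusMk_apply (t : n → ℝ) (i : n) : torusMk n t i = (t i : UnitAddCircle) := rfl

lemma torusMk_intCast_smul (k : ℤ) (t : n → ℝ) : torusMk n ((k : ℝ) • t) = k • torusMk n t := by
  rw [Int.cast_smul_eq_zsmul, map_zsmul]

lemma torusMk_surjective : Function.Surjective (torusMk n) :=
  (QuotientAddGroup.mk'_surjective _).comp_left

lemma continuous_torusMk : Continuous (torusMk n) :=
  continuous_pi fun i ↦ (AddCircle.continuous_mk' 1).comp (continuous_apply i)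

lemma torusMk_eq_torusMk_iff {s t : n → ℝ} :
    torusMk n s = torusMk n t ↔ ∃ c : n → ℤ, ∀ i, s i = t i + c i := by
  have hcoord (i : n) : (s i : UnitAddCircle) = t i ↔ ∃ c : ℤ, s i = t i + c := by
    rw [← sub_eq_zero, ← AddCircle.coe_sub, AddCircle.coe_eq_zero_iff]
    simp [eq_comm (b := s i - t i), sub_eq_iff_eq_add']
  rw [funext_iff, ← Classical.skolem (p := fun i c ↦ s i = t i + (c : ℤ))]
  exact forall_congr' hcoord

/-- The representative in `[0, 1)ⁿ` of a point of the torus. -/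
def torusLift (σ : UnitAddTorus n) : n → ℝ :=
  fun j ↦ AddCircle.measurableEquivIco 1 0 (σ j)

lemma measurable_torusLift : Measurable (torusLift (n := n)) := by
  unfold torusLift
  fun_prop

lemma torusMk_torusLift (σ : UnitAddTorus n) : torusMk n (torusLift σ) = σ :=
  funext fun j ↦ (AddCircle.measurableEquivIco 1 0).symm_apply_apply (σ j)

lemma torusLift_mem_Ico (σ : UnitAddTorus n) (j : n) : torusLift σ j ∈ Set.Ico (0 : ℝ) 1 := by
  simpa [torusLift] using (AddCircle.measurableEquivIco 1 0 (σ j)).2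

/-- The integer matrix `A` acting on vectors with entries in an abelian group. -/
def zsmulVec {M : Type*} [AddCommGroup M] [Fintype κ] (A : Matrix ι κ ℤ) : (κ → M) →+ (ι → M) where
  toFun X i := ∑ j, A i j • X j
  map_zero' := by ext; simp
  map_add' X Y := by ext; simp [Finset.sum_add_distrib]

lemma zsmulVec_apply {M : Type*} [AddCommGroup M] [Fintype κ] (A : Matrix ι κ ℤ) (X : κ → M)
    (i : ι) : zsmulVec A X i = ∑ j, A i j • X j := rfl

lemma surjective_zsmulVec_unitAddTorus [Finite ι] [Fintype κ] [DecidableEq ι] {A : Matrix ι κ ℤ}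
    {B : Matrix κ ι ℝ} (hAB : A.map (Int.cast : ℤ → ℝ) * B = 1) :
    Function.Surjective (zsmulVec A : (κ → UnitAddTorus n) → ι → UnitAddTorus n) := by
  have := Fintype.ofFinite ι
  intro Y
  choose y hy using fun i ↦ torusMk_surjective (Y i)
  refine ⟨fun j ↦ torusMk n (∑ i, B j i • y i), funext fun i ↦ ?_⟩
  have hAB' (i' : ι) : ∑ j, (A i j : ℝ) * B j i' = if i = i' then 1 else 0 := by
    rw [← Matrix.one_apply, ← hAB, Matrix.mul_apply]
    rfl
  simp only [zsmulVec_apply, ← torusMk_intCast_smul, ← map_sum, Finset.smul_sum, smul_smul]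
  rw [Finset.sum_comm]
  simp [← Finset.sum_smul, hAB', hy]

lemma measurePreserving_zsmulVec_unitAddTorus [Fintype n] [Fintype ι] [Fintype κ] [DecidableEq ι]
    {A : Matrix ι κ ℤ} {B : Matrix κ ι ℝ} (hAB : A.map (Int.cast : ℤ → ℝ) * B = 1) :
    MeasurePreserving (zsmulVec A : (κ → UnitAddTorus n) → ι → UnitAddTorus n) volume volume := by
  refine AddMonoidHom.measurePreserving ?_ (surjective_zsmulVec_unitAddTorus hAB) (by simp)
  exact continuous_pi fun i ↦ continuous_finsetSum _ fun j _ ↦ (continuous_apply j).zsmul (A i j)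

end Torus

section Uncovered

variable {ι V : Type*} [Fintype ι] [NormedAddCommGroup V] [NormedSpace ℝ V] {b : ι → V}

/-- The points of space not covered by the balls of radius `r` around the points of the lattice
generated by `b`, modulo the lattice and in coordinates with respect to `b`. Its Haar measure is the
uncovered fraction of space. -/
def uncovered (b : ι → V) (r : ℝ) : Set (UnitAddTorus ι) :=
  {g | ∀ t : ι → ℝ, torusMk ι t = g → r < ‖∑ i, t i • b i‖}

lemma compl_uncovered (b : ι → V) (r : ℝ) :
    (uncovered b r)ᶜ = torusMk ι '' {t | ‖∑ i, t i • b i‖ ≤ r} := by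
  ext g
  simp [uncovered, and_comm]

lemma isOpen_uncovered (hb : LinearIndependent ℝ b) (r : ℝ) : IsOpen (uncovered b r) := by
  rw [← isClosed_compl_iff, compl_uncovered]
  exact ((isCompact_setOf_norm_sum_smul_le hb r).image continuous_torusMk).isClosed

lemma measurableSet_uncovered (hb : LinearIndependent ℝ b) (r : ℝ) :
    MeasurableSet (uncovered b r) :=
  (isOpen_uncovered hb r).measurableSet

lemma sub_mem_uncovered {r s : ℝ} {g a : UnitAddTorus ι} (hg : g ∈ uncovered b (r + s))
    (ha : a ∉ uncovered b s) : g - a ∈ uncovered b r := by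
  rw [← Set.mem_compl_iff, compl_uncovered] at ha
  obtain ⟨u, hu, rfl⟩ := ha
  intro t ht
  have hlt := hg (t + u) (by rw [map_add, ht, sub_add_cancel])
  simp only [Pi.add_apply, add_smul, Finset.sum_add_distrib] at hlt
  rw [Set.mem_ofPred_eq] at hu
  linarith [norm_add_le (∑ i, t i • b i) (∑ i, u i • b i)]

lemma zsmul_preimage_compl_uncovered_subset (b : ι → V) (r : ℝ) {N : ℕ} (hN : 0 < N) :
    (fun g ↦ (N : ℤ) • g) ⁻¹' (uncovered b r)ᶜ ⊆
      ⋃ τ : ι → Fin N, (fun g ↦ g - torusMk ι fun i ↦ ((τ i : ℕ) : ℝ) / N) ⁻¹'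
        (uncovered b (r / N))ᶜ := by
  have hN' : (0 : ℝ) < N := by exact_mod_cast hN
  intro g hg
  rw [Set.mem_preimage, compl_uncovered] at hg
  obtain ⟨t, ht, hgt⟩ := hg
  have htorsion : N • (g - torusMk ι ((N : ℝ)⁻¹ • t)) = 0 := by
    rw [← natCast_zsmul, smul_sub, ← torusMk_intCast_smul, smul_smul, Int.cast_natCast,
      mul_inv_cancel₀ hN'.ne', one_smul, hgt, sub_self]
  have hcoord (i : ι) : ∃ m : Fin N,
      (((m : ℕ) / N : ℝ) : UnitAddCircle) = g i - torusMk ι ((N : ℝ)⁻¹ • t) i := by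
    obtain ⟨m, hm, hmi⟩ := (AddCircle.nsmul_eq_zero_iff (p := (1 : ℝ)) hN).1 (congrFun htorsion i)
    exact ⟨⟨m, hm⟩, by simpa using hmi⟩
  choose τ hτ using hcoord
  refine Set.mem_iUnion.2 ⟨τ, ?_⟩
  rw [Set.mem_preimage, compl_uncovered]
  refine ⟨(N : ℝ)⁻¹ • t, ?_, ?_⟩
  · simp only [Set.mem_ofPred_eq, Pi.smul_apply, smul_eq_mul, mul_smul, ← Finset.smul_sum]
    rw [norm_smul, Real.norm_of_nonneg (by positivity), div_eq_inv_mul]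
    exact mul_le_mul_of_nonneg_left ht (by positivity)
  · rw [show (torusMk ι fun i ↦ ((τ i : ℕ) : ℝ) / N) = g - torusMk ι ((N : ℝ)⁻¹ • t) from
      funext hτ, sub_sub_cancel]

lemma volume_compl_uncovered_le (hb : LinearIndependent ℝ b) (r : ℝ) {N : ℕ} (hN : 0 < N) :
    volume (uncovered b r)ᶜ ≤ N ^ Fintype.card ι * volume (uncovered b (r / N))ᶜ := by
  have hmeas (s : ℝ) := (measurableSet_uncovered hb s).compl.nullMeasurableSet (μ := volume)
  rw [← (Measure.measurePreserving_zsmul (volume : Measure (UnitAddTorus ι))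
    (Int.natCast_ne_zero.2 hN.ne')).measure_preimage (hmeas r)]
  refine (measure_mono (zsmul_preimage_compl_uncovered_subset b r hN)).trans ?_
  refine (measure_iUnion_le _).trans_eq ?_
  simp only [(measurePreserving_sub_right volume _).measure_preimage (hmeas (r / N))]
  simp

/- If `g` stays uncovered at radius `r + r / N`, then `a ↦ g - a` maps the region covered at radius
`r / N` into the region uncovered at radius `r`. The latter is small, while the former is at least
the fraction `1 / N ^ n` of the region covered at radius `r`. -/
lemma uncovered_add_div_eq_empty (hb : LinearIndependent ℝ b) {r : ℝ} {N : ℕ} (hN : 0 < N)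
    (hvol : volume (uncovered b r) * (1 + N ^ Fintype.card ι) < 1) :
    uncovered b (r + r / N) = ∅ := by
  refine Set.eq_empty_iff_forall_notMem.2 fun g hg ↦ hvol.not_ge ?_
  have hreflect : volume (uncovered b (r / N))ᶜ ≤ volume (uncovered b r) := by
    rw [← (Measure.measurePreserving_sub_left volume g).measure_preimage
      (measurableSet_uncovered hb r).nullMeasurableSet]
    exact measure_mono fun a ha ↦ sub_mem_uncovered hg ha
  calc 1 = volume (uncovered b r) + volume (uncovered b r)ᶜ := by
        rw [measure_add_measure_compl (measurableSet_uncovered hb r), measure_univ]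
    _ ≤ volume (uncovered b r) + N ^ Fintype.card ι * volume (uncovered b r) := by
        gcongr
        exact (volume_compl_uncovered_le hb r hN).trans (by gcongr)
    _ = volume (uncovered b r) * (1 + N ^ Fintype.card ι) := by ring

end Uncovered

lemma isLatticeCovering_of_uncovered_eq_empty {n : ℕ} {b : Fin n → EuclideanSpace ℝ (Fin n)} {r : ℝ}
    (hb : LinearIndependent ℝ b) (h : uncovered b r = ∅) : IsLatticeCovering b r := by
  refine ⟨hb, Set.eq_univ_of_forall fun y ↦ ?_⟩
  let B := basisOfLinearIndependentOfCardEqFinrank' b hb (by simp)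
  have hy : ∑ i, B.repr y i • b i = y := by simpa [B] using B.sum_repr y
  have hcov : torusMk (Fin n) (B.repr y) ∈ (uncovered b r)ᶜ := by simp [h]
  rw [compl_uncovered] at hcov
  obtain ⟨t, ht, hty⟩ := hcov
  obtain ⟨c, hc⟩ := torusMk_eq_torusMk_iff.1 hty.symm
  refine Set.mem_add.2 ⟨∑ i, (c i : ℝ) • b i, ⟨c, rfl⟩, ∑ i, t i • b i, by simpa using ht, ?_⟩
  rw [← hy, ← Finset.sum_add_distrib]
  exact Finset.sum_congr rfl fun i _ ↦ by rw [← add_smul, hc i, add_comm]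

section Gluing

variable {m d : ℕ}

/-- Concatenation of vectors, as an isometry from the orthogonal sum of `ℝᵐ` and `ℝᵈ` to
`ℝᵐ⁺ᵈ`. -/
def euclideanAppend (m d : ℕ) : EuclideanSpace ℝ (Fin m) × EuclideanSpace ℝ (Fin d) →ₗ[ℝ]
    EuclideanSpace ℝ (Fin (m + d)) where
  toFun p := WithLp.toLp 2 (Fin.append p.1 p.2)
  map_add' p q := by ext i; refine Fin.addCases (fun i ↦ ?_) (fun i ↦ ?_) i <;> simp
  map_smul' c p := by ext i; refine Fin.addCases (fun i ↦ ?_) (fun i ↦ ?_) i <;> simp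

lemma euclideanAppend_apply (p : EuclideanSpace ℝ (Fin m) × EuclideanSpace ℝ (Fin d)) :
    euclideanAppend m d p = WithLp.toLp 2 (Fin.append p.1 p.2) := rfl

lemma norm_euclideanAppend_sq (p : EuclideanSpace ℝ (Fin m) × EuclideanSpace ℝ (Fin d)) :
    ‖euclideanAppend m d p‖ ^ 2 = ‖p.1‖ ^ 2 + ‖p.2‖ ^ 2 := by
  simp [EuclideanSpace.norm_sq_eq, euclideanAppend_apply, Fin.sum_univ_add]

/-- A basis of the lattice in `ℝᵐ⁺ᵈ` obtained by stacking translates of the lattice of `b₁` over the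
points of the lattice of `b₂`: over the point `b₂ j` the translation vector has coordinates `x j`
with respect to `b₁`. -/
def gluedBasis (b₁ : Fin m → EuclideanSpace ℝ (Fin m)) (b₂ : Fin d → EuclideanSpace ℝ (Fin d))
    (x : Fin d → Fin m → ℝ) : Fin (m + d) → EuclideanSpace ℝ (Fin (m + d)) :=
  Fin.append (fun i ↦ euclideanAppend m d (b₁ i, 0))
    (fun j ↦ euclideanAppend m d (∑ i, x j i • b₁ i, b₂ j))

variable {b₁ : Fin m → EuclideanSpace ℝ (Fin m)} {b₂ : Fin d → EuclideanSpace ℝ (Fin d)}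

lemma sum_append_smul_gluedBasis (b₁ : Fin m → EuclideanSpace ℝ (Fin m))
    (b₂ : Fin d → EuclideanSpace ℝ (Fin d)) (x : Fin d → Fin m → ℝ) (s : Fin m → ℝ)
    (τ : Fin d → ℝ) :
    ∑ i, (Fin.append s τ) i • gluedBasis b₁ b₂ x i =
      euclideanAppend m d (∑ i, (s + ∑ j, τ j • x j) i • b₁ i, ∑ j, τ j • b₂ j) := by
  rw [Fin.sum_univ_add]
  simp only [gluedBasis, Fin.append_left, Fin.append_right, ← map_smul, ← map_sum, ← map_add]
  congr 1
  ext1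
  · simp only [Prod.fst_add, Prod.fst_sum, Prod.smul_fst, Pi.add_apply, Finset.sum_apply,
      Pi.smul_apply, add_smul, Finset.sum_add_distrib, Finset.smul_sum, Finset.sum_smul, smul_assoc]
    rw [Finset.sum_comm]
  · simp [Prod.snd_sum]

lemma latticeDet_ne_zero_iff_linearIndependent {n : ℕ} (b : Fin n → EuclideanSpace ℝ (Fin n)) :
    latticeDet b ≠ 0 ↔ LinearIndependent ℝ b := by
  have hcol : (Matrix.of fun i j ↦ b j i).col = WithLp.linearEquiv 2 ℝ (Fin n → ℝ) ∘ b := rfl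
  rw [latticeDet, abs_ne_zero, ← isUnit_iff_ne_zero, ← Matrix.isUnit_iff_isUnit_det,
    ← Matrix.linearIndependent_cols_iff_isUnit, hcol]
  exact LinearMap.linearIndependent_iff_of_injOn
    (WithLp.linearEquiv 2 ℝ (Fin n → ℝ)).toLinearMap (LinearEquiv.injective _).injOn

lemma latticeDet_gluedBasis (b₁ : Fin m → EuclideanSpace ℝ (Fin m))
    (b₂ : Fin d → EuclideanSpace ℝ (Fin d)) (x : Fin d → Fin m → ℝ) :
    latticeDet (gluedBasis b₁ b₂ x) = latticeDet b₁ * latticeDet b₂ := by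
  unfold latticeDet
  rw [← abs_mul, ← Matrix.det_submatrix_equiv_self finSumFinEquiv,
    ← Matrix.det_fromBlocks_zero₂₁ _ (Matrix.of fun i j ↦ (∑ k, x j k • b₁ k) i) _]
  congr 2
  ext i j
  rcases i with i | i <;> rcases j with j | j <;> simp [gluedBasis, euclideanAppend_apply]

lemma linearIndependent_gluedBasis (hb₁ : LinearIndependent ℝ b₁) (hb₂ : LinearIndependent ℝ b₂)
    (x : Fin d → Fin m → ℝ) : LinearIndependent ℝ (gluedBasis b₁ b₂ x) := by
  rw [← latticeDet_ne_zero_iff_linearIndependent, latticeDet_gluedBasis]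
  exact mul_ne_zero ((latticeDet_ne_zero_iff_linearIndependent _).2 hb₁)
    ((latticeDet_ne_zero_iff_linearIndependent _).2 hb₂)

lemma measurePreserving_finAppend (α : Type*) [MeasureSpace α] [SigmaFinite (volume : Measure α)]
    (m d : ℕ) : MeasurePreserving
      (fun p : (Fin m → α) × (Fin d → α) ↦ (Fin.append p.1 p.2 : Fin (m + d) → α))
      volume volume := by
  have h := (volume_measurePreserving_piCongrLeft (fun _ : Fin (m + d) ↦ α) finSumFinEquiv).comp
    (volume_measurePreserving_sumPiEquivProdPi fun _ : Fin m ⊕ Fin d ↦ α).symm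
  convert h using 1
  ext p i
  obtain ⟨i | i, rfl⟩ := finSumFinEquiv.surjective i <;>
    rw [Function.comp_apply, MeasurableEquiv.piCongrLeft_apply_apply] <;>
    simp [MeasurableEquiv.sumPiEquivProdPi, Equiv.sumPiEquivProdPi]

lemma torusMk_append (s : Fin m → ℝ) (τ : Fin d → ℝ) :
    torusMk (Fin (m + d)) (Fin.append s τ) =
      Fin.append (torusMk (Fin m) s) (torusMk (Fin d) τ) := by
  ext i
  refine Fin.addCases (fun i ↦ ?_) (fun i ↦ ?_) i <;> simp

/-- The slice of the uncovered set of a glued lattice over a point with coordinates `τ`, when balls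
of radius `s` are cut out of the second factor: every lattice point within distance `s` of `τ`
contributes a translate of `U`, the set left uncovered in the first factor. -/
def uncoveredSlice {G ι V : Type*} [AddCommGroup G] [Fintype ι] [NormedAddCommGroup V]
    [NormedSpace ℝ V] (U : Set G) (b : ι → V) (s : ℝ) (τ : ι → ℝ) (X : ι → G) : Set G :=
  {g | ∀ l : ι → ℤ, ‖∑ j, (τ j - l j) • b j‖ ≤ s → g - ∑ j, l j • X j ∈ U}

lemma add_mem_uncoveredSlice {x : Fin d → Fin m → ℝ} {r s : ℝ} {g : UnitAddTorus (Fin m)}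
    {τ : Fin d → ℝ}
    (hg : Fin.append g (torusMk (Fin d) τ) ∈ uncovered (gluedBasis b₁ b₂ x) √(r ^ 2 + s ^ 2)) :
    g + torusMk (Fin m) (∑ j, τ j • x j) ∈
      uncoveredSlice (uncovered b₁ r) b₂ s τ fun j ↦ torusMk (Fin m) (x j) := by
  intro l hl t ht
  have hfst : torusMk (Fin m) (t - ∑ j, (τ j - l j) • x j) = g := by
    have hshift : torusMk (Fin m) (∑ j, (l j : ℝ) • x j) = ∑ j, l j • torusMk (Fin m) (x j) := by
      simp only [map_sum, torusMk_intCast_smul]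
    simp only [sub_smul, Finset.sum_sub_distrib, map_sub, ht, hshift]
    abel
  have hsnd : torusMk (Fin d) (fun j ↦ τ j - l j) = torusMk (Fin d) τ :=
    torusMk_eq_torusMk_iff.2 ⟨-l, fun j ↦ by simp [sub_eq_add_neg]⟩
  have hlt := hg (Fin.append (t - ∑ j, (τ j - l j) • x j) fun j ↦ τ j - l j)
    (by rw [torusMk_append, hfst, hsnd])
  rw [sum_append_smul_gluedBasis, sub_add_cancel,
    Real.sqrt_lt' (lt_of_le_of_lt (Real.sqrt_nonneg _) hlt), norm_euclideanAppend_sq] at hlt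
  have hsq : ‖∑ j, (τ j - l j) • b₂ j‖ ^ 2 ≤ s ^ 2 := by gcongr
  exact lt_of_pow_lt_pow_left₀ 2 (norm_nonneg _) (by linarith)

lemma volume_uncovered_gluedBasis_le (hb₁ : LinearIndependent ℝ b₁) (hb₂ : LinearIndependent ℝ b₂)
    (x : Fin d → Fin m → ℝ) (r s : ℝ) :
    volume (uncovered (gluedBasis b₁ b₂ x) √(r ^ 2 + s ^ 2)) ≤
      ∫⁻ σ : UnitAddTorus (Fin d), volume (uncoveredSlice (uncovered b₁ r) b₂ s (torusLift σ)
        fun j ↦ torusMk (Fin m) (x j)) := by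
  have hU := measurableSet_uncovered (linearIndependent_gluedBasis hb₁ hb₂ x) √(r ^ 2 + s ^ 2)
  have happend := measurePreserving_finAppend UnitAddCircle m d
  rw [← happend.measure_preimage hU.nullMeasurableSet, Measure.volume_eq_prod,
    Measure.prod_apply_symm (happend.measurable hU)]
  refine lintegral_mono fun σ ↦ ?_
  rw [← measure_preimage_add_right volume (torusMk (Fin m) (∑ j, torusLift σ j • x j))
    (uncoveredSlice _ _ _ _ _)]
  refine measure_mono fun g hg ↦ add_mem_uncoveredSlice ?_
  rwa [torusMk_torusLift]

end Gluing

section RobustStage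

lemma exists_mul_eq_one_of_linearIndependent {F V ι κ : Type*} [Field F] [AddCommGroup V]
    [Module F V] [Fintype ι] [Finite κ] [DecidableEq κ] {v : κ → V} (hv : LinearIndependent F v)
    {b : ι → V} {A : Matrix κ ι F} (hA : ∀ i, v i = ∑ j, A i j • b j) :
    ∃ B : Matrix ι κ F, A * B = 1 := by
  have := Fintype.ofFinite κ
  obtain ⟨f, hf⟩ := LinearMap.exists_leftInverse_of_injective (Fintype.linearCombination F v)
    (LinearMap.ker_eq_bot.2 hv.fintypeLinearCombination_injective)
  have hfv (i : κ) : f (v i) = Pi.single i 1 := by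
    simpa [Fintype.linearCombination_apply_single] using LinearMap.congr_fun hf (Pi.single i 1)
  refine ⟨Matrix.of fun j i ↦ f (b j) i, ?_⟩
  ext i i'
  have hi := congrFun (hfv i) i'
  rw [hA] at hi
  simpa [Matrix.mul_apply, Matrix.one_apply, Pi.single_apply, eq_comm] using hi

lemma exists_forall_volume_cubeIntersection_zsmulVec_le {n κ : Type*} [Fintype n] [Fintype κ]
    {d : ℕ} {F : Finset (Matrix (Fin d) κ ℤ)}
    (hF : ∀ W ∈ F, ∃ B : Matrix κ (Fin d) ℝ, W.map (Int.cast : ℤ → ℝ) * B = 1)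
    {U : Set (UnitAddTorus n)} (hU : MeasurableSet U) :
    ∃ X : κ → UnitAddTorus n, ∀ W ∈ F, volume (cubeIntersection U (zsmulVec W X)) ≤
      ((d * F.card + 1 : ℕ) : ENNReal) ^ (2 ^ d - 1) * volume U ^ (2 ^ d) := by
  set K : ENNReal := ((d * F.card + 1 : ℕ) : ENNReal) with hK
  have hK0 : K ≠ 0 := Nat.cast_ne_zero.2 (Nat.succ_ne_zero _)
  have hKtop : K ≠ ⊤ := ENNReal.natCast_ne_top _
  let bad (W : Matrix (Fin d) κ ℤ) : Set (κ → UnitAddTorus n) :=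
    zsmulVec W ⁻¹' {u | K ^ (2 ^ d - 1) * volume U ^ (2 ^ d) < volume (cubeIntersection U u)}
  have hbad (W) (hW : W ∈ F) : volume (bad W) ≤ d / K := by
    obtain ⟨B, hB⟩ := hF W hW
    rw [(measurePreserving_zsmulVec_unitAddTorus hB).measure_preimage (measurableSet_lt
      measurable_const (measurable_volume_cubeIntersection hU)).nullMeasurableSet]
    exact volume_setOf_lt_volume_cubeIntersection_le hU hK0 hKtop d
  have hlt : volume (⋃ W ∈ F, bad W) < volume (Set.univ : Set (κ → UnitAddTorus n)) := by
    calc volume (⋃ W ∈ F, bad W) ≤ ∑ W ∈ F, volume (bad W) := measure_biUnion_finset_le _ _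
      _ ≤ F.card * (d / K) := (Finset.sum_le_sum hbad).trans_eq (by simp)
      _ < 1 := by
        rw [← mul_div_assoc, ENNReal.div_lt_iff (.inl hK0) (.inl hKtop), one_mul, hK]
        exact_mod_cast (mul_comm F.card d).trans_lt (Nat.lt_succ_self _)
      _ = volume (Set.univ : Set (κ → UnitAddTorus n)) := measure_univ.symm
  obtain ⟨X, -, hX⟩ := Set.exists_of_ssubset
    (Set.ssubset_univ_iff.2 fun h : ⋃ W ∈ F, bad W = Set.univ ↦ hlt.ne (congrArg _ h))
  exact ⟨X, fun W hW ↦ not_lt.1 fun hcon ↦ hX (Set.mem_biUnion hW hcon)⟩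

section

variable {ι V : Type*} [Fintype ι] [NormedAddCommGroup V] [NormedSpace ℝ V] {b : ι → V}

/-- The integer matrices of full row rank whose rows are the coordinates of lattice vectors of norm
at most `R`. They describe the possible shapes of the robust parallelepipeds. -/
def shortRowMatrices [DecidableEq ι] (b : ι → V) (R : ℝ) : Set (Matrix ι ι ℤ) :=
  {W | (∀ i, ‖∑ j, (W i j : ℝ) • b j‖ ≤ R) ∧
    ∃ B : Matrix ι ι ℝ, W.map (Int.cast : ℤ → ℝ) * B = 1}

lemma finite_shortRowMatrices [DecidableEq ι] (hb : LinearIndependent ℝ b) (R : ℝ) :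
    (shortRowMatrices b R).Finite :=
  (Set.Finite.pi' fun _ : ι ↦ finite_setOf_norm_sum_intCast_smul_le hb R).subset fun _ hW ↦ hW.1

lemma uncoveredSlice_smul {G : Type*} [AddCommGroup G] (U : Set G) (b : ι → V) (s : ℝ)
    (τ : ι → ℝ) (X : ι → G) {h : ℝ} (hh : 0 < h) :
    uncoveredSlice U (fun j ↦ h • b j) (h * s) τ X = uncoveredSlice U b s τ X := by
  have hnorm (l : ι → ℤ) : ‖∑ j, (τ j - l j) • h • b j‖ = h * ‖∑ j, (τ j - l j) • b j‖ := by
    simp only [smul_comm _ h, ← Finset.smul_sum]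
    rw [norm_smul, Real.norm_of_nonneg hh.le]
  simp only [uncoveredSlice, hnorm, mul_le_mul_iff_of_pos_left hh]

lemma uncoveredSlice_subset_preimage_cubeIntersection {G κ : Type*} [AddCommGroup G] (U : Set G)
    {s : ℝ} {τ : ι → ℝ} (X : ι → G) {a : ι → ℤ} {W : Matrix κ ι ℤ}
    (hW : ∀ S : Finset κ, ‖∑ j, (τ j - (a j + ∑ i ∈ S, W i j : ℤ)) • b j‖ ≤ s) :
    uncoveredSlice U b s τ X ⊆
      (fun g ↦ g - ∑ j, a j • X j) ⁻¹' cubeIntersection U (zsmulVec W X) := by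
  intro g hg S
  have hS := hg _ (hW S)
  simp only [add_smul, Finset.sum_smul, Finset.sum_add_distrib] at hS
  rwa [Finset.sum_comm, ← sub_sub] at hS

end

variable {d : ℕ} {bd : Fin d → EuclideanSpace ℝ (Fin d)} {rd : ℝ}

lemma add_sum_mem_vertexSet (x : EuclideanSpace ℝ (Fin d)) (v : Fin d → EuclideanSpace ℝ (Fin d))
    (S : Finset (Fin d)) : x + ∑ i ∈ S, v i ∈ vertexSet x v :=
  ⟨fun i ↦ if i ∈ S then 1 else 0, fun _ ↦ (ite_eq_or_eq _ _ _).symm, by simp⟩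

lemma IsRobustCovering.exists_shortRowMatrix (h : IsRobustCovering bd rd) (τ : Fin d → ℝ) :
    ∃ (a : Fin d → ℤ), ∃ W ∈ shortRowMatrices bd (2 * rd), ∀ S : Finset (Fin d),
      ‖∑ j, (τ j - (a j + ∑ i ∈ S, W i j : ℤ)) • bd j‖ ≤ rd := by
  obtain ⟨_, ⟨x, v, hv, rfl, hL, -⟩, hsub⟩ := h.2 (∑ j, τ j • bd j)
  have hball (S : Finset (Fin d)) : ‖x + ∑ i ∈ S, v i - ∑ j, τ j • bd j‖ ≤ rd := by
    simpa [dist_eq_norm] using hsub (subset_convexHull ℝ _ (add_sum_mem_vertexSet x v S))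
  obtain ⟨a, ha⟩ := hL (by simpa using add_sum_mem_vertexSet x v ∅)
  choose w hw using fun i ↦ hL (by simpa using add_sum_mem_vertexSet x v {i})
  let W : Matrix (Fin d) (Fin d) ℤ := fun i ↦ w i - a
  have hvW (i : Fin d) : v i = ∑ j, (W i j : ℝ) • bd j := by
    simp only [W, Pi.sub_apply, Int.cast_sub, sub_smul, Finset.sum_sub_distrib]
    rw [← hw, ← ha, add_sub_cancel_left]
  refine ⟨a, W, ⟨fun i ↦ ?_, ?_⟩, fun S ↦ ?_⟩
  · have h0 := hball ∅
    have hi := hball {i}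
    rw [Finset.sum_empty, add_zero] at h0
    rw [Finset.sum_singleton] at hi
    calc ‖∑ j, (W i j : ℝ) • bd j‖
        = ‖(x + v i - ∑ j, τ j • bd j) - (x - ∑ j, τ j • bd j)‖ := by rw [← hvW]; congr 1; abel
      _ ≤ 2 * rd := (norm_sub_le _ _).trans (by linarith)
  · exact exists_mul_eq_one_of_linearIndependent (A := W.map Int.cast) hv hvW
  · rw [← norm_neg, ← Finset.sum_neg_distrib]
    refine le_of_eq_of_le (congrArg norm ?_) (hball S)
    simp only [ha, hvW, neg_sub, sub_smul, Finset.sum_sub_distrib, Int.cast_add, Int.cast_sum,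
      add_smul, Finset.sum_add_distrib, Finset.sum_smul]
    rw [Finset.sum_comm]

lemma latticeDet_smul (h : ℝ) (b : Fin d → EuclideanSpace ℝ (Fin d)) :
    latticeDet (fun j ↦ h • b j) = |h| ^ d * latticeDet b := by
  have hmat : (Matrix.of fun i j ↦ (h • b j) i) = h • Matrix.of fun i j ↦ b j i := rfl
  rw [latticeDet, hmat, Matrix.det_smul, abs_mul, abs_pow, Fintype.card_fin, latticeDet]

/- For suitable shifts every point of the second factor sees a robust parallelepiped, whose `2 ^ d`
vertices all have to leave a point uncovered. Finitely many shapes of parallelepipeds suffice, so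
generic shifts work for all of them at once. -/
lemma IsRobustCovering.exists_basis_volume_uncovered_le (hrob : IsRobustCovering bd rd) :
    ∃ K : ENNReal, K ≠ 0 ∧ K ≠ ⊤ ∧
      ∀ (m : ℕ) (b : Fin m → EuclideanSpace ℝ (Fin m)) (r h : ℝ), LinearIndependent ℝ b → 0 < h →
        ∃ b' : Fin (m + d) → EuclideanSpace ℝ (Fin (m + d)), LinearIndependent ℝ b' ∧
          latticeDet b' = latticeDet b * (h ^ d * latticeDet bd) ∧
          volume (uncovered b' √(r ^ 2 + (h * rd) ^ 2)) ≤
            K ^ (2 ^ d - 1) * volume (uncovered b r) ^ (2 ^ d) := by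
  have hfin := finite_shortRowMatrices hrob.1.1 (2 * rd)
  refine ⟨(d * hfin.toFinset.card + 1 : ℕ), Nat.cast_ne_zero.2 (Nat.succ_ne_zero _),
    ENNReal.natCast_ne_top _, fun m b r h hb hh ↦ ?_⟩
  obtain ⟨X, hX⟩ := exists_forall_volume_cubeIntersection_zsmulVec_le
    (F := hfin.toFinset) (fun W hW ↦ (hfin.mem_toFinset.1 hW).2)
    (measurableSet_uncovered hb r)
  choose x hx using fun j ↦ torusMk_surjective (X j)
  have hbd : LinearIndependent ℝ fun j ↦ h • bd j :=
    hrob.1.1.units_smul fun _ ↦ Units.mk0 h hh.ne'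
  refine ⟨gluedBasis b (fun j ↦ h • bd j) x, linearIndependent_gluedBasis hb hbd x, ?_, ?_⟩
  · rw [latticeDet_gluedBasis, latticeDet_smul, abs_of_pos hh]
  refine (volume_uncovered_gluedBasis_le hb hbd x r (h * rd)).trans ?_
  simp only [uncoveredSlice_smul _ _ _ _ _ hh, hx]
  refine (lintegral_mono (g := fun _ ↦ _) fun σ ↦ ?_).trans_eq
    ((lintegral_const _).trans (by rw [measure_univ, mul_one]))
  obtain ⟨a, W, hW, hball⟩ := hrob.exists_shortRowMatrix (torusLift σ)
  refine le_trans ?_ (hX W (hfin.mem_toFinset.2 hW))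
  refine (measure_mono (uncoveredSlice_subset_preimage_cubeIntersection _ X hball)).trans_eq ?_
  simp only [sub_eq_add_neg]
  exact measure_preimage_add_right volume (-∑ j, a j • X j) _

lemma IsRobustCovering.exists_basis_volume_uncovered_le_pow (hrob : IsRobustCovering bd rd) :
    ∃ K : ENNReal, K ≠ 0 ∧ K ≠ ⊤ ∧
      ∀ (m : ℕ) (b : Fin m → EuclideanSpace ℝ (Fin m)) (r h : ℝ), LinearIndependent ℝ b → 0 < h →
        0 ≤ r → ∀ T n : ℕ, n = m + d * T →
          ∃ b' : Fin n → EuclideanSpace ℝ (Fin n), LinearIndependent ℝ b' ∧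
            latticeDet b' = latticeDet b * (h ^ d * latticeDet bd) ^ T ∧
            K * volume (uncovered b' √(r ^ 2 + T * (h * rd) ^ 2)) ≤
              (K * volume (uncovered b r)) ^ (2 ^ (d * T)) := by
  obtain ⟨K, hK0, hKtop, hstage⟩ := hrob.exists_basis_volume_uncovered_le
  refine ⟨K, hK0, hKtop, fun m b r h hb hh hr T ↦ ?_⟩
  induction T with
  | zero =>
    rintro n rfl
    exact ⟨b, hb, by simp, by simp [Real.sqrt_sq hr]⟩
  | succ T ih =>
    rintro n hn
    obtain rfl : n = m + d * T + d := by rw [hn, mul_add_one, add_assoc]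
    obtain ⟨b₁, hb₁, hdet₁, hvol₁⟩ := ih _ rfl
    obtain ⟨b₂, hb₂, hdet₂, hvol₂⟩ := hstage _ b₁ √(r ^ 2 + T * (h * rd) ^ 2) h hb₁ hh
    refine ⟨b₂, hb₂, by rw [hdet₂, hdet₁, pow_succ, mul_assoc], ?_⟩
    rw [Real.sq_sqrt (by positivity),
      show r ^ 2 + T * (h * rd) ^ 2 + (h * rd) ^ 2 = r ^ 2 + (T + 1 : ℕ) * (h * rd) ^ 2 by
        push_cast; ring] at hvol₂
    set μ := volume (uncovered b₁ √(r ^ 2 + T * (h * rd) ^ 2))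
    calc K * volume (uncovered b₂ √(r ^ 2 + (T + 1 : ℕ) * (h * rd) ^ 2))
        ≤ K * (K ^ (2 ^ d - 1) * μ ^ (2 ^ d)) := by gcongr
      _ = (K * μ) ^ (2 ^ d) := by
          rw [mul_pow, ← mul_assoc, ← pow_succ', Nat.sub_add_cancel Nat.one_le_two_pow]
      _ ≤ ((K * volume (uncovered b r)) ^ (2 ^ (d * T))) ^ (2 ^ d) := by gcongr
      _ = (K * volume (uncovered b r)) ^ (2 ^ (d * (T + 1))) := by
          rw [← pow_mul, ← pow_add, mul_add_one]

end RobustStage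

section Sieve

variable {α M : Type*}

open Classical in
lemma measureReal_biInter_compl_le {Ω : Type*} [MeasurableSpace Ω] (μ : Measure Ω)
    [IsFiniteMeasure μ] (S : Finset α) (w : Finset α → ℝ)
    (hw : ∀ a ⊆ S, (if a = ∅ then 1 else 0) ≤ ∑ A ∈ a.powerset, w A)
    {ev : α → Set Ω} (hev : ∀ c, MeasurableSet (ev c)) :
    μ.real (⋂ c ∈ S, (ev c)ᶜ) ≤ ∑ A ∈ S.powerset, w A * μ.real (⋂ c ∈ A, ev c) := by
  have measurable_inter (A : Finset α) : MeasurableSet (⋂ c ∈ A, ev c) :=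
    A.measurableSet_biInter fun c _ ↦ hev c
  have measurable_inter_compl : MeasurableSet (⋂ c ∈ S, (ev c)ᶜ) :=
    S.measurableSet_biInter fun c _ ↦ (hev c).compl
  have integrable_indicator {s : Set Ω} (hs : MeasurableSet s) :
      Integrable (s.indicator (1 : Ω → ℝ)) μ := (integrable_const 1).indicator hs
  have pointwise (ω : Ω) : (⋂ c ∈ S, (ev c)ᶜ).indicator (1 : Ω → ℝ) ω ≤
      ∑ A ∈ S.powerset, w A * (⋂ c ∈ A, ev c).indicator 1 ω := by
    have occurring_empty : S.filter (ω ∈ ev ·) = ∅ ↔ ω ∈ ⋂ c ∈ S, (ev c)ᶜ := by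
      simp [Finset.filter_eq_empty_iff]
    have powerset_occurring :
        (S.filter (ω ∈ ev ·)).powerset = S.powerset.filter fun A ↦ ω ∈ ⋂ c ∈ A, ev c := by
      ext A
      simp only [Finset.mem_powerset, Finset.subset_iff, Finset.mem_filter, Set.mem_iInter]
      exact ⟨fun h ↦ ⟨fun c hc ↦ (h hc).1, fun c hc ↦ (h hc).2⟩,
        fun h c hc ↦ ⟨h.1 hc, h.2 c hc⟩⟩
    have := hw _ (S.filter_subset (ω ∈ ev ·))
    rw [powerset_occurring, Finset.sum_filter] at this
    simpa only [occurring_empty, Set.indicator_apply, Pi.one_apply, mul_ite, mul_one, mul_zero]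
      using this
  calc μ.real (⋂ c ∈ S, (ev c)ᶜ)
      = ∫ ω, (⋂ c ∈ S, (ev c)ᶜ).indicator 1 ω ∂μ :=
        (integral_indicator_one measurable_inter_compl).symm
    _ ≤ ∫ ω, ∑ A ∈ S.powerset, w A * (⋂ c ∈ A, ev c).indicator 1 ω ∂μ :=
        integral_mono (integrable_indicator measurable_inter_compl)
          (integrable_finsetSum _ fun A _ ↦ (integrable_indicator (measurable_inter A)).const_mul _)
          pointwise
    _ = ∑ A ∈ S.powerset, w A * μ.real (⋂ c ∈ A, ev c) := by
        rw [integral_finsetSum _ fun A _ ↦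
          (integrable_indicator (measurable_inter A)).const_mul _]
        simp only [integral_const_mul, integral_indicator_one (measurable_inter _)]

lemma ite_eq_empty_le_sum_neg_one_pow [DecidableEq α] (a : Finset α) {J : ℕ} (hJ : Even J) :
    (if a = ∅ then 1 else 0 : ℝ) ≤ ∑ A ∈ a.powerset with A.card ≤ J, (-1 : ℝ) ^ A.card := by
  rw [Finset.sum_filter, Finset.sum_powerset_apply_card fun j ↦ if j ≤ J then (-1 : ℝ) ^ j else 0]
  rcases a.eq_empty_or_nonempty with rfl | hne
  · simp
  obtain ⟨n, hn⟩ := Nat.exists_eq_add_one.2 hne.card_pos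
  have truncate : ∑ m ∈ Finset.range (n + 1 + 1),
        (n + 1).choose m • (if m ≤ J then (-1 : ℝ) ^ m else 0) =
      ∑ m ∈ Finset.range (J + 1), (-1) ^ m * ((n + 1).choose m : ℝ) := by
    calc _ = ∑ m ∈ Finset.range (n + 1 + 1),
          if m ∈ Finset.range (J + 1) then (-1) ^ m * ((n + 1).choose m : ℝ) else 0 := by
          simp [mul_comm]
      _ = _ := by
        rw [Finset.sum_ite_mem]
        refine Finset.sum_subset Finset.inter_subset_right fun m hmJ hm ↦ ?_
        have : n + 1 < m := by
          simp only [Finset.mem_inter, Finset.mem_range] at hm hmJ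
          omega
        simp [Nat.choose_eq_zero_of_lt this]
  rw [if_neg hne.ne_empty, hn, truncate]
  have := Int.alternating_sum_range_choose_eq_choose (n := n) (m := J)
  rw [hJ.neg_one_pow, one_mul] at this
  have : ∑ m ∈ Finset.range (J + 1), (-1) ^ m * ((n + 1).choose m : ℝ) = n.choose J := by
    exact_mod_cast this
  rw [this]
  positivity

lemma sum_powerset_pow_card (S : Finset α) (x : ℝ) :
    ∑ A ∈ S.powerset, x ^ A.card = (1 + x) ^ S.card := by
  simpa using (Finset.prod_one_add S (f := fun _ ↦ x)).symm

variable (F : Type*) [Field F] [AddCommGroup M] [Module F M] (v : α → M)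

/-- `E` indexes linearly independent vectors, but is not closed in the vector matroid of `v` on `S`:
some further index of `S` has its vector in the span of those of `E`. Such sets are the obstructions
to the independence of the events in the sieve. -/
def IsNonclosedIndep (S E : Finset α) : Prop :=
  LinearIndepOn F v (E : Set α) ∧ ∃ w ∈ S, w ∉ E ∧ v w ∈ Submodule.span F (v '' (E : Set α))

variable {F v}

open Classical in
lemma exists_isNonclosedIndep_between {S A B : Finset α} (hBS : B ⊆ S)
    (hA : LinearIndepOn F v (A : Set α)) (hB : ¬ LinearIndepOn F v (B : Set α)) :
    ∃ E, A ⊆ E ∧ E ⊆ A ∪ B ∧ IsNonclosedIndep F v S E := by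
  obtain ⟨E, hE, hAE, hspan, hindep⟩ := exists_linearIndepOn_extension hA
    (Finset.coe_subset.2 (Finset.subset_union_left (s₁ := A) (s₂ := B)))
  lift E to Finset α using (A ∪ B).finite_toSet.subset hE
  obtain ⟨w, hwB, hwE⟩ := Set.not_subset.1 fun h : (B : Set α) ⊆ E ↦ hB (hindep.mono h)
  exact ⟨E, Finset.coe_subset.1 hAE, Finset.coe_subset.1 hE, hindep, w, hBS hwB, hwE,
    hspan ⟨w, Finset.mem_coe.2 (Finset.mem_union_right A hwB), rfl⟩⟩

open Classical in
lemma card_linearIndepOn_le_sum_two_pow {S a B : Finset α} (haS : a ⊆ S) (hBa : B ⊆ a) {J : ℕ}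
    (hBJ : B.card ≤ J) (hB : ¬ LinearIndepOn F v (B : Set α)) :
    ((a.powerset.filter fun A : Finset α ↦ LinearIndepOn F v (A : Set α) ∧ A.card ≤ J).card : ℝ) ≤
      ∑ E ∈ a.powerset with IsNonclosedIndep F v S E ∧ E.card ≤ 2 * J, (2 : ℝ) ^ E.card := by
  have cover : (a.powerset.filter fun A : Finset α ↦ LinearIndepOn F v (A : Set α) ∧ A.card ≤ J) ⊆
      (a.powerset.filter fun E ↦ IsNonclosedIndep F v S E ∧ E.card ≤ 2 * J).biUnion
        Finset.powerset := by
    intro A hA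
    simp only [Finset.mem_filter, Finset.mem_powerset] at hA
    obtain ⟨E, hAE, hE, hNC⟩ := exists_isNonclosedIndep_between (hBa.trans haS) hA.2.1 hB
    have : E.card ≤ A.card + B.card := (Finset.card_le_card hE).trans (Finset.card_union_le A B)
    simp only [Finset.mem_biUnion, Finset.mem_filter, Finset.mem_powerset]
    exact ⟨E, ⟨hE.trans (Finset.union_subset hA.1 hBa), hNC, by omega⟩, hAE⟩
  have := (Finset.card_le_card cover).trans Finset.card_biUnion_le
  simp only [Finset.card_powerset] at this
  exact_mod_cast this

open Classical in
lemma ite_eq_empty_le_sum_linearIndepOn_add {S a : Finset α} (haS : a ⊆ S)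
    {J : ℕ} (hJ : Even J) :
    (if a = ∅ then 1 else 0 : ℝ) ≤
      ∑ A ∈ a.powerset with LinearIndepOn F v ((A : Finset α) : Set α) ∧ A.card ≤ J,
        (-1 : ℝ) ^ A.card +
      ∑ E ∈ a.powerset with IsNonclosedIndep F v S E ∧ E.card ≤ 2 * J, (2 : ℝ) ^ E.card := by
  by_cases h : ∀ A ⊆ a, A.card ≤ J → LinearIndepOn F v (A : Set α)
  · rw [Finset.filter_congr (q := fun A ↦ A.card ≤ J) fun A hA ↦
      and_iff_right_of_imp (h A (Finset.mem_powerset.1 hA))]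
    exact (ite_eq_empty_le_sum_neg_one_pow a hJ).trans
      (le_add_of_nonneg_right (Finset.sum_nonneg fun _ _ ↦ by positivity))
  · push Not at h
    obtain ⟨B, hBa, hBJ, hB⟩ := h
    have hne : a ≠ ∅ := by
      rintro rfl
      exact hB (by simp [Finset.subset_empty.1 hBa])
    have neg_card_le : -((a.powerset.filter fun A : Finset α ↦
          LinearIndepOn F v (A : Set α) ∧ A.card ≤ J).card : ℝ) ≤
        ∑ A ∈ a.powerset with LinearIndepOn F v ((A : Finset α) : Set α) ∧ A.card ≤ J,
          (-1 : ℝ) ^ A.card := by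
      rw [← nsmul_one, ← Finset.sum_const, ← Finset.sum_neg_distrib]
      refine Finset.sum_le_sum fun A _ ↦ ?_
      rcases neg_one_pow_eq_or ℝ A.card with h | h <;> norm_num [h]
    rw [if_neg hne]
    linarith [card_linearIndepOn_le_sum_two_pow haS hBa hBJ hB]

open Classical in
lemma measureReal_biInter_compl_le_sum_linearIndepOn_add {Ω : Type*} [MeasurableSpace Ω]
    (μ : Measure Ω) [IsFiniteMeasure μ] {S : Finset α} {J : ℕ} (hJ : Even J) {ev : α → Set Ω}
    (hev : ∀ c, MeasurableSet (ev c)) {p : ℝ}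
    (hp : ∀ A ⊆ S, LinearIndepOn F v (A : Set α) → μ.real (⋂ c ∈ A, ev c) = p ^ A.card) :
    μ.real (⋂ c ∈ S, (ev c)ᶜ) ≤
      ∑ A ∈ S.powerset with LinearIndepOn F v ((A : Finset α) : Set α) ∧ A.card ≤ J, (-p) ^ A.card +
      ∑ E ∈ S.powerset with IsNonclosedIndep F v S E ∧ E.card ≤ 2 * J, (2 * p) ^ E.card := by
  refine (measureReal_biInter_compl_le μ S (fun A ↦
    (if LinearIndepOn F v (A : Set α) ∧ A.card ≤ J then (-1) ^ A.card else 0) +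
      if IsNonclosedIndep F v S A ∧ A.card ≤ 2 * J then 2 ^ A.card else 0) (fun a ha ↦ ?_)
    hev).trans_eq ?_
  · rw [Finset.sum_add_distrib, ← Finset.sum_filter, ← Finset.sum_filter]
    exact ite_eq_empty_le_sum_linearIndepOn_add ha hJ
  · simp only [Finset.sum_filter, ← Finset.sum_add_distrib]
    refine Finset.sum_congr rfl fun A hA ↦ ?_
    rw [add_mul]
    congr 1 <;> split_ifs with h <;> try simp only [zero_mul]
    · rw [hp A (Finset.mem_powerset.1 hA) h.1, neg_pow p]
    · rw [hp A (Finset.mem_powerset.1 hA) h.1.1, mul_pow]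

open Classical in
lemma sum_pow_card_superset_le (S E : Finset α) (𝒟 : Finset (Finset α)) (h𝒟 : 𝒟 ⊆ S.powerset)
    {p : ℝ} (hp : 0 ≤ p) :
    ∑ A ∈ 𝒟 with E ⊆ A, p ^ A.card ≤ (1 + p) ^ S.card * p ^ E.card := by
  have injOn : Set.InjOn (· \ E) (𝒟.filter (E ⊆ ·) : Set (Finset α)) := by
    intro A hA B hB (hAB : A \ E = B \ E)
    rw [← Finset.sdiff_union_of_subset (Finset.mem_filter.1 hA).2, hAB,
      Finset.sdiff_union_of_subset (Finset.mem_filter.1 hB).2]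
  calc ∑ A ∈ 𝒟 with E ⊆ A, p ^ A.card
      = (∑ A ∈ 𝒟 with E ⊆ A, p ^ (A \ E).card) * p ^ E.card := by
        rw [Finset.sum_mul]
        refine Finset.sum_congr rfl fun A hA ↦ ?_
        rw [← pow_add, Finset.card_sdiff_add_card_eq_card (Finset.mem_filter.1 hA).2]
    _ = (∑ B ∈ (𝒟.filter (E ⊆ ·)).image (· \ E), p ^ B.card) * p ^ E.card := by
        rw [Finset.sum_image injOn]
    _ ≤ (∑ B ∈ S.powerset, p ^ B.card) * p ^ E.card := by
        gcongr
        simp only [Finset.image_subset_iff, Finset.mem_filter, Finset.mem_powerset]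
        exact fun A hA ↦ Finset.sdiff_subset.trans (Finset.mem_powerset.1 (h𝒟 hA.1))
    _ = (1 + p) ^ S.card * p ^ E.card := by rw [sum_powerset_pow_card]

open Classical in
lemma sum_not_linearIndepOn_pow_card_le (S : Finset α) (J : ℕ) {p : ℝ} (hp : 0 ≤ p) :
    ∑ A ∈ S.powerset with ¬ LinearIndepOn F v ((A : Finset α) : Set α) ∧ A.card ≤ J, p ^ A.card ≤
      (1 + p) ^ S.card *
        ∑ E ∈ S.powerset with IsNonclosedIndep F v S E ∧ E.card ≤ J, p ^ E.card := by
  set 𝒟 := S.powerset.filter fun A : Finset α ↦ ¬ LinearIndepOn F v (A : Set α) ∧ A.card ≤ J with h𝒟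
  set 𝒩 := S.powerset.filter fun E ↦ IsNonclosedIndep F v S E ∧ E.card ≤ J with h𝒩
  have exists_subset : ∀ A ∈ 𝒟, ∃ E ∈ 𝒩, E ⊆ A := by
    intro A hA
    simp only [h𝒟, Finset.mem_filter, Finset.mem_powerset] at hA
    obtain ⟨E, -, hEA, hNC⟩ := exists_isNonclosedIndep_between (A := ∅) hA.1 (by simp) hA.2.1
    rw [Finset.empty_union] at hEA
    simp only [h𝒩, Finset.mem_filter, Finset.mem_powerset]
    exact ⟨E, ⟨hEA.trans hA.1, hNC, (Finset.card_le_card hEA).trans hA.2.2⟩, hEA⟩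
  calc ∑ A ∈ 𝒟, p ^ A.card
      ≤ ∑ A ∈ 𝒟, ∑ E ∈ 𝒩, if E ⊆ A then p ^ A.card else 0 := by
        refine Finset.sum_le_sum fun A hA ↦ ?_
        obtain ⟨E, hE, hEA⟩ := exists_subset A hA
        simpa [hEA] using Finset.single_le_sum (f := fun E ↦ if E ⊆ A then p ^ A.card else 0)
          (fun E _ ↦ by positivity) hE
    _ = ∑ E ∈ 𝒩, ∑ A ∈ 𝒟 with E ⊆ A, p ^ A.card := by
        simp only [Finset.sum_filter]
        exact Finset.sum_comm
    _ ≤ ∑ E ∈ 𝒩, (1 + p) ^ S.card * p ^ E.card :=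
        Finset.sum_le_sum fun E _ ↦ sum_pow_card_superset_le S E 𝒟 (Finset.filter_subset _ _) hp
    _ = _ := by rw [Finset.mul_sum]

lemma neg_neg_pow_le {p : ℝ} (hp : 0 ≤ p) (n : ℕ) : -(-p) ^ n ≤ p ^ n := by
  simpa [abs_pow, abs_of_nonneg hp] using neg_le_abs ((-p) ^ n)

lemma sum_neg_pow_card_le (S : Finset α) (J : ℕ) {p : ℝ} (hp : 0 ≤ p) (hp1 : p ≤ 1) :
    ∑ A ∈ S.powerset with A.card ≤ J, (-p) ^ A.card ≤
      Real.exp (-(S.card * p)) + (1 / 2) ^ J * Real.exp (2 * (S.card * p)) := by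
  have tail : -∑ A ∈ S.powerset with ¬ A.card ≤ J, (-p) ^ A.card ≤
      (1 / 2) ^ J * ∑ A ∈ S.powerset, (2 * p) ^ A.card := by
    rw [← Finset.sum_neg_distrib, Finset.mul_sum]
    calc ∑ A ∈ S.powerset with ¬ A.card ≤ J, -(-p) ^ A.card
        ≤ ∑ A ∈ S.powerset with ¬ A.card ≤ J, (1 / 2) ^ J * (2 * p) ^ A.card := by
          refine Finset.sum_le_sum fun A hA ↦ (neg_neg_pow_le hp A.card).trans ?_
          have hJA : J ≤ A.card := (not_le.1 (Finset.mem_filter.1 hA).2).le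
          calc p ^ A.card = (1 / 2) ^ J * (2 ^ J * p ^ A.card) := by
                rw [← mul_assoc, ← mul_pow]; norm_num
            _ ≤ (1 / 2) ^ J * (2 * p) ^ A.card := by
                rw [mul_pow]
                gcongr
                norm_num
      _ ≤ _ := Finset.sum_le_sum_of_subset_of_nonneg (Finset.filter_subset _ _)
          fun _ _ _ ↦ by positivity
  have alternating_le : (1 + -p) ^ S.card ≤ Real.exp (-(S.card * p)) := by
    rw [← mul_neg, Real.exp_nat_mul]
    exact pow_le_pow_left₀ (by linarith) (Real.one_sub_le_exp_neg p) _
  have doubled_le : (1 + 2 * p) ^ S.card ≤ Real.exp (2 * (S.card * p)) := by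
    rw [mul_left_comm, Real.exp_nat_mul]
    exact pow_le_pow_left₀ (by linarith) (add_comm 1 (2 * p) ▸ Real.add_one_le_exp (2 * p)) _
  have split := Finset.sum_filter_add_sum_filter_not S.powerset (·.card ≤ J) fun A ↦ (-p) ^ A.card
  rw [sum_powerset_pow_card] at split tail
  linarith [mul_le_mul_of_nonneg_left doubled_le (by positivity : (0 : ℝ) ≤ (1 / 2) ^ J)]

open Classical in
lemma sum_linearIndepOn_neg_pow_card_le (S : Finset α) (J : ℕ) {p : ℝ} (hp : 0 ≤ p) :
    ∑ A ∈ S.powerset with LinearIndepOn F v ((A : Finset α) : Set α) ∧ A.card ≤ J, (-p) ^ A.card ≤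
      ∑ A ∈ S.powerset with A.card ≤ J, (-p) ^ A.card +
      ∑ A ∈ S.powerset with ¬ LinearIndepOn F v ((A : Finset α) : Set α) ∧ A.card ≤ J,
        p ^ A.card := by
  have split := Finset.sum_filter_add_sum_filter_not (S.powerset.filter (·.card ≤ J))
    (fun A : Finset α ↦ LinearIndepOn F v (A : Set α)) fun A ↦ (-p) ^ A.card
  simp only [Finset.filter_filter, and_comm (a := Finset.card _ ≤ J)] at split
  rw [← split, add_assoc, le_add_iff_nonneg_right, ← Finset.sum_add_distrib]
  exact Finset.sum_nonneg fun A _ ↦ by linarith [neg_neg_pow_le hp A.card]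

variable (F v)

open Classical in
/-- The enumerations, by `Fin e`, of the `e`-element subsets of `S` that are independent but not
closed; unlike the subsets themselves, they can be counted one coordinate at a time. -/
def nonclosedTuples (S : Finset α) (e : ℕ) : Finset (Fin e → α) :=
  (Fintype.piFinset fun _ : Fin e ↦ S).filter
    fun c ↦ Function.Injective c ∧ IsNonclosedIndep F v S (Finset.univ.image c)

variable {F v} in
lemma exists_mem_span_of_mem_nonclosedTuples {S : Finset α} {e : ℕ} {c : Fin e → α}
    (hc : c ∈ nonclosedTuples F v S e) :
    (∀ i, c i ∈ S) ∧ ∃ w ∈ S, w ∉ Set.range c ∧ v w ∈ Submodule.span F (Set.range (v ∘ c)) := by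
  classical
  rw [nonclosedTuples, Finset.mem_filter, Fintype.mem_piFinset] at hc
  obtain ⟨hcS, -, -, w, hw, hwc, hspan⟩ := hc
  rw [Finset.coe_image, Finset.coe_univ, Set.image_univ, ← Set.range_comp] at hspan
  exact ⟨hcS, w, hw, by simpa using hwc, hspan⟩

open Classical in
lemma card_isNonclosedIndep_mul_factorial_le (S : Finset α) (e : ℕ) :
    (S.powerset.filter fun E ↦ IsNonclosedIndep F v S E ∧ E.card = e).card * e.factorial ≤
      (nonclosedTuples F v S e).card := by
  set 𝒩 := S.powerset.filter fun E ↦ IsNonclosedIndep F v S E ∧ E.card = e with h𝒩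
  have mapsTo : Set.MapsTo (fun c : Fin e → α ↦ Finset.univ.image c) (nonclosedTuples F v S e)
      (𝒩 : Set (Finset α)) := by
    intro c hc
    simp only [nonclosedTuples, Finset.coe_filter, Fintype.mem_piFinset] at hc
    simp only [h𝒩, Finset.coe_filter, Finset.mem_powerset]
    exact ⟨Finset.image_subset_iff.2 fun i _ ↦ hc.1 i, hc.2.2,
      by simp [Finset.card_image_of_injective _ hc.2.1]⟩
  rw [Finset.card_eq_sum_card_fiberwise mapsTo, ← smul_eq_mul, ← Finset.sum_const]
  refine Finset.sum_le_sum fun E hE ↦ ?_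
  simp only [h𝒩, Finset.mem_filter, Finset.mem_powerset] at hE
  obtain ⟨hES, hNC, hcard⟩ := hE
  have card_equiv : Fintype.card (Fin e ≃ E) = e.factorial := by
    rw [Fintype.card_equiv (E.equivFinOfCardEq hcard).symm, Fintype.card_fin]
  rw [← card_equiv, ← Finset.card_univ]
  refine Finset.card_le_card_of_injOn (fun f i ↦ (f i : α)) (fun f _ ↦ ?_) fun f _ g _ hfg ↦ ?_
  · have image_eq : Finset.univ.image (fun i ↦ (f i : α)) = E := by
      ext x
      simp only [Finset.mem_image, Finset.mem_univ, true_and]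
      exact ⟨fun ⟨i, hi⟩ ↦ hi ▸ (f i).2, fun hx ↦ ⟨f.symm ⟨x, hx⟩, by simp⟩⟩
    simp only [nonclosedTuples, Finset.coe_filter, Finset.mem_filter, Fintype.mem_piFinset]
    exact ⟨⟨fun i ↦ hES (f i).2, Subtype.val_injective.comp f.injective, by rwa [image_eq]⟩,
      image_eq⟩
  · ext i
    exact congrFun hfg i

variable {F v}

open Classical in
lemma sum_isNonclosedIndep_pow_card_le {S : Finset α} {J : ℕ} {x η : ℝ} (hx : 0 ≤ x) (hη : 0 ≤ η)
    (hcard : ∀ e ≤ J, ((nonclosedTuples F v S e).card : ℝ) ≤ η * S.card ^ e) :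
    ∑ E ∈ S.powerset with IsNonclosedIndep F v S E ∧ E.card ≤ J, x ^ E.card ≤
      η * Real.exp (S.card * x) := by
  have card_mem : ∀ E ∈ S.powerset.filter fun E ↦ IsNonclosedIndep F v S E ∧ E.card ≤ J,
      E.card ∈ Finset.range (J + 1) := fun E hE ↦
    Finset.mem_range_succ_iff.2 (Finset.mem_filter.1 hE).2.2
  rw [← Finset.sum_fiberwise_of_maps_to card_mem]
  calc _ ≤ ∑ e ∈ Finset.range (J + 1), η * ((S.card * x) ^ e / e.factorial) := by
        refine Finset.sum_le_sum fun e he ↦ ?_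
        have heJ : e ≤ J := Finset.mem_range_succ_iff.1 he
        set 𝒩 := S.powerset.filter fun E ↦ IsNonclosedIndep F v S E ∧ E.card = e
        have filter_eq : (S.powerset.filter fun E ↦
            IsNonclosedIndep F v S E ∧ E.card ≤ J).filter (·.card = e) = 𝒩 := by
          rw [Finset.filter_filter]
          exact Finset.filter_congr fun E _ ↦
            ⟨fun h ↦ ⟨h.1.1, h.2⟩, fun h ↦ ⟨⟨h.1, h.2.trans_le heJ⟩, h.2⟩⟩
        have h𝒩card : (𝒩.card : ℝ) * e.factorial ≤ η * S.card ^ e :=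
          le_trans (by exact_mod_cast card_isNonclosedIndep_mul_factorial_le F v S e) (hcard e heJ)
        rw [filter_eq, Finset.sum_congr rfl fun E hE ↦ by rw [(Finset.mem_filter.1 hE).2.2],
          Finset.sum_const, nsmul_eq_mul, ← mul_div_assoc,
          le_div_iff₀ (by exact_mod_cast e.factorial_pos)]
        calc 𝒩.card * x ^ e * e.factorial = 𝒩.card * e.factorial * x ^ e := by ring
          _ ≤ η * S.card ^ e * x ^ e := by gcongr
          _ = η * (S.card * x) ^ e := by rw [mul_assoc, mul_pow]
    _ ≤ η * Real.exp (S.card * x) := by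
        rw [← Finset.mul_sum]
        gcongr
        exact Real.sum_le_exp_of_nonneg (by positivity) _

lemma exp_error_terms_le (v : ℕ) :
    Real.exp (-v) + (1 / 2) ^ (4 * v) * Real.exp (2 * v) +
      (1 + Real.exp v) * ((1 / 64) ^ v * Real.exp (2 * v)) ≤ 4 * (1 / 2) ^ v := by
  have lower := Real.exp_one_gt_d9
  have upper := Real.exp_one_lt_d9
  have exp_nat : Real.exp v = Real.exp 1 ^ v := by rw [← Real.exp_nat_mul, mul_one]
  have exp_two_mul : Real.exp (2 * v) = (Real.exp 1 ^ 2) ^ v := by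
    rw [pow_right_comm, ← exp_nat, ← Real.exp_nat_mul, Nat.cast_ofNat]
  have main_term : Real.exp (-v) ≤ (1 / 2) ^ v := by
    rw [Real.exp_neg, exp_nat, ← inv_pow, one_div]
    gcongr
    linarith
  have truncation_term : (1 / 2) ^ (4 * v) * Real.exp (2 * v) ≤ (1 / 2) ^ v := by
    rw [exp_two_mul, pow_mul, ← mul_pow]
    gcongr
    nlinarith
  have dependence_term :
      (1 + Real.exp v) * ((1 / 64) ^ v * Real.exp (2 * v)) ≤ 2 * (1 / 2) ^ v := by
    have : 1 ≤ Real.exp 1 ^ v := one_le_pow₀ (by linarith)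
    calc (1 + Real.exp v) * ((1 / 64) ^ v * Real.exp (2 * v))
        ≤ 2 * Real.exp 1 ^ v * ((1 / 64) ^ v * (Real.exp 1 ^ 2) ^ v) := by
          rw [exp_two_mul, exp_nat]
          gcongr
          linarith
      _ = 2 * (Real.exp 1 * (1 / 64 * Real.exp 1 ^ 2)) ^ v := by rw [mul_pow, mul_pow]; ring
      _ ≤ 2 * (1 / 2) ^ v := by
          gcongr
          have : Real.exp 1 ^ 2 ≤ 8 := by nlinarith
          nlinarith
  linarith

open Classical in
lemma sum_linearIndepOn_add_sum_isNonclosedIndep_le {S : Finset α} {N : ℕ} {p : ℝ} (hp : 0 ≤ p)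
    (hp1 : p ≤ 1) (hpN : S.card * p = N)
    (hcard : ∀ e ≤ 2 * (4 * N), ((nonclosedTuples F v S e).card : ℝ) ≤ (1 / 64) ^ N * S.card ^ e) :
    ∑ A ∈ S.powerset with LinearIndepOn F v ((A : Finset α) : Set α) ∧ A.card ≤ 4 * N,
        (-p) ^ A.card +
      ∑ E ∈ S.powerset with IsNonclosedIndep F v S E ∧ E.card ≤ 2 * (4 * N), (2 * p) ^ E.card ≤
      4 * (1 / 2) ^ N := by
  set nonclosed := ∑ E ∈ S.powerset with IsNonclosedIndep F v S E ∧ E.card ≤ 2 * (4 * N),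
    (2 * p) ^ E.card
  have independent_le := sum_linearIndepOn_neg_pow_card_le (F := F) (v := v) S (4 * N) hp
  have all_le := sum_neg_pow_card_le S (4 * N) hp hp1
  have dependent_le := sum_not_linearIndepOn_pow_card_le (F := F) (v := v) S (4 * N) hp
  have small_nonclosed_le : ∑ E ∈ S.powerset with IsNonclosedIndep F v S E ∧ E.card ≤ 4 * N,
      p ^ E.card ≤ nonclosed := by
    refine (Finset.sum_le_sum fun E _ ↦ pow_le_pow_left₀ hp (by linarith : p ≤ 2 * p) _).trans
      (Finset.sum_le_sum_of_subset_of_nonneg (fun E hE ↦ ?_) fun _ _ _ ↦ by positivity)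
    simp only [Finset.mem_filter] at hE ⊢
    exact ⟨hE.1, hE.2.1, by omega⟩
  have nonclosed_le := sum_isNonclosedIndep_pow_card_le (x := 2 * p) (by positivity)
    (by positivity) hcard
  have one_add_pow_le : (1 + p) ^ S.card ≤ Real.exp N := by
    rw [← hpN, Real.exp_nat_mul]
    exact pow_le_pow_left₀ (by linarith) (add_comm 1 p ▸ Real.add_one_le_exp p) _
  rw [mul_left_comm (S.card : ℝ), hpN] at nonclosed_le
  rw [hpN] at all_le
  calc _ ≤ Real.exp (-N) + (1 / 2) ^ (4 * N) * Real.exp (2 * N) +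
        (1 + Real.exp N) * nonclosed := by
        have := dependent_le.trans (mul_le_mul one_add_pow_le small_nonclosed_le
          (Finset.sum_nonneg fun _ _ ↦ by positivity) (by positivity))
        linarith
    _ ≤ _ := by gcongr
    _ ≤ 4 * (1 / 2) ^ N := exp_error_terms_le N

end Sieve

section BaseSieve

lemma exists_map_intCast_mul_eq_one_of_linearIndependent_zmod {ι κ : Type*} [Finite ι]
    [DecidableEq ι] [Fintype κ] (q : ℕ) [Fact q.Prime] {A : Matrix ι κ ℤ}
    (hA : LinearIndependent (ZMod q) fun i j ↦ (A i j : ZMod q)) :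
    ∃ B : Matrix κ ι ℝ, A.map (Int.cast : ℤ → ℝ) * B = 1 := by
  classical
  have := Fintype.ofFinite ι
  obtain ⟨Bq, hBq⟩ := exists_mul_eq_one_of_linearIndependent hA (b := Pi.basisFun (ZMod q) κ)
    (A := A.map Int.cast) fun i ↦ by simp [pi_eq_sum_univ' fun j ↦ (A i j : ZMod q)]
  choose B hB using fun j i ↦ ZMod.intCast_surjective (n := q) (Bq j i)
  have map_mul_eq_one : (A * Matrix.of B).map (Int.castRingHom (ZMod q)) = 1 := by
    rw [Matrix.map_mul, ← hBq]
    congr 1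
    ext j i
    exact hB j i
  have det_ne_zero : (A * Matrix.of B).det ≠ 0 := by
    intro h
    have := (Int.castRingHom (ZMod q)).map_det (A * Matrix.of B)
    rw [h, RingHom.mapMatrix_apply, map_mul_eq_one, Matrix.det_one, map_zero] at this
    exact zero_ne_one this
  have isUnit_det : IsUnit ((A * Matrix.of B).map (Int.castRingHom ℝ)).det := by
    rw [← RingHom.mapMatrix_apply, ← RingHom.map_det, isUnit_iff_ne_zero]
    exact Int.cast_ne_zero.2 det_ne_zero
  refine ⟨(Matrix.of B).map (Int.castRingHom ℝ) *
    ((A * Matrix.of B).map (Int.castRingHom ℝ))⁻¹, ?_⟩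
  have map_mul : A.map (Int.cast : ℤ → ℝ) * (Matrix.of B).map (Int.castRingHom ℝ) =
      (A * Matrix.of B).map (Int.castRingHom ℝ) := by
    ext i j
    simp [Matrix.mul_apply]
  rw [← Matrix.mul_assoc, map_mul, Matrix.mul_nonsing_inv _ isUnit_det]

variable {n : Type*} {k : ℕ}

/-- The coefficients by which the slot `c` acts on `(g, X)`, namely `g - ∑ j, c j • X j`. -/
def slotVec (c : Fin k → ℤ) : Fin (k + 1) → ℤ := Fin.cons 1 (-c)

/-- The reduction of `slotVec c` modulo `q`. Independence modulo a prime implies independence of the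
slot events, and can be counted. -/
def slotVecMod (q : ℕ) (c : Fin k → ℤ) : Fin (k + 1) → ZMod q := fun i ↦ slotVec c i

/-- The event that the translate of `g` by the slot `c` is covered, where `Z = (g, X)`. -/
def slotEvent (U : Set (UnitAddTorus n)) (c : Fin k → ℤ) : Set (Fin (k + 1) → UnitAddTorus n) :=
  {Z | ∑ i, slotVec c i • Z i ∈ Uᶜ}

lemma sum_slotVec_smul_cons {G : Type*} [AddCommGroup G] (c : Fin k → ℤ) (g : G) (X : Fin k → G) :
    ∑ i, slotVec c i • (Fin.cons g X : Fin (k + 1) → G) i = g - ∑ j, c j • X j := by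
  simp [Fin.sum_univ_succ, slotVec, sub_eq_add_neg]

lemma measurableSet_slotEvent [Finite n] {U : Set (UnitAddTorus n)} (hU : MeasurableSet U)
    (c : Fin k → ℤ) : MeasurableSet (slotEvent U c) := by
  have : Continuous fun Z : Fin (k + 1) → UnitAddTorus n ↦ ∑ i, slotVec c i • Z i :=
    continuous_finsetSum _ fun i _ ↦ (continuous_apply i).zsmul (slotVec c i)
  exact this.measurable hU.compl

variable {V : Type*} [NormedAddCommGroup V] [NormedSpace ℝ V]

lemma measurableSet_setOf_mem_uncoveredSlice [Finite n] {U : Set (UnitAddTorus n)}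
    (hU : MeasurableSet U) (b : Fin k → V) (s : ℝ) :
    MeasurableSet {w : ((Fin k → UnitAddTorus n) × UnitAddTorus (Fin k)) × UnitAddTorus n |
      w.2 ∈ uncoveredSlice U b s (torusLift w.1.2) w.1.1} := by
  simp only [uncoveredSlice, Set.mem_ofPred_eq]
  rw [Set.ofPred_forall]
  refine MeasurableSet.iInter fun l ↦ MeasurableSet.imp ?_ ?_
  · have : Continuous fun t : Fin k → ℝ ↦ ‖∑ j, (t j - l j) • b j‖ := by fun_prop
    exact measurableSet_le (this.measurable.comp (measurable_torusLift.comp measurable_fst.snd))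
      measurable_const
  · refine hU.preimage (measurable_snd.sub (Finset.measurable_sum _ fun j _ ↦ ?_))
    exact ((measurable_pi_apply j).comp measurable_fst.fst).const_smul (l j)

variable [Fintype n]

lemma measureReal_biInter_slotEvent (q : ℕ) [Fact q.Prime] {U : Set (UnitAddTorus n)}
    (hU : MeasurableSet U) {A : Finset (Fin k → ℤ)}
    (hA : LinearIndepOn (ZMod q) (slotVecMod q) (A : Set (Fin k → ℤ))) :
    volume.real (⋂ c ∈ A, slotEvent U c) = volume.real Uᶜ ^ A.card := by
  classical
  let W : Matrix A (Fin (k + 1)) ℤ := Matrix.of fun c ↦ slotVec c.1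
  obtain ⟨B, hB⟩ := exists_map_intCast_mul_eq_one_of_linearIndependent_zmod q (A := W) hA
  have preimage_eq : ⋂ c ∈ A, slotEvent U c =
      zsmulVec W ⁻¹' (Set.univ.pi fun _ : A ↦ Uᶜ) := by
    ext Z
    simp [slotEvent, zsmulVec_apply, W]
  rw [preimage_eq, measureReal_def, (measurePreserving_zsmulVec_unitAddTorus hB).measure_preimage
    (MeasurableSet.univ_pi fun _ ↦ hU.compl).nullMeasurableSet, volume_pi_pi]
  simp [measureReal_def]

lemma volume_biInter_compl_slotEvent_le (q : ℕ) [Fact q.Prime] {U : Set (UnitAddTorus n)}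
    (hU : MeasurableSet U) {S : Finset (Fin k → ℤ)} {N : ℕ}
    (hN : S.card * volume.real Uᶜ = N)
    (hcard : ∀ e ≤ 2 * (4 * N),
      ((nonclosedTuples (ZMod q) (slotVecMod q) S e).card : ℝ) ≤ (1 / 64) ^ N * S.card ^ e) :
    volume (⋂ c ∈ S, (slotEvent U c)ᶜ) ≤ ENNReal.ofReal (4 * (1 / 2) ^ N) := by
  have := (measureReal_biInter_compl_le_sum_linearIndepOn_add volume (J := 4 * N)
    ((by decide : Even 4).mul_right N) (measurableSet_slotEvent hU)
    fun A _ hA ↦ measureReal_biInter_slotEvent q hU hA).trans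
    (sum_linearIndepOn_add_sum_isNonclosedIndep_le measureReal_nonneg measureReal_le_one hN hcard)
  exact (ENNReal.le_ofReal_iff_toReal_le (measure_ne_top _ _) (by positivity)).2 this

lemma lintegral_volume_uncoveredSlice_le {U : Set (UnitAddTorus n)} (hU : MeasurableSet U)
    {b : Fin k → V} {s : ℝ} {τ : Fin k → ℝ} {S : Finset (Fin k → ℤ)}
    (hS : ∀ l ∈ S, ‖∑ j, (τ j - l j) • b j‖ ≤ s) :
    ∫⁻ X : Fin k → UnitAddTorus n, volume (uncoveredSlice U b s τ X) ≤
      volume (⋂ c ∈ S, (slotEvent U c)ᶜ) := by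
  have measurable_inter : MeasurableSet (⋂ c ∈ S, (slotEvent U c)ᶜ) :=
    S.measurableSet_biInter fun c _ ↦ (measurableSet_slotEvent hU c).compl
  have hmp := measurePreserving_finCons (UnitAddTorus n) k
  rw [← hmp.measure_preimage measurable_inter.nullMeasurableSet, Measure.volume_eq_prod,
    Measure.prod_apply_symm (hmp.measurable measurable_inter)]
  refine lintegral_mono fun X ↦ measure_mono fun g hg ↦ ?_
  simp only [Set.mem_preimage, Set.mem_iInter]
  intro c hc
  simpa [slotEvent, sum_slotVec_smul_cons] using hg c (hS c hc)

lemma exists_lintegral_volume_uncoveredSlice_le {U : Set (UnitAddTorus n)} (hU : MeasurableSet U)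
    (b : Fin k → V) (s : ℝ) (ε : ENNReal)
    (hS : ∀ σ : UnitAddTorus (Fin k), ∃ S : Finset (Fin k → ℤ),
      (∀ l ∈ S, ‖∑ j, (torusLift σ j - l j) • b j‖ ≤ s) ∧
        volume (⋂ c ∈ S, (slotEvent U c)ᶜ) ≤ ε) :
    ∃ X : Fin k → UnitAddTorus n,
      ∫⁻ σ, volume (uncoveredSlice U b s (torusLift σ) X) ≤ ε := by
  have measurable_volume : Measurable fun w : (Fin k → UnitAddTorus n) × UnitAddTorus (Fin k) ↦
      volume (uncoveredSlice U b s (torusLift w.2) w.1) :=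
    measurable_measure_prodMk_left (measurableSet_setOf_mem_uncoveredSlice hU b s)
  have average_le : ∫⁻ X : Fin k → UnitAddTorus n, ∫⁻ σ,
      volume (uncoveredSlice U b s (torusLift σ) X) ≤ ε := by
    rw [lintegral_lintegral_swap measurable_volume.aemeasurable]
    calc _ ≤ ∫⁻ _ : UnitAddTorus (Fin k), ε := lintegral_mono fun σ ↦ by
          obtain ⟨S, hS, hvol⟩ := hS σ
          exact (lintegral_volume_uncoveredSlice_le hU hS).trans hvol
      _ = ε := by simp
  obtain ⟨X, hX⟩ := exists_le_lintegral
    (μ := (volume : Measure (Fin k → UnitAddTorus n)))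
    (f := fun X ↦ ∫⁻ σ : UnitAddTorus (Fin k), volume (uncoveredSlice U b s (torusLift σ) X))
    measurable_volume.lintegral_prod_right'.aemeasurable
  exact ⟨X, hX.trans average_le⟩

end BaseSieve

section IntegerPoints

variable {k : ℕ}

/-- The volume of the unit ball in `ℝᵏ`. -/
def unitBallVolume (k : ℕ) : ℝ := volume.real (Metric.ball (0 : EuclideanSpace ℝ (Fin k)) 1)

lemma unitBallVolume_pos (k : ℕ) : 0 < unitBallVolume k :=
  ENNReal.toReal_pos (Metric.measure_ball_pos _ _ one_pos).ne' measure_ball_lt_top.ne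

lemma volume_real_closedBall (x : EuclideanSpace ℝ (Fin k)) {r : ℝ} (hr : 0 ≤ r) :
    volume.real (Metric.closedBall x r) = unitBallVolume k * r ^ k := by
  rw [Measure.addHaar_real_closedBall _ _ hr, finrank_euclideanSpace_fin, mul_comm, unitBallVolume]

/-- The integer vector `l` as a point of Euclidean space. -/
def intPoint (l : Fin k → ℤ) : EuclideanSpace ℝ (Fin k) := WithLp.toLp 2 fun j ↦ (l j : ℝ)

lemma intPoint_apply (l : Fin k → ℤ) (j : Fin k) : intPoint l j = l j := rfl

/-- The half-open unit cube of points whose coordinatewise floor is `l`. -/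
def unitCell (l : Fin k → ℤ) : Set (EuclideanSpace ℝ (Fin k)) := {y | (fun j ↦ ⌊y j⌋) = l}

lemma unitCell_eq_preimage_pi (l : Fin k → ℤ) :
    unitCell l = (MeasurableEquiv.toLp 2 (Fin k → ℝ)).symm ⁻¹'
      Set.univ.pi fun j ↦ Set.Ico (l j : ℝ) (l j + 1) := by
  ext y
  simp [unitCell, funext_iff, Int.floor_eq_iff]

lemma measurableSet_unitCell (l : Fin k → ℤ) : MeasurableSet (unitCell l) := by
  rw [unitCell_eq_preimage_pi]
  exact (MeasurableSet.univ_pi fun _ ↦ measurableSet_Ico).preimage (MeasurableEquiv.measurable _)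

lemma volume_unitCell (l : Fin k → ℤ) : volume (unitCell l) = 1 := by
  rw [unitCell_eq_preimage_pi,
    (EuclideanSpace.volume_preserving_symm_measurableEquiv_toLp (Fin k)).measure_preimage
      (MeasurableSet.univ_pi fun _ ↦ measurableSet_Ico).nullMeasurableSet, volume_pi_pi]
  simp

lemma dist_intPoint_le_of_mem_unitCell {l : Fin k → ℤ} {y : EuclideanSpace ℝ (Fin k)}
    (hy : y ∈ unitCell l) : dist y (intPoint l) ≤ √k := by
  obtain rfl := hy
  rw [EuclideanSpace.dist_eq]
  refine Real.sqrt_le_sqrt ((Finset.sum_le_card_nsmul _ _ 1 fun j _ ↦ ?_).trans (by simp))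
  rw [Real.dist_eq, intPoint_apply, Int.self_sub_floor, sq_abs]
  exact pow_le_one₀ (Int.fract_nonneg _) (Int.fract_lt_one _).le

lemma volume_real_biUnion_unitCell (P : Finset (Fin k → ℤ)) :
    volume.real (⋃ l ∈ P, unitCell l) = P.card := by
  rw [measureReal_def, measure_biUnion_finset
    (fun l _ l' _ hne ↦ Set.disjoint_left.2 fun y hy hy' ↦ hne (hy.symm.trans hy'))
    fun l _ ↦ measurableSet_unitCell l]
  simp [volume_unitCell]

lemma card_le_unitBallVolume_mul_pow {P : Finset (Fin k → ℤ)} {x : EuclideanSpace ℝ (Fin k)} {r : ℝ}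
    (hr : 0 ≤ r) (hP : ∀ l ∈ P, dist (intPoint l) x ≤ r) :
    (P.card : ℝ) ≤ unitBallVolume k * (r + √k) ^ k := by
  rw [← volume_real_biUnion_unitCell, ← volume_real_closedBall x (by positivity)]
  refine measureReal_mono (Set.iUnion₂_subset fun l hl y hy ↦ ?_) measure_closedBall_lt_top.ne
  rw [Metric.mem_closedBall]
  linarith [dist_triangle y (intPoint l) x, hP l hl, dist_intPoint_le_of_mem_unitCell hy]

lemma unitBallVolume_mul_pow_le_card {P : Finset (Fin k → ℤ)} {x : EuclideanSpace ℝ (Fin k)} {r : ℝ}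
    (hr : √k ≤ r) (hP : ∀ l, dist (intPoint l) x ≤ r → l ∈ P) :
    unitBallVolume k * (r - √k) ^ k ≤ P.card := by
  rw [← volume_real_biUnion_unitCell, ← volume_real_closedBall x (sub_nonneg.2 hr)]
  refine measureReal_mono (fun y hy ↦ ?_) ?_
  · have hcell : y ∈ unitCell fun j ↦ ⌊y j⌋ := rfl
    refine Set.mem_biUnion (hP _ ?_) hcell
    rw [Metric.mem_closedBall] at hy
    linarith [dist_triangle_left (intPoint fun j ↦ ⌊y j⌋) x y,
      dist_intPoint_le_of_mem_unitCell hcell]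
  · exact (measure_biUnion_lt_top P.finite_toSet fun l _ ↦ by simp [volume_unitCell]).ne

lemma card_le_unitBallVolume_mul_div_pow {P : Finset (Fin k → ℤ)} {x : EuclideanSpace ℝ (Fin k)}
    {r : ℝ} (hr : 0 ≤ r) (hP : ∀ l ∈ P, dist (intPoint l) x ≤ r) {H : ℕ} (hH : 0 < H)
    (hdvd : ∀ l ∈ P, ∀ l' ∈ P, ∀ j, (H : ℤ) ∣ l j - l' j) :
    (P.card : ℝ) ≤ unitBallVolume k * (r / H + √k) ^ k := by
  classical
  rcases P.eq_empty_or_nonempty with rfl | ⟨l₀, hl₀⟩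
  · rw [Finset.card_empty, Nat.cast_zero]
    exact mul_nonneg (unitBallVolume_pos k).le (by positivity)
  have hH' : (H : ℝ) ≠ 0 := by positivity
  choose! f hf using fun l hl j ↦ hdvd l hl l₀ hl₀ j
  have eq_add (l) (hl : l ∈ P) (j) : l j = l₀ j + H * f l j := by linarith [hf l hl j]
  have injOn : Set.InjOn f P := fun l hl l' hl' h ↦ by
    ext j
    rw [eq_add l hl, eq_add l' hl', h]
  rw [← Finset.card_image_of_injOn injOn]
  refine card_le_unitBallVolume_mul_pow (x := (H : ℝ)⁻¹ • (x - intPoint l₀)) (by positivity) ?_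
  rw [Finset.forall_mem_image]
  intro l hl
  have intPoint_eq : intPoint (f l) = (H : ℝ)⁻¹ • (intPoint l - intPoint l₀) := by
    ext j
    simp only [PiLp.smul_apply, PiLp.sub_apply, intPoint_apply, smul_eq_mul, eq_add l hl]
    push_cast
    field_simp
    ring
  rw [intPoint_eq, dist_eq_norm, ← smul_sub, norm_smul, sub_sub_sub_cancel_right, ← dist_eq_norm,
    norm_inv, Real.norm_natCast, div_eq_inv_mul]
  gcongr
  exact hP l hl

lemma sum_smul_basisFun (t : Fin k → ℝ) :
    ∑ i, t i • EuclideanSpace.basisFun (Fin k) ℝ i = WithLp.toLp 2 t := by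
  ext j
  simp [Pi.single_apply]

lemma finite_setOf_dist_intPoint_le (s : EuclideanSpace ℝ (Fin k)) (R : ℝ) :
    {l : Fin k → ℤ | dist (intPoint l) s ≤ R}.Finite := by
  refine (finite_setOf_norm_sum_intCast_smul_le
    (EuclideanSpace.basisFun (Fin k) ℝ).orthonormal.linearIndependent (R + ‖s‖)).subset
    fun l (hl : _ ≤ R) ↦ ?_
  rw [Set.mem_ofPred_eq, sum_smul_basisFun]
  rw [dist_eq_norm] at hl
  change ‖intPoint l‖ ≤ R + ‖s‖
  linarith [norm_sub_norm_le (intPoint l) s]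

/-- The integer vectors within Euclidean distance `R` of `s`. -/
def integerPoints (s : EuclideanSpace ℝ (Fin k)) (R : ℝ) : Finset (Fin k → ℤ) :=
  (finite_setOf_dist_intPoint_le s R).toFinset

lemma mem_integerPoints {s : EuclideanSpace ℝ (Fin k)} {R : ℝ} {l : Fin k → ℤ} :
    l ∈ integerPoints s R ↔ dist (intPoint l) s ≤ R := by
  simp [integerPoints]

lemma abs_apply_le_of_mem_integerPoints {s : EuclideanSpace ℝ (Fin k)} {R : ℕ}
    (hs : ∀ j, s j ∈ Set.Ico (0 : ℝ) 1) {l : Fin k → ℤ} (hl : l ∈ integerPoints s R) (j : Fin k) :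
    |l j| ≤ R := by
  have abs_sub_le : |(l j : ℝ) - s j| ≤ R :=
    (PiLp.norm_apply_le (intPoint l - s) j).trans (dist_eq_norm (intPoint l) s ▸
      mem_integerPoints.1 hl)
  obtain ⟨h₁, h₂⟩ := abs_le.1 abs_sub_le
  obtain ⟨h₃, h₄⟩ := hs j
  have lower : (-R : ℝ) ≤ l j := by linarith
  have upper : (l j : ℝ) < R + 1 := by linarith
  norm_cast at lower upper
  exact abs_le.2 ⟨lower, Int.lt_add_one_iff.1 upper⟩

end IntegerPoints

section CombinationTuples

open Classical in
lemma card_mul_card_le_of_card_update_le {ι α : Type*} [Fintype ι] [DecidableEq ι] {B : Finset α}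
    {T : Finset (ι → α)} (hT : ∀ c ∈ T, ∀ j, c j ∈ B) (i : ι) {M : ℝ} (hM : 0 ≤ M)
    (hQ : ∀ (c : ι → α) (Q : Finset α), (∀ x ∈ Q, Function.update c i x ∈ T) → Q.card ≤ M) :
    (T.card * B.card : ℝ) ≤ M * B.card ^ Fintype.card ι := by
  let restrict (c : ι → α) (j : {j // j ≠ i}) : α := c j
  have card_le : T.card ≤ ⌊M⌋₊ * (T.image restrict).card := by
    refine Finset.card_le_mul_card_image T _ (Finset.forall_mem_image.2 fun c₀ _ ↦ ?_)
    have update_eq : ∀ c ∈ T.filter (restrict · = restrict c₀), Function.update c₀ i (c i) = c := by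
      intro c hc
      rw [Function.update_eq_iff]
      exact ⟨rfl, fun j hj ↦ (congrFun (Finset.mem_filter.1 hc).2 ⟨j, hj⟩).symm⟩
    rw [← Finset.card_image_of_injOn (f := fun c ↦ c i) fun c hc c' hc' h ↦ by
      rw [← update_eq c hc, ← update_eq c' hc']
      exact congrArg _ h]
    refine Nat.le_floor (hQ c₀ _ (Finset.forall_mem_image.2 fun c hc ↦ ?_))
    rw [update_eq c hc]
    exact (Finset.mem_filter.1 hc).1
  have card_image_le : (T.image restrict).card ≤ B.card ^ (Fintype.card ι - 1) := by
    refine (Finset.card_le_card (Finset.image_subset_iff.2 fun c hc ↦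
      Fintype.mem_piFinset.2 fun j : {j // j ≠ i} ↦ hT c hc j)).trans ?_
    simp [Fintype.card_piFinset, Fintype.card_subtype_compl]
  calc (T.card * B.card : ℝ) ≤ ⌊M⌋₊ * (B.card ^ (Fintype.card ι - 1) * B.card) := by
        rw [← mul_assoc]
        exact_mod_cast Nat.mul_le_mul_right _ (card_le.trans (Nat.mul_le_mul_left _ card_image_le))
    _ ≤ M * B.card ^ Fintype.card ι := by
        rw [pow_sub_one_mul (Fintype.card_pos_iff.2 ⟨i⟩).ne']
        gcongr
        exact Nat.floor_le hM

lemma eq_of_intCast_zmod_eq {q : ℕ} {x y : ℤ} (h : (x : ZMod q) = y) (hxy : |x - y| < q) :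
    x = y := by
  rw [← sub_eq_zero, ← Int.cast_sub, ZMod.intCast_zmod_eq_zero_iff_dvd] at h
  exact sub_eq_zero.1 (Int.eq_zero_of_abs_lt_dvd h hxy)

/-- `x : ZMod q` is the residue of a fraction whose numerator and denominator are at most `H` in
absolute value. -/
def IsRatioOfHeight (q H : ℕ) (x : ZMod q) : Prop :=
  ∃ a b : ℤ, |a| ≤ H ∧ |b| ≤ H ∧ b ≠ 0 ∧ x * b = a

variable {q : ℕ} {k e : ℕ} {B : Finset (Fin k → ℤ)} {lam : Fin e → ZMod q}

variable (q B lam) in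
open Classical in
/-- The tuples `c` of elements of `B` whose combination `∑ i, lam i • c i` is congruent modulo `q`
to an element of `B`. -/
def combinationTuples : Finset (Fin e → Fin k → ℤ) :=
  (Fintype.piFinset fun _ : Fin e ↦ B).filter
    fun c ↦ ∃ w ∈ B, ∀ l, ∑ i, lam i * (c i l : ZMod q) = (w l : ZMod q)

lemma mem_combinationTuples {c : Fin e → Fin k → ℤ} :
    c ∈ combinationTuples q B lam ↔
      (∀ i, c i ∈ B) ∧ ∃ w ∈ B, ∀ l, ∑ i, lam i * (c i l : ZMod q) = (w l : ZMod q) := by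
  simp [combinationTuples, Fintype.mem_piFinset]

/-- `W` sends the `i`-th entry of a tuple to its combination, the other entries being fixed. -/
lemma card_combinationTuples_mul_card_le (i : Fin e) {M : ℝ} (hM : 0 ≤ M)
    (hQ : ∀ (Q : Finset (Fin k → ℤ)) (W : (Fin k → ℤ) → Fin k → ℤ),
      (∀ x ∈ Q, x ∈ B) → (∀ x ∈ Q, W x ∈ B) → (∀ x ∈ Q, ∀ x' ∈ Q, ∀ l,
        lam i * ((x l - x' l : ℤ) : ZMod q) = ((W x l - W x' l : ℤ) : ZMod q)) → Q.card ≤ M) :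
    ((combinationTuples q B lam).card * B.card : ℝ) ≤ M * B.card ^ e := by
  have := card_mul_card_le_of_card_update_le
    (fun c hc ↦ (mem_combinationTuples.1 hc).1 : ∀ c ∈ combinationTuples q B lam, _) i hM ?_
  · simpa using this
  intro c Q hcQ
  choose! W hWB hW using fun x hx ↦ (mem_combinationTuples.1 (hcQ x hx)).2
  refine hQ Q W (fun x hx ↦ ?_) hWB fun x hx x' hx' l ↦ ?_
  · simpa using (mem_combinationTuples.1 (hcQ x hx)).1 i
  · push_cast
    rw [← hW x hx, ← hW x' hx', ← Finset.sum_sub_distrib, Finset.sum_eq_single i]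
    · simp [mul_sub]
    · intro j _ hj
      simp [Function.update_of_ne hj]
    · simp

lemma abs_sub_le_of_ediv_eq {a b m : ℤ} (hm : 0 < m) (h : a / m = b / m) : |a - b| ≤ m := by
  have ha := Int.emod_add_mul_ediv a m
  have hb := Int.emod_add_mul_ediv b m
  rw [h] at ha
  rw [abs_le]
  constructor <;> linarith [Int.emod_nonneg a hm.ne', Int.emod_nonneg b hm.ne',
    Int.emod_lt_of_pos a hm, Int.emod_lt_of_pos b hm]

/-- Two points of a line of tuples cannot share a cell of side `m` together with their combinations,
since the difference would exhibit `lam i` as a ratio of height `m`. -/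
lemma card_combinationTuples_mul_card_le_of_not_isRatioOfHeight {G m : ℕ} (hm : 0 < m)
    (hB : ∀ x ∈ B, ∀ j, |x j| ≤ G * m) {i : Fin e} (hi : ¬ IsRatioOfHeight q m (lam i)) :
    ((combinationTuples q B lam).card * B.card : ℝ) ≤ ((2 * G + 1) ^ 2) ^ k * B.card ^ e := by
  refine card_combinationTuples_mul_card_le i (by positivity) fun Q W hQB hWB hrel ↦ ?_
  have hm' : (0 : ℤ) < m := by exact_mod_cast hm
  have ediv_mem (x) (hx : x ∈ B) (j) : x j / (m : ℤ) ∈ Finset.Icc (-(G : ℤ)) G := by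
    obtain ⟨lower, upper⟩ := abs_le.1 (hB x hx j)
    exact Finset.mem_Icc.2 ⟨by rwa [Int.le_ediv_iff_mul_le hm', neg_mul],
      Int.ediv_le_of_le_mul hm' upper⟩
  have card_cells : (Fintype.piFinset fun _ : Fin k ↦
      Finset.Icc (-(G : ℤ)) G ×ˢ Finset.Icc (-(G : ℤ)) G).card = ((2 * G + 1) ^ 2) ^ k := by
    have : ((G : ℤ) + 1 + G).toNat = 2 * G + 1 := by omega
    simp [Fintype.card_piFinset, this, sq]
  suffices h : Q.card ≤ ((2 * G + 1) ^ 2) ^ k by exact_mod_cast h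
  rw [← card_cells]
  refine Finset.card_le_card_of_injOn (fun x j ↦ (x j / (m : ℤ), W x j / (m : ℤ))) ?_ ?_
  · intro x hx
    simp only [Finset.mem_coe, Fintype.mem_piFinset, Finset.mem_product]
    exact fun j ↦ ⟨ediv_mem x (hQB x hx) j, ediv_mem _ (hWB x hx) j⟩
  · intro x hx x' hx' hcell
    ext j
    obtain ⟨hxj, hWj⟩ := Prod.mk.inj (congrFun hcell j)
    by_contra hne
    exact hi ⟨W x j - W x' j, x j - x' j, abs_sub_le_of_ediv_eq hm' hWj,
      abs_sub_le_of_ediv_eq hm' hxj, sub_ne_zero.2 hne, hrel x hx x' hx' j⟩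

lemma IsRatioOfHeight.exists_isCoprime [Fact q.Prime] {H : ℕ} (hHq : H < q) {x : ZMod q}
    (hx : IsRatioOfHeight q H x) :
    ∃ a b : ℤ, IsCoprime a b ∧ |a| ≤ H ∧ |b| ≤ H ∧ b ≠ 0 ∧ x * b = a := by
  obtain ⟨a, b, ha, hb, hb0, hab⟩ := hx
  have gcd_pos : 0 < Int.gcd a b := Int.gcd_pos_of_ne_zero_right a hb0
  obtain ⟨a', b', hcop, ha', hb'⟩ := Int.exists_gcd_one gcd_pos
  set d := Int.gcd a b
  have abs_le_abs_mul (t : ℤ) : |t| ≤ |t * d| := by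
    rw [abs_mul, Nat.abs_cast]
    exact le_mul_of_one_le_right (abs_nonneg t) (by exact_mod_cast gcd_pos)
  have b'_ne_zero : b' ≠ 0 := by
    rintro rfl
    exact hb0 (by simpa using hb')
  have d_le : d ≤ H := by
    have : (d : ℤ) ≤ |b| := Int.le_of_dvd (abs_pos.2 hb0) ((dvd_abs _ _).2 (Int.gcd_dvd_right a b))
    exact_mod_cast this.trans hb
  have d_ne_zero : (d : ZMod q) ≠ 0 := by
    rw [Ne, ZMod.natCast_eq_zero_iff]
    exact fun h ↦ (Nat.le_of_dvd gcd_pos h).not_gt (d_le.trans_lt hHq)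
  refine ⟨a', b', Int.isCoprime_iff_gcd_eq_one.2 hcop, (abs_le_abs_mul a').trans (ha' ▸ ha),
    (abs_le_abs_mul b').trans (hb' ▸ hb), b'_ne_zero, mul_right_cancel₀ d_ne_zero ?_⟩
  rw [ha', hb'] at hab
  push_cast at hab
  rw [mul_assoc, hab]

lemma mul_eq_mul_of_mul_eq_intCast {H D a b u w : ℤ} (ha : |a| ≤ H) (hb : |b| ≤ H) (hu : |u| ≤ D)
    (hw : |w| ≤ D) (hq : 2 * (H * D) < q) {x : ZMod q} (hab : x * b = a) (huw : x * u = w) :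
    b * w = a * u := by
  refine eq_of_intCast_zmod_eq (q := q) ?_ ?_
  · rw [Int.cast_mul, Int.cast_mul, ← huw, ← hab]
    ring
  · have hbw := mul_le_mul hb hw (abs_nonneg w) ((abs_nonneg b).trans hb)
    have hau := mul_le_mul ha hu (abs_nonneg u) ((abs_nonneg a).trans ha)
    rw [← abs_mul] at hbw hau
    linarith [abs_sub (b * w) (a * u)]

/-- A primitive representation of `lam i` has numerator or denominator exactly `± H`, so that along
a line either the combinations or the points themselves lie in a single class modulo `H`. -/
lemma card_combinationTuples_mul_card_le_of_isRatioOfHeight [Fact q.Prime] {R H : ℕ} (hH : 0 < H)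
    (hHR : 4 * (H * R) < q) (hHq : H < q) {s : EuclideanSpace ℝ (Fin k)}
    (hBs : ∀ x ∈ B, dist (intPoint x) s ≤ R) (hB : ∀ x ∈ B, ∀ j, |x j| ≤ R) {i : Fin e}
    (hi : IsRatioOfHeight q H (lam i)) (hi' : ¬ IsRatioOfHeight q (H - 1) (lam i)) :
    ((combinationTuples q B lam).card * B.card : ℝ) ≤
      unitBallVolume k * (R / H + √k) ^ k * B.card ^ e := by
  classical
  obtain ⟨a, b, hcop, ha, hb, hb0, hab⟩ := hi.exists_isCoprime hHq
  have hmax : |a| = H ∨ |b| = H := by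
    by_contra! h
    exact hi' ⟨a, b, by omega, by omega, hb0, hab⟩
  have M_nonneg := (unitBallVolume_pos k).le
  refine card_combinationTuples_mul_card_le i (by positivity) fun Q W hQB hWB hrel ↦ ?_
  have abs_sub_le {x y} (hx : x ∈ B) (hy : y ∈ B) (l) : |x l - y l| ≤ 2 * (R : ℤ) :=
    (abs_sub _ _).trans (by linarith [hB x hx l, hB y hy l])
  have mul_sub_eq (x) (hx : x ∈ Q) (x') (hx' : x' ∈ Q) (l) :
      b * (W x l - W x' l) = a * (x l - x' l) :=
    mul_eq_mul_of_mul_eq_intCast ha hb (abs_sub_le (hQB x hx) (hQB x' hx') l)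
      (abs_sub_le (hWB x hx) (hWB x' hx') l) (by zify at hHR; linarith) hab (hrel x hx x' hx' l)
  rcases hmax with hmax | hmax
  · have a_ne_zero : a ≠ 0 := by
      rintro rfl
      simp at hmax
      omega
    have injOn : Set.InjOn W Q := fun x hx x' hx' hW ↦ by
      ext l
      simpa [hW, a_ne_zero, sub_eq_zero] using mul_sub_eq x hx x' hx' l
    rw [← Finset.card_image_of_injOn injOn]
    refine card_le_unitBallVolume_mul_div_pow (x := s) R.cast_nonneg ?_ hH ?_ <;>
      simp only [Finset.forall_mem_image]
    · exact fun x hx ↦ hBs _ (hWB x hx)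
    · exact fun x hx x' hx' l ↦ hmax ▸ (abs_dvd _ _).2
        (hcop.dvd_of_dvd_mul_left (Dvd.intro _ (mul_sub_eq x hx x' hx' l).symm))
  · exact card_le_unitBallVolume_mul_div_pow (x := s) R.cast_nonneg (fun x hx ↦ hBs x (hQB x hx)) hH
      fun x hx x' hx' l ↦ hmax ▸ (abs_dvd _ _).2
        (hcop.symm.dvd_of_dvd_mul_left (Dvd.intro _ (mul_sub_eq x hx x' hx' l)))

end CombinationTuples

section SignCombinations

lemma norm_add_half_smul_le {V : Type*} [NormedAddCommGroup V] [InnerProductSpace ℝ V] {x u : V}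
    {ε R : ℝ} (hε : ε ^ 2 = 1) (hx : ‖x‖ ≤ R) (hux : ‖u + ε • x‖ ≤ R) (hu : R / 2 ≤ ‖u‖) :
    ‖x + (ε / 2) • u‖ ≤ 0.97 * R := by
  have hR : 0 ≤ R := (norm_nonneg x).trans hx
  have norm_sq_eq : ‖x + (ε / 2) • u‖ ^ 2 = ‖x‖ ^ 2 / 2 + ‖u + ε • x‖ ^ 2 / 2 - ‖u‖ ^ 2 / 4 := by
    rw [norm_add_sq_real, norm_add_sq_real, inner_smul_right, inner_smul_right, real_inner_comm x u,
      norm_smul, norm_smul, mul_pow, mul_pow, Real.norm_eq_abs, Real.norm_eq_abs, sq_abs, sq_abs,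
      div_pow, hε]
    ring
  refine le_of_sq_le_sq ?_ (by positivity)
  have hx_sq : ‖x‖ ^ 2 ≤ R ^ 2 := by gcongr
  have hux_sq : ‖u + ε • x‖ ^ 2 ≤ R ^ 2 := by gcongr
  have hu_sq : (R / 2) ^ 2 ≤ ‖u‖ ^ 2 := by gcongr
  rw [norm_sq_eq]
  nlinarith

variable {ι : Type*} [Fintype ι]

lemma exists_ne_sq_eq_one_of_sum_eq_one [DecidableEq ι] {ε : ι → ℤ} (hε : ∀ i, |ε i| ≤ 1)
    (hsum : ∑ i, ε i = 1) (hne : ∀ i, ε ≠ Pi.single i 1) :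
    ∃ i j, i ≠ j ∧ ε i ^ 2 = 1 ∧ ε j ^ 2 = 1 := by
  have sq_eq_one (i) (hi : ε i ≠ 0) : ε i ^ 2 = 1 := by
    rw [← sq_abs, le_antisymm (hε i) (Int.one_le_abs hi), one_pow]
  obtain ⟨i, hi⟩ : ∃ i, ε i ≠ 0 := by
    by_contra! h
    simp [h] at hsum
  obtain ⟨j, hj, hji⟩ : ∃ j, ε j ≠ 0 ∧ j ≠ i := by
    by_contra! h
    have eq_zero (j) (hj : j ≠ i) : ε j = 0 := not_not.1 fun h' ↦ hj (h j h')
    rw [Finset.sum_eq_single i (fun j _ ↦ eq_zero j) (by simp)] at hsum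
    refine hne i (funext fun j ↦ ?_)
    rcases eq_or_ne j i with rfl | hj
    · rw [hsum, Pi.single_eq_same]
    · rw [eq_zero j hj, Pi.single_eq_of_ne hj]
  exact ⟨i, j, hji.symm, sq_eq_one i hi, sq_eq_one j hj⟩

variable {k : ℕ} {B : Finset (Fin k → ℤ)} {s : EuclideanSpace ℝ (Fin k)} {R : ℝ}
  {T : Finset (ι → Fin k → ℤ)} {ε : ι → ℝ} {i j : ι}

/-- With all other entries fixed, `c i` lies in a lens of two balls of radius `R` whose centers are
at least `R / 2` apart; hence in a ball of radius `0.97 * R`. -/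
lemma card_mul_card_le_of_le_norm_sum_erase [DecidableEq ι] (hT : ∀ c ∈ T, ∀ j, c j ∈ B)
    (hBs : ∀ x ∈ B, dist (intPoint x) s ≤ R) (hR : 0 ≤ R) (hi : ε i ^ 2 = 1)
    (hsum : ∀ c ∈ T, ‖∑ j, ε j • (intPoint (c j) - s)‖ ≤ R)
    (hfar : ∀ c ∈ T, R / 2 ≤ ‖∑ j ∈ Finset.univ.erase i, ε j • (intPoint (c j) - s)‖) :
    (T.card * B.card : ℝ) ≤
      unitBallVolume k * (0.97 * R + √k) ^ k * B.card ^ Fintype.card ι := by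
  have M_nonneg := (unitBallVolume_pos k).le
  refine card_mul_card_le_of_card_update_le hT i (by positivity) fun c Q hQ ↦ ?_
  set u := ∑ j ∈ Finset.univ.erase i, ε j • (intPoint (c j) - s)
  have sum_erase_eq (x) : ∑ j ∈ Finset.univ.erase i,
      ε j • (intPoint (Function.update c i x j) - s) = u :=
    Finset.sum_congr rfl fun j hj ↦ by rw [Function.update_of_ne (Finset.ne_of_mem_erase hj)]
  refine card_le_unitBallVolume_mul_pow (x := s - (ε i / 2) • u) (by positivity) fun x hx ↦ ?_
  have mem := hT _ (hQ x hx) i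
  have norm_sum_le := hsum _ (hQ x hx)
  have norm_ge := hfar _ (hQ x hx)
  rw [← Finset.sum_erase_add _ _ (Finset.mem_univ i), sum_erase_eq] at norm_sum_le
  rw [sum_erase_eq] at norm_ge
  rw [Function.update_self] at mem norm_sum_le
  rw [dist_eq_norm, ← sub_add]
  exact norm_add_half_smul_le hi (dist_eq_norm (intPoint x) s ▸ hBs x mem) norm_sum_le norm_ge

lemma card_mul_card_le_of_norm_sum_erase_le [DecidableEq ι] (hT : ∀ c ∈ T, ∀ j, c j ∈ B)
    (hR : 0 ≤ R) (hij : i ≠ j) (hj : ε j ^ 2 = 1)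
    (hnear : ∀ c ∈ T, ‖∑ j ∈ Finset.univ.erase i, ε j • (intPoint (c j) - s)‖ ≤ R) :
    (T.card * B.card : ℝ) ≤ unitBallVolume k * (R + √k) ^ k * B.card ^ Fintype.card ι := by
  have M_nonneg := (unitBallVolume_pos k).le
  refine card_mul_card_le_of_card_update_le hT j (by positivity) fun c Q hQ ↦ ?_
  set u := ∑ l ∈ (Finset.univ.erase i).erase j, ε l • (intPoint (c l) - s)
  refine card_le_unitBallVolume_mul_pow (x := s - ε j • u) hR fun x hx ↦ ?_
  have norm_le := hnear _ (hQ x hx)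
  have sum_erase_eq : ∑ l ∈ (Finset.univ.erase i).erase j,
      ε l • (intPoint (Function.update c j x l) - s) = u :=
    Finset.sum_congr rfl fun l hl ↦ by rw [Function.update_of_ne (Finset.ne_of_mem_erase hl)]
  rw [← Finset.sum_erase_add _ _ (Finset.mem_erase.2 ⟨hij.symm, Finset.mem_univ j⟩), sum_erase_eq,
    Function.update_self] at norm_le
  have sub_eq : intPoint x - (s - ε j • u) = ε j • (u + ε j • (intPoint x - s)) := by
    rw [smul_add, smul_smul, ← sq, hj, one_smul]
    abel
  have norm_eq_one : ‖ε j‖ = 1 := by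
    rw [Real.norm_eq_abs, ← Real.sqrt_sq_eq_abs, hj, Real.sqrt_one]
  rwa [dist_eq_norm, sub_eq, norm_smul, norm_eq_one, one_mul]

lemma card_mul_card_le_of_norm_sum_le (hT : ∀ c ∈ T, ∀ j, c j ∈ B)
    (hBs : ∀ x ∈ B, dist (intPoint x) s ≤ R) (hR : 0 ≤ R) (hij : i ≠ j) (hi : ε i ^ 2 = 1)
    (hj : ε j ^ 2 = 1) (hsum : ∀ c ∈ T, ‖∑ j, ε j • (intPoint (c j) - s)‖ ≤ R) :
    (T.card * B.card : ℝ) ≤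
      2 * (unitBallVolume k * (0.97 * R + √k) ^ k) * B.card ^ Fintype.card ι := by
  classical
  let far (c : ι → Fin k → ℤ) : Prop :=
    R / 2 ≤ ‖∑ j ∈ Finset.univ.erase i, ε j • (intPoint (c j) - s)‖
  have card_far := card_mul_card_le_of_le_norm_sum_erase (T := T.filter far)
    (fun c hc ↦ hT c (Finset.mem_filter.1 hc).1) hBs hR hi
    (fun c hc ↦ hsum c (Finset.mem_filter.1 hc).1) fun c hc ↦ (Finset.mem_filter.1 hc).2
  have card_near := card_mul_card_le_of_norm_sum_erase_le (T := T.filter (¬ far ·))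
    (fun c hc ↦ hT c (Finset.mem_filter.1 hc).1) (R := 0.97 * R) (by positivity) hij hj fun c hc ↦
      (not_le.1 (Finset.mem_filter.1 hc).2).le.trans (by linarith)
  rw [← Finset.card_filter_add_card_filter_not far, Nat.cast_add]
  linarith

end SignCombinations

section SmallCombinations

variable {q k e : ℕ} {B : Finset (Fin k → ℤ)} {lam : Fin e → ZMod q}

lemma IsRatioOfHeight.exists_abs_le_one {x : ZMod q} (hx : IsRatioOfHeight q 1 x) :
    ∃ ε : ℤ, |ε| ≤ 1 ∧ x = ε := by
  obtain ⟨a, b, ha, hb, hb0, hab⟩ := hx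
  have b_sq : b * b = 1 := by
    have := Int.one_le_abs hb0
    rw [← abs_mul_abs_self, show |b| = 1 by omega, one_mul]
  refine ⟨a * b, ?_, ?_⟩
  · rw [abs_mul]
    exact mul_le_one₀ ha (abs_nonneg b) hb
  · rw [Int.cast_mul, ← hab, mul_assoc, ← Int.cast_mul, b_sq, Int.cast_one, mul_one]

lemma norm_sum_smul_intPoint_sub_le {s : EuclideanSpace ℝ (Fin k)} {R : ℕ}
    (hBs : ∀ x ∈ B, dist (intPoint x) s ≤ R) (hB : ∀ x ∈ B, ∀ j, |x j| ≤ R)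
    (hq : (e + 1) * (R + 1) < q) {ε : Fin e → ℤ} (hε : ∀ i, |ε i| ≤ 1) (hsum : ∑ i, ε i = 1)
    (hlam : ∀ i, lam i = ε i) {c : Fin e → Fin k → ℤ} (hc : c ∈ combinationTuples q B lam) :
    ‖∑ i, (ε i : ℝ) • (intPoint (c i) - s)‖ ≤ R := by
  obtain ⟨hcB, w, hw, hrel⟩ := mem_combinationTuples.1 hc
  have sum_mul_eq (l) : ∑ i, ε i * c i l = w l := by
    refine eq_of_intCast_zmod_eq (q := q) ?_ ?_
    · simp_rw [← hrel l, hlam]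
      push_cast
      rfl
    · have : |∑ i, ε i * c i l| ≤ e * R := by
        refine (Finset.abs_sum_le_sum_abs _ _).trans ((Finset.sum_le_card_nsmul _ _ (R : ℤ)
          fun i _ ↦ ?_).trans (by simp))
        rw [abs_mul]
        simpa using mul_le_mul (hε i) (hB _ (hcB i) l) (abs_nonneg _) zero_le_one
      zify at hq
      linarith [abs_sub (∑ i, ε i * c i l) (w l), hB w hw l]
  have sum_eq : ∑ i, (ε i : ℝ) • (intPoint (c i) - s) = intPoint w - s := by
    have hsum' : ∑ i, (ε i : ℝ) = 1 := by exact_mod_cast hsum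
    simp_rw [smul_sub, Finset.sum_sub_distrib, ← Finset.sum_smul, hsum', one_smul]
    congr 1
    ext l
    have : ∑ i, (ε i : ℝ) * c i l = w l := by exact_mod_cast sum_mul_eq l
    simpa [intPoint_apply] using this
  rw [sum_eq, ← dist_eq_norm]
  exact hBs w hw

lemma card_combinationTuples_mul_card_le_of_isRatioOfHeight_one {s : EuclideanSpace ℝ (Fin k)}
    {R : ℕ} (hBs : ∀ x ∈ B, dist (intPoint x) s ≤ R) (hB : ∀ x ∈ B, ∀ j, |x j| ≤ R)
    (hq : (e + 1) * (R + 1) < q) (hlam : ∀ i, IsRatioOfHeight q 1 (lam i))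
    (hsum : ∑ i, lam i = 1) (hne : ∀ i, lam ≠ Pi.single i 1) :
    ((combinationTuples q B lam).card * B.card : ℝ) ≤
      2 * (unitBallVolume k * (0.97 * R + √k) ^ k) * B.card ^ e := by
  choose ε hε hlam_eq using fun i ↦ (hlam i).exists_abs_le_one
  have sum_eq_one : ∑ i, ε i = 1 := by
    refine eq_of_intCast_zmod_eq (q := q) (by simp [← hsum, hlam_eq]) ?_
    have : |∑ i, ε i| ≤ e := (Finset.abs_sum_le_sum_abs _ _).trans
      ((Finset.sum_le_card_nsmul _ _ 1 fun i _ ↦ hε i).trans (by simp))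
    zify at hq
    have : |∑ i, ε i - 1| ≤ e + 1 := (abs_sub _ _).trans (by simpa)
    nlinarith
  obtain ⟨i, j, hij, hi, hj⟩ := exists_ne_sq_eq_one_of_sum_eq_one hε sum_eq_one fun i h ↦
    hne i (funext fun j ↦ by simp [hlam_eq, h, Pi.single_apply])
  have := card_mul_card_le_of_norm_sum_le (fun c hc ↦ (mem_combinationTuples.1 hc).1) hBs
    R.cast_nonneg hij (ε := fun i ↦ (ε i : ℝ)) (by exact_mod_cast hi) (by exact_mod_cast hj)
    fun c hc ↦ norm_sum_smul_intPoint_sub_le hBs hB hq hε sum_eq_one hlam_eq hc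
  simpa using this

end SmallCombinations

section NonclosedTuples

variable {q k e : ℕ} {S : Finset (Fin k → ℤ)}

lemma card_biUnion_combinationTuples_mul_card_le {L : Finset (Fin e → ZMod q)} {N M : ℝ}
    (hN : L.card ≤ N) (hM : 0 ≤ M)
    (h : ∀ lam ∈ L, ((combinationTuples q S lam).card * S.card : ℝ) ≤ M * S.card ^ e) :
    ((L.biUnion (combinationTuples q S)).card * S.card : ℝ) ≤ N * M * S.card ^ e := by
  calc ((L.biUnion (combinationTuples q S)).card * S.card : ℝ)
      ≤ ∑ lam ∈ L, ((combinationTuples q S lam).card * S.card : ℝ) := by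
        rw [← Finset.sum_mul]
        gcongr
        exact_mod_cast Finset.card_biUnion_le
    _ ≤ L.card • (M * S.card ^ e) := Finset.sum_le_card_nsmul L _ _ h
    _ ≤ N * M * S.card ^ e := by
        rw [nsmul_eq_mul, ← mul_assoc]
        gcongr

variable [Fact q.Prime]

variable (q e) in
open Classical in
/-- The vectors over `ZMod q` all of whose entries are ratios of height at most `H`. -/
def ratioVectors (H : ℕ) : Finset (Fin e → ZMod q) :=
  Fintype.piFinset fun _ ↦ Finset.univ.filter (IsRatioOfHeight q H)

lemma mem_ratioVectors {H : ℕ} {lam : Fin e → ZMod q} :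
    lam ∈ ratioVectors q e H ↔ ∀ i, IsRatioOfHeight q H (lam i) := by
  simp [ratioVectors, Fintype.mem_piFinset]

lemma ratioVectors_mono {H H' : ℕ} (h : H ≤ H') : ratioVectors q e H ⊆ ratioVectors q e H' := by
  intro lam hlam
  refine mem_ratioVectors.2 fun i ↦ ?_
  obtain ⟨a, b, ha, hb, hab⟩ := mem_ratioVectors.1 hlam i
  have : (H : ℤ) ≤ H' := by exact_mod_cast h
  exact ⟨a, b, ha.trans this, hb.trans this, hab⟩

open Classical in
lemma card_filter_isRatioOfHeight_le {H : ℕ} (hH : H < q) :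
    (Finset.univ.filter (IsRatioOfHeight q H)).card ≤ (2 * H + 1) ^ 2 := by
  calc (Finset.univ.filter (IsRatioOfHeight q H)).card
      ≤ ((Finset.Icc (-(H : ℤ)) H ×ˢ Finset.Icc (-(H : ℤ)) H).image
          fun p ↦ (p.1 / p.2 : ZMod q)).card := by
        refine Finset.card_le_card fun x hx ↦ ?_
        obtain ⟨a, b, ha, hb, hb0, hab⟩ := (Finset.mem_filter.1 hx).2
        have hbq : (b : ZMod q) ≠ 0 := fun h ↦ hb0 <| Int.eq_zero_of_abs_lt_dvd
          ((ZMod.intCast_zmod_eq_zero_iff_dvd b q).1 h) (hb.trans_lt (by exact_mod_cast hH))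
        exact Finset.mem_image.2 ⟨(a, b), by simpa using ⟨abs_le.1 ha, abs_le.1 hb⟩,
          (eq_div_of_mul_eq hbq hab).symm⟩
    _ ≤ (2 * H + 1) ^ 2 := by
        have : ((H : ℤ) + 1 + H).toNat = 2 * H + 1 := by omega
        exact Finset.card_image_le.trans (by simp [this, sq])

lemma card_ratioVectors_le {H : ℕ} (hH : H < q) :
    (ratioVectors q e H).card ≤ ((2 * H + 1) ^ 2) ^ e := by
  rw [ratioVectors, Fintype.card_piFinset_const]
  exact Nat.pow_le_pow_left (card_filter_isRatioOfHeight_le hH) e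

lemma exists_mem_combinationTuples_of_mem_nonclosedTuples {R : ℕ} (hq : 2 * R < q)
    (hS : ∀ x ∈ S, ∀ j, |x j| ≤ R) {c : Fin e → Fin k → ℤ}
    (hc : c ∈ nonclosedTuples (ZMod q) (slotVecMod q) S e) :
    ∃ lam : Fin e → ZMod q, ∑ i, lam i = 1 ∧ (∀ i, lam ≠ Pi.single i 1) ∧
      c ∈ combinationTuples q S lam := by
  obtain ⟨hcS, w, hw, hwc, hspan⟩ := exists_mem_span_of_mem_nonclosedTuples hc
  obtain ⟨lam, hlam⟩ := (Submodule.mem_span_range_iff_exists_fun _).1 hspan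
  have sum_eq (l) : ∑ i, lam i * (c i l : ZMod q) = (w l : ZMod q) := by
    simpa [slotVecMod, slotVec, Finset.sum_apply] using congrFun hlam l.succ
  refine ⟨lam, by simpa [slotVecMod, slotVec, Finset.sum_apply] using congrFun hlam 0, ?_,
    mem_combinationTuples.2 ⟨hcS, w, hw, sum_eq⟩⟩
  rintro i rfl
  refine hwc ⟨i, funext fun l ↦ ?_⟩
  refine eq_of_intCast_zmod_eq (q := q) (by simpa [Pi.single_apply] using sum_eq l) ?_
  have : 2 * (R : ℤ) < q := by exact_mod_cast hq
  linarith [abs_sub (c i l) (w l), hS _ (hcS i) l, hS _ hw l]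

variable (q e) in
/-- The vectors with entries `0` or `± 1` and sum `1` that are not unit vectors. -/
def signVectors : Finset (Fin e → ZMod q) :=
  (ratioVectors q e 1).filter fun lam ↦ ∑ i, lam i = 1 ∧ ∀ i, lam ≠ Pi.single i 1

/-- Sorted by the height of `lam`: greater than `m`, equal to `H ∈ [2, m]`, or at most `1`. -/
lemma nonclosedTuples_subset {m R : ℕ} (hq : 2 * R < q) (hS : ∀ x ∈ S, ∀ j, |x j| ≤ R) :
    nonclosedTuples (ZMod q) (slotVecMod q) S e ⊆
      (ratioVectors q e m)ᶜ.biUnion (combinationTuples q S) ∪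
      ((Finset.Icc 2 m).biUnion fun H ↦
        (ratioVectors q e H \ ratioVectors q e (H - 1)).biUnion (combinationTuples q S)) ∪
      (signVectors q e).biUnion (combinationTuples q S) := by
  intro c hc
  obtain ⟨lam, hsum, hne, hlam⟩ := exists_mem_combinationTuples_of_mem_nonclosedTuples hq hS hc
  simp only [Finset.mem_union, Finset.mem_biUnion]
  by_cases hm : lam ∈ ratioVectors q e m
  · classical
    have hex : ∃ H, lam ∈ ratioVectors q e H := ⟨m, hm⟩
    rcases le_or_gt (Nat.find hex) 1 with hle | hlt
    · exact Or.inr ⟨lam, Finset.mem_filter.2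
        ⟨ratioVectors_mono hle (Nat.find_spec hex), hsum, hne⟩, hlam⟩
    · exact Or.inl <| Or.inr ⟨Nat.find hex, Finset.mem_Icc.2 ⟨hlt, Nat.find_min' hex hm⟩, lam,
        Finset.mem_sdiff.2 ⟨Nat.find_spec hex, Nat.find_min hex (by omega)⟩, hlam⟩
  · exact Or.inl <| Or.inl ⟨lam, Finset.mem_compl.2 hm, hlam⟩

lemma card_biUnion_compl_ratioVectors_le {G m : ℕ} (hm : 0 < m)
    (hS : ∀ x ∈ S, ∀ j, |x j| ≤ G * m) :
    (((ratioVectors q e m)ᶜ.biUnion (combinationTuples q S)).card * S.card : ℝ) ≤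
      q ^ e * ((2 * G + 1) ^ 2) ^ k * S.card ^ e := by
  refine card_biUnion_combinationTuples_mul_card_le ?_ (by positivity) fun lam hlam ↦ ?_
  · have := Finset.card_le_univ (ratioVectors q e m)ᶜ
    rw [Fintype.card_fun, ZMod.card, Fintype.card_fin] at this
    exact_mod_cast this
  · rw [Finset.mem_compl, mem_ratioVectors, not_forall] at hlam
    exact card_combinationTuples_mul_card_le_of_not_isRatioOfHeight hm hS hlam.choose_spec

variable {s : EuclideanSpace ℝ (Fin k)} {R : ℕ}

lemma card_biUnion_ratioVectors_sdiff_le {H : ℕ} (hH : 0 < H) (hHR : 4 * (H * R) < q) (hHq : H < q)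
    (hSs : ∀ x ∈ S, dist (intPoint x) s ≤ R) (hS : ∀ x ∈ S, ∀ j, |x j| ≤ R) :
    (((ratioVectors q e H \ ratioVectors q e (H - 1)).biUnion (combinationTuples q S)).card *
        S.card : ℝ) ≤
      ((2 * H + 1) ^ 2) ^ e * (unitBallVolume k * (R / H + √k) ^ k) * S.card ^ e := by
  have := (unitBallVolume_pos k).le
  refine card_biUnion_combinationTuples_mul_card_le ?_ (by positivity) fun lam hlam ↦ ?_
  · exact_mod_cast (Finset.card_le_card Finset.sdiff_subset).trans (card_ratioVectors_le hHq)
  · rw [Finset.mem_sdiff, mem_ratioVectors, mem_ratioVectors, not_forall] at hlam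
    obtain ⟨hlam, i, hi⟩ := hlam
    exact card_combinationTuples_mul_card_le_of_isRatioOfHeight hH hHR hHq hSs hS (hlam i) hi

lemma card_biUnion_signVectors_le (hq : (e + 1) * (R + 1) < q)
    (hSs : ∀ x ∈ S, dist (intPoint x) s ≤ R) (hS : ∀ x ∈ S, ∀ j, |x j| ≤ R) :
    (((signVectors q e).biUnion (combinationTuples q S)).card * S.card : ℝ) ≤
      9 ^ e * (2 * (unitBallVolume k * (0.97 * R + √k) ^ k)) * S.card ^ e := by
  have := (unitBallVolume_pos k).le
  refine card_biUnion_combinationTuples_mul_card_le ?_ (by positivity) fun lam hlam ↦ ?_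
  · have : (signVectors q e).card ≤ 9 ^ e := (Finset.card_filter_le _ _).trans
      (card_ratioVectors_le (Fact.out : q.Prime).one_lt)
    exact_mod_cast this
  · obtain ⟨hlam, hsum, hne⟩ := Finset.mem_filter.1 hlam
    exact card_combinationTuples_mul_card_le_of_isRatioOfHeight_one hSs hS hq
      (mem_ratioVectors.1 hlam) hsum hne

lemma card_nonclosedTuples_mul_card_le {G m : ℕ} (hm : 0 < m) (hG : 0 < G)
    (hq : 4 * (m * (G * m)) < q) (hqe : (e + 1) * (G * m + 1) < q)
    (hSs : ∀ x ∈ S, dist (intPoint x) s ≤ (G * m : ℕ)) (hS : ∀ x ∈ S, ∀ j, |x j| ≤ (G * m : ℕ)) :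
    ((nonclosedTuples (ZMod q) (slotVecMod q) S e).card * S.card : ℝ) ≤
      (q ^ e * ((2 * G + 1) ^ 2) ^ k +
        ∑ H ∈ Finset.Icc 2 m,
          ((2 * H + 1) ^ 2) ^ e * (unitBallVolume k * ((G * m : ℕ) / H + √k) ^ k) +
        9 ^ e * (2 * (unitBallVolume k * (0.97 * (G * m : ℕ) + √k) ^ k))) * S.card ^ e := by
  have hmq : m < q := by nlinarith [Nat.mul_le_mul_left m (Nat.mul_pos hG hm)]
  have card_le := (Finset.card_le_card <| nonclosedTuples_subset (q := q) (e := e) (m := m)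
    (by nlinarith) hS).trans <|
      (Finset.card_union_le _ _).trans (Nat.add_le_add_right (Finset.card_union_le _ _) _)
  have card_le' : ((nonclosedTuples (ZMod q) (slotVecMod q) S e).card : ℝ) ≤ _ :=
    Nat.cast_le.2 card_le
  push_cast at card_le'
  refine (mul_le_mul_of_nonneg_right card_le' S.card.cast_nonneg).trans ?_
  rw [add_mul, add_mul, add_mul _ _ ((S.card : ℝ) ^ e), add_mul _ _ ((S.card : ℝ) ^ e)]
  refine add_le_add (add_le_add ?_ ?_) ?_
  · exact card_biUnion_compl_ratioVectors_le hm (by exact_mod_cast hS)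
  · calc (((Finset.Icc 2 m).biUnion fun H ↦ (ratioVectors q e H \ ratioVectors q e (H - 1)).biUnion
          (combinationTuples q S)).card * S.card : ℝ)
        ≤ ∑ H ∈ Finset.Icc 2 m, (((ratioVectors q e H \ ratioVectors q e (H - 1)).biUnion
            (combinationTuples q S)).card * S.card : ℝ) := by
          rw [← Finset.sum_mul]
          gcongr
          exact_mod_cast Finset.card_biUnion_le
      _ ≤ _ := by
          rw [Finset.sum_mul]
          refine Finset.sum_le_sum fun H hH ↦ ?_
          obtain ⟨h2H, hHm⟩ := Finset.mem_Icc.1 hH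
          exact card_biUnion_ratioVectors_sdiff_le (by omega)
            ((Nat.mul_le_mul_left 4 (Nat.mul_le_mul_right _ hHm)).trans_lt hq)
            (hHm.trans_lt hmq) hSs hS
  · exact_mod_cast card_biUnion_signVectors_le hqe hSs hS

end NonclosedTuples

section CountingEstimates

open Filter Topology

lemma tendsto_add_pow_div_pow (c : ℝ) (k : ℕ) :
    Tendsto (fun t : ℝ ↦ (t + c) ^ k / t ^ k) atTop (𝓝 1) := by
  have tendsto : Tendsto (fun t : ℝ ↦ (1 + c / t) ^ k) atTop (𝓝 1) := by
    simpa using ((tendsto_const_nhds.div_atTop tendsto_id).const_add (1 : ℝ)).pow k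
  refine tendsto.congr' ?_
  filter_upwards [eventually_gt_atTop 0] with t ht
  rw [← div_pow, add_div, div_self ht.ne']

lemma eventually_add_pow_le (c : ℝ) (k : ℕ) : ∀ᶠ t : ℝ in atTop, (t + c) ^ k ≤ 2 * t ^ k := by
  filter_upwards [(tendsto_add_pow_div_pow c k).eventually_le_const one_lt_two,
    eventually_gt_atTop 0] with t h ht
  rwa [div_le_iff₀ (by positivity)] at h

lemma eventually_half_pow_le_add_pow (c : ℝ) (k : ℕ) :
    ∀ᶠ t : ℝ in atTop, t ^ k / 2 ≤ (t + c) ^ k := by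
  filter_upwards [(tendsto_add_pow_div_pow c k).eventually_const_le one_half_lt_one,
    eventually_gt_atTop 0] with t h ht
  rwa [le_div_iff₀ (by positivity), one_div_mul_eq_div] at h

lemma eventually_half_le_card_integerPoints (k : ℕ) : ∀ᶠ R : ℝ in atTop,
    ∀ s : EuclideanSpace ℝ (Fin k), unitBallVolume k * R ^ k / 2 ≤ (integerPoints s R).card := by
  filter_upwards [eventually_half_pow_le_add_pow (-√k) k, eventually_ge_atTop √k] with R h hR s
  calc unitBallVolume k * R ^ k / 2 = unitBallVolume k * (R ^ k / 2) := mul_div_assoc _ _ _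
    _ ≤ unitBallVolume k * (R - √k) ^ k := mul_le_mul_of_nonneg_left h (unitBallVolume_pos k).le
    _ ≤ (integerPoints s R).card :=
      unitBallVolume_mul_pow_le_card hR fun l hl ↦ mem_integerPoints.2 hl

lemma eventually_pow_mul_le {k w : ℕ} (h : 4 * w < k) {C : ℝ} (hC : 0 < C) :
    ∀ᶠ g : ℕ in atTop, ∀ q ≤ 2 * g ^ 8, ∀ e ≤ w,
      (q : ℝ) ^ e * ((2 * g + 1) ^ 2) ^ k ≤ C * g ^ (4 * k) := by
  filter_upwards [eventually_ge_atTop 1, (tendsto_natCast_atTop_atTop.const_mul_atTop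
    hC).eventually_ge_atTop (2 ^ w * 9 ^ k)] with g hg hCg q hq e he
  have hg' : (1 : ℝ) ≤ g := by exact_mod_cast hg
  have hq' : (q : ℝ) ≤ 2 * g ^ 8 := by exact_mod_cast hq
  have one_le : (1 : ℝ) ≤ 2 * g ^ 8 := by linarith [one_le_pow₀ hg' (n := 8)]
  calc (q : ℝ) ^ e * ((2 * g + 1) ^ 2) ^ k ≤ (2 * g ^ 8) ^ w * ((3 * g) ^ 2) ^ k := by
        gcongr
        · exact (pow_le_pow_left₀ q.cast_nonneg hq' e).trans (pow_le_pow_right₀ one_le he)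
        · linarith
    _ = 2 ^ w * 9 ^ k * (g : ℝ) ^ (8 * w + 2 * k) := by
        rw [(by norm_num : (9 : ℝ) = 3 ^ 2)]
        ring
    _ ≤ C * g * (g : ℝ) ^ (8 * w + 2 * k) := by gcongr
    _ = C * (g : ℝ) ^ (8 * w + 2 * k + 1) := by ring
    _ ≤ C * (g : ℝ) ^ (4 * k) := by
        gcongr
        omega

lemma sum_Icc_two_inv_sq_le_one (m : ℕ) : ∑ H ∈ Finset.Icc 2 m, ((H : ℝ) ^ 2)⁻¹ ≤ 1 := by
  rcases le_or_gt 1 m with hm | hm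
  · have := sum_Ioc_inv_sq_le_sub (α := ℝ) one_ne_zero hm
    have inv_nonneg : (0 : ℝ) ≤ (m : ℝ)⁻¹ := by positivity
    have Icc_eq : Finset.Icc 2 m = Finset.Ioc 1 m := rfl
    rw [Icc_eq]
    norm_num at this
    linarith
  · simp [Finset.Icc_eq_empty (by omega : ¬2 ≤ m)]

lemma pow_div_pow_le {v k e H : ℕ} (hv : 1 ≤ v) (hk : 2000 * v ≤ k) (he : e ≤ 8 * v) (hH : 2 ≤ H) :
    ((2 * (H : ℝ) + 1) ^ 2) ^ e / H ^ k ≤ (1 / 64) ^ v / 16 * ((H : ℝ) ^ 2)⁻¹ := by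
  have hH' : (2 : ℝ) ≤ H := by exact_mod_cast hH
  have one_le : (1 : ℝ) ≤ H := by linarith
  have sq_le : (2 * (H : ℝ) + 1) ^ 2 ≤ (H : ℝ) ^ 6 := calc
    (2 * (H : ℝ) + 1) ^ 2 ≤ ((H : ℝ) ^ 3) ^ 2 := by
      gcongr
      nlinarith [mul_nonneg (sub_nonneg.2 hH') (by positivity : 0 ≤ (H : ℝ) * (H + 2))]
    _ = (H : ℝ) ^ 6 := by ring
  rw [div_le_iff₀ (by positivity), one_div, inv_pow]
  calc ((2 * (H : ℝ) + 1) ^ 2) ^ e ≤ (H ^ 6) ^ e := by gcongr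
    _ = (H : ℝ) ^ (6 * e) := (pow_mul _ _ _).symm
    _ ≤ (H : ℝ) ^ (48 * v) := pow_le_pow_right₀ one_le (by omega)
    _ ≤ (64 ^ v)⁻¹ / 16 * ((H : ℝ) ^ 2)⁻¹ * (H : ℝ) ^ (48 * v + (6 * v + 4) + 2) := by
      rw [pow_add, pow_add]
      have : (64 : ℝ) ^ v * 16 ≤ H ^ (6 * v + 4) := calc
        (64 : ℝ) ^ v * 16 = 2 ^ (6 * v + 4) := by rw [pow_add, pow_mul]; norm_num
        _ ≤ H ^ (6 * v + 4) := by gcongr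
      field_simp
      linarith
    _ ≤ (64 ^ v)⁻¹ / 16 * ((H : ℝ) ^ 2)⁻¹ * (H : ℝ) ^ k := by
      gcongr
      omega

lemma sum_pow_div_pow_le {v k e : ℕ} (m : ℕ) (hv : 1 ≤ v) (hk : 2000 * v ≤ k) (he : e ≤ 8 * v) :
    ∑ H ∈ Finset.Icc 2 m, ((2 * (H : ℝ) + 1) ^ 2) ^ e / H ^ k ≤ (1 / 64) ^ v / 16 := calc
  _ ≤ ∑ H ∈ Finset.Icc 2 m, (1 / 64) ^ v / 16 * ((H : ℝ) ^ 2)⁻¹ :=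
    Finset.sum_le_sum fun _ hH ↦ pow_div_pow_le hv hk he (Finset.mem_Icc.1 hH).1
  _ ≤ (1 / 64) ^ v / 16 := by
    rw [← Finset.mul_sum]
    exact mul_le_of_le_one_right (by positivity) (sum_Icc_two_inv_sq_le_one m)

lemma nine_pow_mul_le {v k e : ℕ} (hv : 1 ≤ v) (hk : 2000 * v ≤ k) (he : e ≤ 8 * v) :
    (9 : ℝ) ^ e * 2 * 0.97 ^ k ≤ (1 / 64) ^ v / 16 := by
  calc (9 : ℝ) ^ e * 2 * 0.97 ^ k ≤ 9 ^ (8 * v) * 2 * 0.97 ^ (25 * 80 * v) := by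
        gcongr 9 ^ ?_ * 2 * ?_
        · norm_num
        · exact pow_le_pow_of_le_one (by norm_num) (by norm_num) hk
    _ = 2 * (9 ^ 8 * (0.97 ^ 25) ^ 80) ^ v := by rw [mul_pow, ← pow_mul, ← pow_mul, ← pow_mul]; ring
    _ ≤ 2 * (1 / 32 * (1 / 64)) ^ v := by
        have : (0.97 : ℝ) ^ 25 ≤ 1 / 2 := by norm_num
        refine mul_le_mul_of_nonneg_left (pow_le_pow_left₀ (by positivity) ?_ v) two_pos.le
        calc (9 : ℝ) ^ 8 * (0.97 ^ 25) ^ 80 ≤ 9 ^ 8 * (1 / 2) ^ 80 := by gcongr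
          _ ≤ 1 / 32 * (1 / 64) := by norm_num
    _ ≤ 2 * (1 / 32 * (1 / 64) ^ v) := by
        rw [mul_pow]
        gcongr
        exact pow_le_of_le_one (by norm_num) (by norm_num) (by omega)
    _ = (1 / 64) ^ v / 16 := by ring

lemma sum_mul_pow_le {v k e g : ℕ} (hv : 1 ≤ v) (hk : 2000 * v ≤ k) (he : e ≤ 8 * v)
    (hadd : ∀ t : ℝ, g ≤ t → (t + √k) ^ k ≤ 2 * t ^ k) :
    ∑ H ∈ Finset.Icc 2 (g ^ 3), ((2 * (H : ℝ) + 1) ^ 2) ^ e *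
        (unitBallVolume k * ((g * g ^ 3 : ℕ) / H + √k) ^ k) ≤
      (1 / 64) ^ v * (unitBallVolume k * g ^ (4 * k)) / 8 := by
  have := unitBallVolume_pos k
  calc _ ≤ ∑ H ∈ Finset.Icc 2 (g ^ 3), ((2 * (H : ℝ) + 1) ^ 2) ^ e / H ^ k *
        (2 * (unitBallVolume k * g ^ (4 * k))) := by
        refine Finset.sum_le_sum fun H hH ↦ ?_
        obtain ⟨h2H, hHg⟩ := Finset.mem_Icc.1 hH
        have hH0 : (0 : ℝ) < H := by exact_mod_cast (by omega : 0 < H)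
        have le_div : (g : ℝ) ≤ (g * g ^ 3 : ℕ) / H := by
          rw [le_div_iff₀ hH0]
          exact_mod_cast Nat.mul_le_mul_left g hHg
        calc _ ≤ ((2 * (H : ℝ) + 1) ^ 2) ^ e *
              (unitBallVolume k * (2 * ((g * g ^ 3 : ℕ) / H) ^ k)) := by
              gcongr
              exact hadd _ le_div
          _ = _ := by
              rw [div_pow, ← pow_succ']
              push_cast
              rw [← pow_mul]
              ring
    _ = (∑ H ∈ Finset.Icc 2 (g ^ 3), ((2 * (H : ℝ) + 1) ^ 2) ^ e / H ^ k) *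
        (2 * (unitBallVolume k * g ^ (4 * k))) := by rw [Finset.sum_mul]
    _ ≤ (1 / 64) ^ v / 16 * (2 * (unitBallVolume k * g ^ (4 * k))) := by
        gcongr
        exact sum_pow_div_pow_le _ hv hk he
    _ = _ := by ring

lemma nine_pow_mul_unitBallVolume_le {v k e g : ℕ} (hv : 1 ≤ v) (hk : 2000 * v ≤ k)
    (he : e ≤ 8 * v) (hg : 2 ≤ g) (hadd : ∀ t : ℝ, g ≤ t → (t + √k) ^ k ≤ 2 * t ^ k) :
    9 ^ e * (2 * (unitBallVolume k * (0.97 * (g * g ^ 3 : ℕ) + √k) ^ k)) ≤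
      (1 / 64) ^ v * (unitBallVolume k * g ^ (4 * k)) / 8 := by
  have := unitBallVolume_pos k
  have hg' : (2 : ℝ) ≤ g := by exact_mod_cast hg
  have le_mul : (g : ℝ) ≤ 0.97 * (g * g ^ 3 : ℕ) := by
    push_cast
    nlinarith [pow_le_pow_left₀ two_pos.le hg' 3]
  calc 9 ^ e * (2 * (unitBallVolume k * (0.97 * (g * g ^ 3 : ℕ) + √k) ^ k))
      ≤ 9 ^ e * (2 * (unitBallVolume k * (2 * (0.97 * (g * g ^ 3 : ℕ)) ^ k))) := by
        gcongr
        exact hadd _ le_mul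
    _ = 9 ^ e * 2 * 0.97 ^ k * (2 * (unitBallVolume k * g ^ (4 * k))) := by
        rw [mul_pow, ← pow_succ']
        push_cast
        rw [← pow_mul]
        ring
    _ ≤ (1 / 64) ^ v / 16 * (2 * (unitBallVolume k * g ^ (4 * k))) := by
        gcongr
        exact nine_pow_mul_le hv hk he
    _ = _ := by ring

lemma card_nonclosedTuples_le {v k g q : ℕ} [Fact q.Prime] (hv : 1 ≤ v) (hk : 2000 * v ≤ k)
    (hg : 8 * v + 3 ≤ g) (hq : g ^ 8 < q) {e : ℕ} (he : e ≤ 8 * v)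
    (hadd : ∀ t : ℝ, g ≤ t → (t + √k) ^ k ≤ 2 * t ^ k)
    (hqe : (q : ℝ) ^ e * ((2 * g + 1) ^ 2) ^ k ≤
      (1 / 64) ^ v * unitBallVolume k / 4 * g ^ (4 * k))
    {s : EuclideanSpace ℝ (Fin k)} (hs : ∀ j, s j ∈ Set.Ico (0 : ℝ) 1) {S : Finset (Fin k → ℤ)}
    (hS : S ⊆ integerPoints s (g * g ^ 3 : ℕ))
    (hcard : unitBallVolume k * g ^ (4 * k) / 2 ≤ S.card) :
    ((nonclosedTuples (ZMod q) (slotVecMod q) S e).card : ℝ) ≤ (1 / 64) ^ v * S.card ^ e := by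
  have hg0 : 0 < g := by omega
  have hV : 0 < unitBallVolume k := unitBallVolume_pos k
  have hS0 : (0 : ℝ) < S.card := lt_of_lt_of_le (by positivity) hcard
  have four_mul_lt : 4 * (g ^ 3 * (g * g ^ 3)) < q := lt_of_le_of_lt (by
    calc 4 * (g ^ 3 * (g * g ^ 3)) ≤ g * (g ^ 3 * (g * g ^ 3)) := Nat.mul_le_mul_right _ (by omega)
      _ = g ^ 8 := by ring) hq
  have succ_mul_lt : (e + 1) * (g * g ^ 3 + 1) < q := lt_of_le_of_lt (by
    calc (e + 1) * (g * g ^ 3 + 1) ≤ g * (g * (g * g ^ 3)) := by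
          have : 1 ≤ g * g ^ 3 := Nat.mul_pos hg0 (pow_pos hg0 3)
          exact Nat.mul_le_mul (by omega) (by nlinarith)
      _ ≤ g ^ 2 * (g * (g * (g * g ^ 3))) := Nat.le_mul_of_pos_left _ (pow_pos hg0 2)
      _ = g ^ 8 := by ring) hq
  refine le_of_mul_le_mul_right ?_ hS0
  calc ((nonclosedTuples (ZMod q) (slotVecMod q) S e).card * S.card : ℝ)
      ≤ _ := card_nonclosedTuples_mul_card_le (pow_pos hg0 3) hg0 four_mul_lt succ_mul_lt
        (fun x hx ↦ mem_integerPoints.1 (hS hx))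
        fun x hx ↦ abs_apply_le_of_mem_integerPoints hs (hS hx)
    _ ≤ (1 / 64) ^ v * S.card * S.card ^ e := by
        gcongr
        linarith [sum_mul_pow_le hv hk he hadd,
          nine_pow_mul_unitBallVolume_le hv hk he (by omega) hadd,
          mul_le_mul_of_nonneg_left hcard (by positivity : (0 : ℝ) ≤ (1 / 64) ^ v)]
    _ = (1 / 64) ^ v * S.card ^ e * S.card := by ring

lemma eventually_exists_card_nonclosedTuples_le {v k : ℕ} (hv : 1 ≤ v) (hk : 2000 * v ≤ k) :
    ∀ᶠ g : ℕ in atTop, ∀ (q : ℕ) [Fact q.Prime], g ^ 8 < q → q ≤ 2 * g ^ 8 →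
      ∀ s : EuclideanSpace ℝ (Fin k), (∀ j, s j ∈ Set.Ico (0 : ℝ) 1) →
        ∃ S ⊆ integerPoints s (g * g ^ 3 : ℕ), S.card = ⌈unitBallVolume k * g ^ (4 * k) / 2⌉₊ ∧
          ∀ e ≤ 8 * v, ((nonclosedTuples (ZMod q) (slotVecMod q) S e).card : ℝ) ≤
            (1 / 64) ^ v * S.card ^ e := by
  have hV := unitBallVolume_pos k
  have tendsto_pow : Tendsto (fun g : ℕ ↦ (g : ℝ) ^ 4) atTop atTop :=
    (tendsto_pow_atTop four_ne_zero).comp tendsto_natCast_atTop_atTop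
  filter_upwards [eventually_ge_atTop (8 * v + 3),
    tendsto_natCast_atTop_atTop.eventually (eventually_forall_ge_atTop.2
      (eventually_add_pow_le √k k)),
    tendsto_pow.eventually (eventually_half_le_card_integerPoints k),
    eventually_pow_mul_le (k := k) (w := 8 * v) (by omega)
      (by positivity : 0 < (1 / 64) ^ v * unitBallVolume k / 4)] with
    g hg hadd hpoints hqe q _ hq hq2 s hs
  have le_card : ⌈unitBallVolume k * g ^ (4 * k) / 2⌉₊ ≤
      (integerPoints s (g * g ^ 3 : ℕ)).card := by
    rw [Nat.ceil_le, pow_mul, ← pow_succ', Nat.cast_pow]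
    exact hpoints s
  obtain ⟨S, hS, hcard⟩ := Finset.exists_subset_card_eq le_card
  exact ⟨S, hS, hcard, fun e he ↦ card_nonclosedTuples_le hv hk hg hq he hadd (hqe q hq2 e he) hs
    hS (hcard ▸ Nat.le_ceil _)⟩

end CountingEstimates

section UnitBallVolume

lemma unitBallVolume_eq (k : ℕ) : unitBallVolume k = √Real.pi ^ k / Real.Gamma (k / 2 + 1) := by
  rcases k.eq_zero_or_pos with rfl | hk
  · have ball_eq : Metric.ball (0 : EuclideanSpace ℝ (Fin 0)) 1 = unitCell 0 := by
      ext x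
      simp [unitCell, Subsingleton.elim x 0, funext_iff]
    simp [unitBallVolume, measureReal_def, ball_eq, volume_unitCell]
  · have : Nonempty (Fin k) := ⟨⟨0, hk⟩⟩
    have := Real.Gamma_pos_of_pos (by positivity : (0 : ℝ) < k / 2 + 1)
    rw [unitBallVolume, measureReal_def, EuclideanSpace.volume_ball, ENNReal.ofReal_one, one_pow,
      one_mul, Fintype.card_fin, ENNReal.toReal_ofReal (by positivity)]

lemma gamma_add_half_sq_mul_le {x : ℝ} (hx : 0 < x) :
    Real.Gamma (x + 1 / 2) ^ 2 * x ≤ Real.Gamma (x + 1) ^ 2 := by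
  have log_convex := Real.Gamma_mul_add_mul_le_rpow_Gamma_mul_rpow_Gamma hx
    (by linarith : 0 < x + 1) one_half_pos one_half_pos (add_halves 1)
  have midpoint : 1 / 2 * x + 1 / 2 * (x + 1) = x + 1 / 2 := by ring
  rw [midpoint, ← Real.sqrt_eq_rpow, ← Real.sqrt_eq_rpow] at log_convex
  have gamma_pos := Real.Gamma_pos_of_pos hx
  have := Real.Gamma_pos_of_pos (by linarith : 0 < x + 1 / 2)
  calc Real.Gamma (x + 1 / 2) ^ 2 * x
      ≤ (√(Real.Gamma x) * √(Real.Gamma (x + 1))) ^ 2 * x := by gcongr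
    _ = Real.Gamma (x + 1) ^ 2 := by
        rw [mul_pow, Real.sq_sqrt gamma_pos.le, Real.sq_sqrt (by positivity),
          Real.Gamma_add_one hx.ne']
        ring

lemma unitBallVolume_succ_sq_mul_le (k : ℕ) :
    unitBallVolume (k + 1) ^ 2 * (k + 1) ≤ 2 * Real.pi * unitBallVolume k ^ 2 := by
  have gamma_le := gamma_add_half_sq_mul_le (by positivity : (0 : ℝ) < k / 2 + 1 / 2)
  have gamma_pos := Real.Gamma_pos_of_pos (by positivity : (0 : ℝ) < k / 2 + 1)
  have gamma_succ_pos := Real.Gamma_pos_of_pos (by positivity : (0 : ℝ) < k / 2 + 1 / 2 + 1)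
  rw [add_assoc, add_halves] at gamma_le
  rw [unitBallVolume_eq, unitBallVolume_eq, Nat.cast_succ, add_div]
  calc (√Real.pi ^ (k + 1) / Real.Gamma (k / 2 + 1 / 2 + 1)) ^ 2 * (k + 1)
      = 2 * √Real.pi ^ 2 * (√Real.pi ^ k) ^ 2 *
          ((k / 2 + 1 / 2) / Real.Gamma (k / 2 + 1 / 2 + 1) ^ 2) := by ring
    _ ≤ 2 * √Real.pi ^ 2 * (√Real.pi ^ k) ^ 2 * (1 / Real.Gamma (k / 2 + 1) ^ 2) := by
        gcongr ?_ * ?_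
        rw [div_le_div_iff₀ (by positivity) (by positivity)]
        linarith
    _ = 2 * Real.pi * (√Real.pi ^ k / Real.Gamma (k / 2 + 1)) ^ 2 := by
        rw [Real.sq_sqrt Real.pi_pos.le]
        ring

lemma unitBallVolume_one_add_mul_sqrt_le (k : ℕ) :
    unitBallVolume (1 + k) * √k ≤ 2.6 * unitBallVolume k := by
  have := unitBallVolume_pos k
  have := unitBallVolume_pos (1 + k)
  have succ_le := unitBallVolume_succ_sq_mul_le k
  rw [add_comm k] at succ_le
  refine (sq_le_sq₀ (by positivity) (by positivity)).1 ?_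
  rw [mul_pow, mul_pow, Real.sq_sqrt k.cast_nonneg]
  nlinarith [Real.pi_lt_d2, sq_nonneg (unitBallVolume k), sq_nonneg (unitBallVolume (1 + k))]

end UnitBallVolume

section BaseLattice

lemma linearIndependent_basisFun (k : ℕ) :
    LinearIndependent ℝ fun i ↦ EuclideanSpace.basisFun (Fin k) ℝ i :=
  (EuclideanSpace.basisFun (Fin k) ℝ).orthonormal.linearIndependent

lemma latticeDet_basisFun (k : ℕ) :
    latticeDet (fun i ↦ EuclideanSpace.basisFun (Fin k) ℝ i) = 1 := by
  have matrix_eq : (Matrix.of fun i j : Fin k ↦ EuclideanSpace.basisFun (Fin k) ℝ j i) = 1 := by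
    ext i j
    simp [Matrix.one_apply]
  rw [latticeDet, matrix_eq, Matrix.det_one, abs_one]

lemma latticeDet_pos {n : ℕ} {b : Fin n → EuclideanSpace ℝ (Fin n)}
    (hb : LinearIndependent ℝ b) : 0 < latticeDet b :=
  (abs_nonneg _).lt_of_ne' ((latticeDet_ne_zero_iff_linearIndependent b).2 hb)

lemma coveringDensity_eq {n : ℕ} (b : Fin n → EuclideanSpace ℝ (Fin n)) {r : ℝ} (hr : 0 ≤ r) :
    coveringDensity b r = unitBallVolume n * r ^ n / latticeDet b :=
  congrArg (· / latticeDet b) (volume_real_closedBall 0 hr)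

lemma compl_uncovered_smul_basisFun_one {α : ℝ} (hα : 0 < α) (ρ : ℝ) :
    (uncovered (fun i ↦ α • EuclideanSpace.basisFun (Fin 1) ℝ i) ρ)ᶜ =
      Set.univ.pi fun _ ↦ Metric.closedBall (0 : UnitAddCircle) (ρ / α) := by
  ext g
  simp only [compl_uncovered, Set.mem_image, Set.mem_ofPred_eq, Set.mem_univ_pi, Fin.forall_fin_one,
    mem_closedBall_zero_iff, Fin.sum_univ_one, norm_smul, OrthonormalBasis.norm_eq_one, mul_one,
    Real.norm_eq_abs, abs_of_pos hα, ← le_div_iff₀ hα]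
  constructor
  · rintro ⟨t, ht, rfl⟩
    exact QuotientAddGroup.norm_mk_le_norm.trans ht
  · intro hg
    obtain ⟨t, rfl⟩ := torusMk_surjective g
    rw [torusMk_apply, UnitAddCircle.norm_eq] at hg
    exact ⟨fun i ↦ t i - round (t i), hg, torusMk_eq_torusMk_iff.2
      ⟨fun i ↦ -round (t i), fun i ↦ by push_cast; ring⟩⟩

lemma volume_real_compl_uncovered_smul_basisFun_one {α ρ : ℝ} (hρ : 0 ≤ ρ) (hα : 0 < α)
    (h : 2 * ρ ≤ α) :
    volume.real (uncovered (fun i ↦ α • EuclideanSpace.basisFun (Fin 1) ℝ i) ρ)ᶜ = 2 * ρ / α := by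
  rw [compl_uncovered_smul_basisFun_one hα, measureReal_def, volume_pi_pi, Fin.prod_univ_one,
    AddCircle.volume_closedBall, ← mul_div_assoc, min_eq_right ((div_le_one hα).2 h),
    ENNReal.toReal_ofReal (by positivity)]

lemma exists_volume_uncovered_gluedBasis_le {k v q : ℕ} [Fact q.Prime] {α ρ R : ℝ} (hρ : 0 ≤ ρ)
    (hα : 0 < α) (h : 2 * ρ ≤ α)
    (hS : ∀ s : EuclideanSpace ℝ (Fin k), (∀ j, s j ∈ Set.Ico (0 : ℝ) 1) →
      ∃ S ⊆ integerPoints s R, S.card * (2 * ρ / α) = v ∧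
        ∀ e ≤ 8 * v, ((nonclosedTuples (ZMod q) (slotVecMod q) S e).card : ℝ) ≤
          (1 / 64) ^ v * S.card ^ e) :
    ∃ x : Fin k → Fin 1 → ℝ,
      volume (uncovered (gluedBasis (fun i ↦ α • EuclideanSpace.basisFun (Fin 1) ℝ i)
        (fun i ↦ EuclideanSpace.basisFun (Fin k) ℝ i) x) √(ρ ^ 2 + R ^ 2)) ≤
          ENNReal.ofReal (4 * (1 / 2) ^ v) := by
  have indep := (linearIndependent_basisFun 1).units_smul fun _ ↦ Units.mk0 α hα.ne'
  have measurable := measurableSet_uncovered indep ρ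
  obtain ⟨X, hX⟩ := exists_lintegral_volume_uncoveredSlice_le measurable
    (fun i ↦ EuclideanSpace.basisFun (Fin k) ℝ i) R (ENNReal.ofReal (4 * (1 / 2) ^ v)) fun σ ↦ by
      obtain ⟨S, hSR, hcard, hcount⟩ := hS (WithLp.toLp 2 (torusLift σ)) (torusLift_mem_Ico σ)
      refine ⟨S, fun l hl ↦ ?_, volume_biInter_compl_slotEvent_le q measurable ?_ fun e he ↦
        hcount e (by omega)⟩
      · rw [sum_smul_basisFun (fun j ↦ torusLift σ j - l j)]
        exact (dist_eq_norm' _ _).symm.trans_le (mem_integerPoints.1 (hSR hl))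
      · exact (volume_real_compl_uncovered_smul_basisFun_one hρ hα h).symm ▸ hcard
  choose x hx using fun j ↦ torusMk_surjective (X j)
  refine ⟨x, (volume_uncovered_gluedBasis_le indep (linearIndependent_basisFun k) x ρ R).trans ?_⟩
  simp only [hx]
  exact hX

lemma sqrt_one_add_inv_pow_le_exp {k : ℕ} (hk : 0 < k) :
    √(1 + 1 / (k : ℝ)) ^ (1 + k) ≤ Real.exp 1 := by
  have hk' : (1 : ℝ) ≤ k := by exact_mod_cast hk
  have sqrt_le : √(1 + 1 / (k : ℝ)) ≤ Real.exp (1 / k / 2) := by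
    rw [Real.sqrt_le_left (Real.exp_nonneg _), ← Real.exp_nat_mul, Nat.cast_ofNat,
      mul_div_cancel₀ _ two_ne_zero, add_comm]
    exact Real.add_one_le_exp _
  calc √(1 + 1 / (k : ℝ)) ^ (1 + k) ≤ Real.exp (1 / k / 2) ^ (1 + k) := by gcongr
    _ = Real.exp ((1 + k) / (2 * k)) := by
        rw [← Real.exp_nat_mul]
        push_cast
        field_simp
    _ ≤ Real.exp 1 := by
        gcongr
        rw [div_le_one (by positivity)]
        linarith

lemma unitBallVolume_mul_sqrt_pow_le {k : ℕ} (hk : 0 < k) {R : ℝ} (hR : 0 ≤ R) :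
    unitBallVolume (1 + k) * √((R / √k) ^ 2 + R ^ 2) ^ (1 + k) ≤
      8 * (R / √k) * (unitBallVolume k * R ^ k) := by
  have := unitBallVolume_pos k
  have := unitBallVolume_pos (1 + k)
  have hk' : (0 : ℝ) < k := by exact_mod_cast hk
  have sqrt_eq : √((R / √k) ^ 2 + R ^ 2) = R * √(1 + 1 / k) := by
    rw [div_pow, Real.sq_sqrt hk'.le, ← Real.sqrt_sq hR, ← Real.sqrt_mul (by positivity),
      Real.sqrt_sq hR]
    congr 1
    ring
  calc unitBallVolume (1 + k) * √((R / √k) ^ 2 + R ^ 2) ^ (1 + k)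
      = unitBallVolume (1 + k) * √k * (R / √k) * R ^ k * √(1 + 1 / (k : ℝ)) ^ (1 + k) := by
        rw [sqrt_eq, mul_pow, pow_add R]
        field_simp
    _ ≤ 2.6 * unitBallVolume k * (R / √k) * R ^ k * 2.8 := by
        gcongr ?_ * (R / √k) * R ^ k * ?_
        · exact unitBallVolume_one_add_mul_sqrt_le k
        · linarith [sqrt_one_add_inv_pow_le_exp hk, Real.exp_one_lt_d9]
    _ ≤ 8 * (R / √k) * (unitBallVolume k * R ^ k) := by
        have : 0 ≤ R / √k * (unitBallVolume k * R ^ k) := by positivity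
        linarith

/- A ball of radius `R` about a point of `ℝᵏ` contains `N` integer points, each of which covers a
fraction `2ρ / α` of the circle of length `α` after a random rotation; `α` is chosen so that the
expected multiplicity `N * (2ρ / α)` of the covering is `v`. -/
lemma exists_coveringDensity_le_and_volume_uncovered_le_of_integerPoints {v k N q : ℕ}
    [Fact q.Prime] (hv : 0 < v) (hvN : v ≤ N) (hk : 0 < k) {R : ℝ} (hR : 0 < R)
    (hN : unitBallVolume k * R ^ k ≤ 2 * N)
    (hS : ∀ s : EuclideanSpace ℝ (Fin k), (∀ j, s j ∈ Set.Ico (0 : ℝ) 1) →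
      ∃ S ⊆ integerPoints s R, S.card = N ∧
        ∀ e ≤ 8 * v, ((nonclosedTuples (ZMod q) (slotVecMod q) S e).card : ℝ) ≤
          (1 / 64) ^ v * S.card ^ e) :
    ∃ (b : Fin (1 + k) → EuclideanSpace ℝ (Fin (1 + k))) (r : ℝ), 0 < r ∧ LinearIndependent ℝ b ∧
      coveringDensity b r ≤ 8 * v ∧
        volume (uncovered b r) ≤ ENNReal.ofReal (4 * (1 / 2) ^ v) := by
  have v_pos : (0 : ℝ) < v := by exact_mod_cast hv
  have v_le_N : (v : ℝ) ≤ N := by exact_mod_cast hvN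
  have N_pos : (0 : ℝ) < N := v_pos.trans_le v_le_N
  set ρ := R / √k with hρ
  have ρ_pos : 0 < ρ := by positivity
  set α := 2 * ρ * N / v with hα
  have α_pos : 0 < α := by positivity
  have le_α : 2 * ρ ≤ α := by
    rw [hα, le_div_iff₀ v_pos]
    gcongr
  obtain ⟨x, hx⟩ := exists_volume_uncovered_gluedBasis_le (q := q) ρ_pos.le α_pos le_α fun s hs ↦ by
    obtain ⟨S, hSR, rfl, hcount⟩ := hS s hs
    exact ⟨S, hSR, by rw [hα]; field_simp, hcount⟩
  have indep := linearIndependent_gluedBasis ((linearIndependent_basisFun 1).units_smul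
    fun _ ↦ Units.mk0 α α_pos.ne') (linearIndependent_basisFun k) x
  refine ⟨_, √(ρ ^ 2 + R ^ 2), by positivity, indep, ?_, hx⟩
  rw [coveringDensity_eq _ (by positivity), div_le_iff₀ (latticeDet_pos indep)]
  calc unitBallVolume (1 + k) * √(ρ ^ 2 + R ^ 2) ^ (1 + k)
      ≤ 8 * ρ * (unitBallVolume k * R ^ k) := unitBallVolume_mul_sqrt_pow_le hk hR.le
    _ ≤ 8 * ρ * (2 * N) := by gcongr
    _ = 8 * v * α := by
        rw [hα]
        field_simp
    _ = 8 * v * latticeDet (gluedBasis (fun i ↦ α • EuclideanSpace.basisFun (Fin 1) ℝ i)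
          (fun i ↦ EuclideanSpace.basisFun (Fin k) ℝ i) x) := by
        rw [latticeDet_gluedBasis, latticeDet_smul, latticeDet_basisFun, latticeDet_basisFun,
          abs_of_pos α_pos, pow_one, mul_one, mul_one]

lemma exists_coveringDensity_le_and_volume_uncovered_le {v k : ℕ} (hv : 1 ≤ v) (hk : 2000 * v ≤ k) :
    ∃ (b : Fin (1 + k) → EuclideanSpace ℝ (Fin (1 + k))) (r : ℝ), 0 < r ∧ LinearIndependent ℝ b ∧
      coveringDensity b r ≤ 8 * v ∧
        volume (uncovered b r) ≤ ENNReal.ofReal (4 * (1 / 2) ^ v) := by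
  have hV := unitBallVolume_pos k
  obtain ⟨g, hcount, hgv, hg⟩ := ((eventually_exists_card_nonclosedTuples_le hv hk).and
    ((((tendsto_natCast_atTop_atTop (R := ℝ)).const_mul_atTop hV).eventually_ge_atTop
      (2 * v)).and (Filter.eventually_gt_atTop 0))).exists
  obtain ⟨q, hq, hgq, hqg⟩ := Nat.exists_prime_lt_and_le_two_mul (g ^ 8) (by positivity)
  have : Fact q.Prime := ⟨hq⟩
  have le_ceil := Nat.le_ceil (unitBallVolume k * g ^ (4 * k) / 2)
  have le_pow : (g : ℝ) ≤ g ^ (4 * k) := le_self_pow₀ (by exact_mod_cast hg) (by omega)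
  refine exists_coveringDensity_le_and_volume_uncovered_le_of_integerPoints (q := q)
    (R := (g * g ^ 3 : ℕ)) hv (Nat.cast_le (α := ℝ).1 ?_) (by omega) (by positivity) ?_
    (hcount q hgq hqg)
  · exact le_trans (by nlinarith) le_ceil
  · rw [← pow_succ', Nat.cast_pow, ← pow_mul]
    linarith

end BaseLattice

section CoveringDensity

lemma isLatticeCovering_basisFun (n : ℕ) :
    IsLatticeCovering (fun i ↦ EuclideanSpace.basisFun (Fin n) ℝ i) √n := by
  refine ⟨linearIndependent_basisFun n, Set.eq_univ_of_forall fun x ↦ ?_⟩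
  have mem_cell : x ∈ unitCell fun i ↦ ⌊x i⌋ := rfl
  refine Set.mem_add.2 ⟨intPoint fun i ↦ ⌊x i⌋, ⟨fun i ↦ ⌊x i⌋, (sum_smul_basisFun _).symm⟩,
    x - intPoint fun i ↦ ⌊x i⌋, ?_, add_sub_cancel _ _⟩
  rw [mem_closedBall_zero_iff, ← dist_eq_norm]
  exact dist_intPoint_le_of_mem_unitCell mem_cell

lemma coveringDensity_pos {n : ℕ} {b : Fin n → EuclideanSpace ℝ (Fin n)}
    (hb : LinearIndependent ℝ b) {r : ℝ} (hr : 0 < r) : 0 < coveringDensity b r := by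
  have := unitBallVolume_pos n
  have := latticeDet_pos hb
  rw [coveringDensity_eq b hr.le]
  positivity

lemma nu_eq (d : ℕ) : nu d = unitBallVolume d * √d ^ d :=
  volume_real_closedBall 0 (Real.sqrt_nonneg d)

lemma nu_pos (d : ℕ) : 0 < nu d := by
  rw [nu_eq]
  rcases d.eq_zero_or_pos with rfl | hd
  · simpa using unitBallVolume_pos 0
  · have := unitBallVolume_pos d
    positivity

lemma add_one_pow_le_exp_one_mul_pow (n : ℕ) : ((n : ℝ) + 1) ^ n ≤ Real.exp 1 * n ^ n := by
  rcases n.eq_zero_or_pos with rfl | hn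
  · simp
  · calc ((n : ℝ) + 1) ^ n = (1 + (n : ℝ)⁻¹) ^ n * n ^ n := by
          rw [← mul_pow]
          field_simp
      _ ≤ Real.exp 1 * n ^ n := by
          gcongr
          exact Real.one_add_inv_pow_le_exp

lemma nu_succ_le (n : ℕ) : nu (n + 1) ≤ √(2 * Real.pi * Real.exp 1) * nu n := by
  have := unitBallVolume_pos n
  have := unitBallVolume_pos (n + 1)
  have sqrt_pow_sq (m : ℕ) : (√(m : ℝ) ^ m) ^ 2 = m ^ m := by
    rw [pow_right_comm, Real.sq_sqrt m.cast_nonneg]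
  rw [nu_eq, nu_eq]
  refine (sq_le_sq₀ (by positivity) (by positivity)).1 ?_
  rw [mul_pow, mul_pow, mul_pow, Real.sq_sqrt (by positivity), sqrt_pow_sq, sqrt_pow_sq]
  calc unitBallVolume (n + 1) ^ 2 * ((n + 1 : ℕ) : ℝ) ^ (n + 1)
      = unitBallVolume (n + 1) ^ 2 * (n + 1) * ((n : ℝ) + 1) ^ n := by
        push_cast
        ring
    _ ≤ 2 * Real.pi * unitBallVolume n ^ 2 * (Real.exp 1 * n ^ n) :=
        mul_le_mul (unitBallVolume_succ_sq_mul_le n) (add_one_pow_le_exp_one_mul_pow n)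
          (by positivity) (by positivity)
    _ = 2 * Real.pi * Real.exp 1 * (unitBallVolume n ^ 2 * n ^ n) := by ring

lemma nu_add_le (m t : ℕ) : nu (m + t) ≤ √(2 * Real.pi * Real.exp 1) ^ t * nu m := by
  induction t with
  | zero => simp
  | succ t ih =>
    calc nu (m + t + 1) ≤ √(2 * Real.pi * Real.exp 1) * nu (m + t) := nu_succ_le _
      _ ≤ √(2 * Real.pi * Real.exp 1) * (√(2 * Real.pi * Real.exp 1) ^ t * nu m) := by gcongr
      _ = √(2 * Real.pi * Real.exp 1) ^ (t + 1) * nu m := by ring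

lemma IsRobustCovering.radius_pos {d : ℕ} (hd : 0 < d) {bd : Fin d → EuclideanSpace ℝ (Fin d)}
    {rd : ℝ} (hrob : IsRobustCovering bd rd) : 0 < rd := by
  have : Nonempty (Fin d) := ⟨⟨0, hd⟩⟩
  obtain ⟨P, ⟨x, w, -, -, -, volume_eq⟩, hP⟩ := hrob.2 0
  by_contra! hrd
  have volume_pos := ENNReal.ofReal_pos.2 (latticeDet_pos hrob.1.1)
  have volume_zero : volume (Metric.closedBall (0 : EuclideanSpace ℝ (Fin d)) rd) = 0 := by
    simp [EuclideanSpace.volume_closedBall, ENNReal.ofReal_eq_zero.2 hrd, hd.ne']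
  exact volume_pos.ne' (volume_eq ▸ measure_mono_null hP volume_zero)

lemma coveringDensity_add_div_le {m d T n : ℕ} (hn : n = m + d * T)
    {b : Fin m → EuclideanSpace ℝ (Fin m)} {b' : Fin n → EuclideanSpace ℝ (Fin n)}
    (hb : LinearIndependent ℝ b) {c D : ℝ} (hc : 0 < c) (hD : 0 < D)
    (hdet : latticeDet b' = latticeDet b * (c ^ d * (nu d / D)) ^ T) :
    coveringDensity b' (c * √n + c * √n / n) ≤
      Real.exp 1 * (√(2 * Real.pi * Real.exp 1) ^ d * (D / nu d)) ^ T *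
        coveringDensity b (c * √m) := by
  have det_pos := latticeDet_pos hb
  have nu_d_pos := nu_pos d
  have := nu_pos m
  have volume_eq : unitBallVolume n * (c * √n + c * √n / n) ^ n =
      nu n * c ^ n * (1 + (n : ℝ)⁻¹) ^ n := by
    rw [nu_eq, div_eq_mul_inv, ← mul_one_add, mul_pow, mul_pow]
    ring
  rw [coveringDensity_eq b' (by positivity), coveringDensity_eq b (by positivity), volume_eq, hdet,
    div_le_iff₀ (by positivity)]
  set s := √(2 * Real.pi * Real.exp 1)
  calc nu n * c ^ n * (1 + (n : ℝ)⁻¹) ^ n ≤ s ^ (d * T) * nu m * c ^ n * Real.exp 1 := by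
        gcongr
        · exact hn ▸ nu_add_le m (d * T)
        · exact Real.one_add_inv_pow_le_exp
    _ = Real.exp 1 * (s ^ d * (D / nu d)) ^ T *
          (unitBallVolume m * (c * √m) ^ m / latticeDet b) *
            (latticeDet b * (c ^ d * (nu d / D)) ^ T) := by
        rw [hn, nu_eq m]
        simp only [mul_pow, div_pow, pow_add, pow_mul]
        field_simp

/- The robust lattice is scaled so that its balls and those of the `m`-dimensional lattice are in
the proportion `√d : √m`, which optimises the density of the glued lattice. -/
lemma IsRobustCovering.exists_basis_coveringDensity_le {d : ℕ} (hd : 0 < d)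
    {bd : Fin d → EuclideanSpace ℝ (Fin d)} {rd : ℝ} (hrob : IsRobustCovering bd rd) :
    ∃ K : ENNReal, K ≠ 0 ∧ K ≠ ⊤ ∧ ∀ {m : ℕ} {b : Fin m → EuclideanSpace ℝ (Fin m)} {r : ℝ},
      0 < m → LinearIndependent ℝ b → 0 < r → ∀ {T n : ℕ}, n = m + d * T →
        ∃ (b' : Fin n → EuclideanSpace ℝ (Fin n)) (R : ℝ), 0 < R ∧ LinearIndependent ℝ b' ∧
          coveringDensity b' (R + R / n) ≤
            Real.exp 1 * (√(2 * Real.pi * Real.exp 1) ^ d * (coveringDensity bd rd / nu d)) ^ T *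
              coveringDensity b r ∧
          K * volume (uncovered b' R) ≤ (K * volume (uncovered b r)) ^ (2 ^ (d * T)) := by
  obtain ⟨K, hK0, hKtop, hglue⟩ := hrob.exists_basis_volume_uncovered_le_pow
  refine ⟨K, hK0, hKtop, fun {m b r} hm hb hr {T n} hn ↦ ?_⟩
  have hrd := hrob.radius_pos hd
  have := latticeDet_pos hrob.1.1
  have := unitBallVolume_pos d
  have hD := coveringDensity_pos hrob.1.1 hrd
  set c := r / √m with hc
  have c_pos : 0 < c := by positivity
  have hr_eq : c * √m = r := by
    rw [hc]
    field_simp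
  set h := c * √d / rd with hh
  obtain ⟨b', hb', hdet, hvol⟩ := hglue m b r h hb (by positivity) hr.le T n hn
  have scale_eq : h ^ d * latticeDet bd = c ^ d * (nu d / coveringDensity bd rd) := by
    rw [hh, nu_eq, coveringDensity_eq bd hrd.le, div_pow, mul_pow]
    field_simp
  have radius_eq : √(r ^ 2 + T * (h * rd) ^ 2) = c * √n := by
    rw [← Real.sqrt_sq (by positivity : 0 ≤ c * √n), hh, div_mul_cancel₀ _ hrd.ne', ← hr_eq,
      mul_pow, mul_pow, mul_pow, Real.sq_sqrt m.cast_nonneg, Real.sq_sqrt d.cast_nonneg,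
      Real.sq_sqrt n.cast_nonneg, hn]
    congr 1
    push_cast
    ring
  have hn_pos : 0 < n := by omega
  rw [scale_eq] at hdet
  exact ⟨b', c * √n, by positivity, hb', hr_eq ▸ coveringDensity_add_div_le hn hb c_pos hD hdet,
    radius_eq ▸ hvol⟩

end CoveringDensity

section Asymptotics

lemma half_pow_le_exp {x : ℝ} {v : ℕ} (hv : x / 8000 ≤ v) :
    (1 / 2 : ℝ) ^ v ≤ Real.exp (-(x / 12000)) := by
  have half_eq : (1 / 2 : ℝ) = Real.exp (-Real.log 2) := by
    rw [Real.exp_neg, Real.exp_log two_pos, one_div]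
  rw [half_eq, ← Real.exp_nat_mul, Real.exp_le_exp]
  nlinarith [Real.log_two_gt_d9]

lemma eventually_mul_half_pow_le_exp (κ : ℝ) :
    ∀ᶠ n : ℕ in Filter.atTop, ∀ v : ℕ, (n : ℝ) / 8000 ≤ v →
      κ * (4 * (1 / 2) ^ v) ≤ Real.exp (-(n / 20000)) := by
  filter_upwards [(Real.tendsto_exp_atTop.comp (tendsto_natCast_atTop_atTop.atTop_div_const
    (by norm_num : (0 : ℝ) < 30000))).eventually_ge_atTop (4 * κ)] with n hκ v hv
  calc κ * (4 * (1 / 2) ^ v) = 4 * κ * (1 / 2) ^ v := by ring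
    _ ≤ Real.exp (n / 30000) * Real.exp (-(n / 12000)) :=
        mul_le_mul hκ (half_pow_le_exp hv) (by positivity) (Real.exp_nonneg _)
    _ = Real.exp (-(n / 20000)) := by
        rw [← Real.exp_add]
        ring_nf

lemma mul_one_add_lt_one {κ μ P : ℝ} (hκ : 0 < κ) (hP : 1 ≤ P) (hκP : 2 / κ < P)
    (h : κ * μ ≤ (P ^ 2)⁻¹) : μ * (1 + P) < 1 := by
  have hμ : μ ≤ (P ^ 2)⁻¹ / κ := by rwa [le_div_iff₀' hκ]
  calc μ * (1 + P) ≤ (P ^ 2)⁻¹ / κ * (2 * P) := by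
        gcongr
        linarith
    _ = 2 / κ / P := by field_simp
    _ < 1 := (div_lt_one (by linarith)).2 hκP

lemma eventually_mul_one_add_pow_lt_one {κ : ℝ} (hκ : 0 < κ) :
    ∀ᶠ n : ℕ in Filter.atTop, ∀ (v M : ℕ) (μ : ℝ), (n : ℝ) / 8000 ≤ v →
      40000 * Real.log n ≤ M → κ * μ ≤ (κ * (4 * (1 / 2) ^ v)) ^ M → μ * (1 + (n : ℝ) ^ n) < 1 := by
  filter_upwards [eventually_mul_half_pow_le_exp κ, Filter.eventually_ge_atTop 1,
    tendsto_natCast_atTop_atTop.eventually_gt_atTop (2 / κ)]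
    with n half_pow_le hn hnκ v M μ hv hM hμ
  have hn' : (1 : ℝ) ≤ n := by exact_mod_cast hn
  refine mul_one_add_lt_one hκ (one_le_pow₀ hn') (hnκ.trans_le (le_self_pow₀ hn' (by omega))) ?_
  calc κ * μ ≤ (κ * (4 * (1 / 2) ^ v)) ^ M := hμ
    _ ≤ Real.exp (-(n / 20000)) ^ M := by
        gcongr
        exact half_pow_le v hv
    _ = Real.exp (-(n / 20000 * M)) := by
        rw [← Real.exp_nat_mul]
        ring_nf
    _ ≤ Real.exp (-(n / 20000 * (40000 * Real.log n))) := by gcongr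
    _ = Real.exp (-(n * Real.log n * (2 : ℕ))) := by
        push_cast
        ring_nf
    _ = (((n : ℝ) ^ n) ^ 2)⁻¹ := by
        rw [Real.exp_neg, mul_comm, Real.exp_nat_mul, Real.exp_nat_mul, Real.exp_log (by linarith)]

lemma eventually_ennreal_mul_one_add_pow_lt_one {K : ENNReal} (hK0 : K ≠ 0) (hKtop : K ≠ ⊤) :
    ∀ᶠ n : ℕ in Filter.atTop, ∀ (v M : ℕ) (μ : ENNReal), (n : ℝ) / 8000 ≤ v →
      40000 * Real.log n ≤ M → K * μ ≤ (K * ENNReal.ofReal (4 * (1 / 2) ^ v)) ^ M →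
        μ * (1 + n ^ n) < 1 := by
  filter_upwards [eventually_mul_one_add_pow_lt_one (ENNReal.toReal_pos hK0 hKtop)]
    with n real_lt v M μ hv hM hμ
  have bound_ne_top : (K * ENNReal.ofReal (4 * (1 / 2) ^ v)) ^ M ≠ ⊤ :=
    ENNReal.pow_ne_top (ENNReal.mul_ne_top hKtop ENNReal.ofReal_ne_top)
  have μ_ne_top : μ ≠ ⊤ := by
    rintro rfl
    exact bound_ne_top (top_le_iff.1 (ENNReal.mul_top hK0 ▸ hμ))
  have toReal_lt := real_lt v M μ.toReal hv hM <| by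
    simpa [ENNReal.toReal_ofReal] using ENNReal.toReal_mono bound_ne_top hμ
  rw [← ENNReal.toReal_lt_toReal (by finiteness) ENNReal.one_ne_top]
  simpa [ENNReal.toReal_add] using toReal_lt

lemma eventually_exists_pow_mem_Icc {d : ℕ} (hd : 0 < d) {A : ℝ} (hA : 0 < A) :
    ∀ᶠ n : ℕ in Filter.atTop, ∃ T : ℕ,
      ((2 : ℝ) ^ d) ^ T ∈ Set.Icc (A * Real.log n) (2 ^ d * (A * Real.log n)) ∧
        2 * (d * T) ≤ n := by
  have hd2 : (1 : ℝ) < 2 ^ d := one_lt_pow₀ one_lt_two hd.ne'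
  filter_upwards [(Real.isLittleO_log_id_atTop.comp_tendsto tendsto_natCast_atTop_atTop).def
      (by positivity : 0 < 1 / (2 * (2 ^ d * A))),
    (((Real.tendsto_log_atTop.comp tendsto_natCast_atTop_atTop).const_mul_atTop
      hA).eventually_ge_atTop 1)] with n log_le one_le
  obtain ⟨T, pow_le, lt_pow⟩ := exists_nat_pow_near one_le hd2
  have pow_succ_le : ((2 : ℝ) ^ d) ^ (T + 1) ≤ 2 ^ d * (A * Real.log n) := by
    rw [pow_succ']
    gcongr
    exact pow_le
  have half_bound : 2 ^ d * (A * Real.log n) ≤ n / 2 := by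
    calc 2 ^ d * (A * Real.log n) ≤ 2 ^ d * (A * (1 / (2 * (2 ^ d * A)) * n)) := by
          gcongr
          simpa using (le_abs_self _).trans log_le
      _ = n / 2 := by field_simp
  refine ⟨T + 1, ⟨lt_pow.le, pow_succ_le⟩, ?_⟩
  have lt_two_pow : ((d * (T + 1) : ℕ) : ℝ) ≤ (2 ^ d) ^ (T + 1) := by
    rw [← pow_mul]
    exact_mod_cast Nat.lt_two_pow_self.le
  have : (2 : ℝ) * (d * (T + 1) : ℕ) ≤ n := by linarith
  exact_mod_cast this

lemma rpow_le_of_mem_Icc {a c L M : ℝ} (γ : ℝ) (ha : 0 < a) (hc : 0 < c) (hL : 0 < L)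
    (hM : M ∈ Set.Icc (a * L) (c * L)) : M ^ γ ≤ (c ^ γ + a ^ γ) * L ^ γ := by
  have M_pos : 0 < M := (by positivity : 0 < a * L).trans_le hM.1
  rw [add_mul, ← Real.mul_rpow hc.le hL.le, ← Real.mul_rpow ha.le hL.le]
  rcases le_total 0 γ with hγ | hγ
  · exact (Real.rpow_le_rpow M_pos.le hM.2 hγ).trans (le_add_of_nonneg_right (by positivity))
  · exact (Real.rpow_le_rpow_of_nonpos (by positivity) hM.1 hγ).trans
      (le_add_of_nonneg_left (by positivity))

lemma sqrt_pow_mul_div_eq_rpow {d : ℕ} (hd : 0 < d) {x D N : ℝ} (hx : 0 < x) (hD : 0 < D)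
    (hN : 0 < N) :
    √x ^ d * (D / N) =
      ((2 : ℝ) ^ d) ^ (Real.logb 2 x / 2 - 1 / d * Real.logb 2 (N / D)) := by
  have exponent_eq : (d : ℝ) * (Real.logb 2 x / 2 - 1 / d * Real.logb 2 (N / D)) =
      Real.logb 2 x * (1 / 2) * d - Real.logb 2 (N / D) := by
    field_simp
  rw [← Real.rpow_natCast 2 d, ← Real.rpow_mul two_pos.le, exponent_eq, Real.rpow_sub two_pos,
    Real.rpow_mul two_pos.le, Real.rpow_mul two_pos.le, Real.rpow_logb two_pos (by norm_num) hx,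
    Real.rpow_logb two_pos (by norm_num) (by positivity), ← Real.sqrt_eq_rpow, Real.rpow_natCast]
  field_simp

end Asymptotics

section RobustBound

variable {d : ℕ} {bd : Fin d → EuclideanSpace ℝ (Fin d)} {rd : ℝ}

/- Of the `n` dimensions, `1 + k ≥ n / 2` are used by the base lattice, whose uncovered fraction
`4 * 2⁻ᵛ` is exponentially small in `n`; `T` gluings raise it to the power `2^(d * T)`. -/
lemma IsRobustCovering.eventually_exists_isLatticeCovering_of_le_pow (hd : 0 < d)
    (hrob : IsRobustCovering bd rd) :
    ∀ᶠ n : ℕ in Filter.atTop, ∀ T : ℕ, 40000 * Real.log n ≤ ((2 : ℝ) ^ d) ^ T → 2 * (d * T) ≤ n →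
      ∃ (b : Fin n → EuclideanSpace ℝ (Fin n)) (r : ℝ), 0 < r ∧ IsLatticeCovering b r ∧
        coveringDensity b r ≤ 8 * Real.exp 1 * n *
          (√(2 * Real.pi * Real.exp 1) ^ d * (coveringDensity bd rd / nu d)) ^ T := by
  obtain ⟨K, hK0, hKtop, hglue⟩ := hrob.exists_basis_coveringDensity_le hd
  have hD := coveringDensity_pos hrob.1.1 (hrob.radius_pos hd)
  have := nu_pos d
  filter_upwards [eventually_ennreal_mul_one_add_pow_lt_one hK0 hKtop,
    Filter.eventually_ge_atTop 10000] with n hsmall hn T hT hdT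
  obtain ⟨k, hk⟩ : ∃ k, n = 1 + k + d * T := ⟨n - d * T - 1, by omega⟩
  set v := k / 2000
  have v_le : v ≤ n := by omega
  have le_v : (n : ℝ) / 8000 ≤ v := by
    rw [div_le_iff₀ (by norm_num)]
    exact_mod_cast (by omega : n ≤ v * 8000)
  obtain ⟨b₀, r₀, hr₀, hb₀, hdens₀, hvol₀⟩ :=
    exists_coveringDensity_le_and_volume_uncovered_le (v := v) (k := k) (by omega) (by omega)
  obtain ⟨b, R, hR, hb, hdens, hvol⟩ := hglue (by omega) hb₀ hr₀ hk
  refine ⟨b, R + R / n, by positivity, isLatticeCovering_of_uncovered_eq_empty hb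
    (uncovered_add_div_eq_empty hb (by omega) ?_), hdens.trans ?_⟩
  · rw [Fintype.card_fin]
    refine hsmall v (2 ^ (d * T)) _ le_v (by simpa [pow_mul] using hT) (hvol.trans ?_)
    gcongr
  · have base_le : coveringDensity b₀ r₀ ≤ 8 * n := hdens₀.trans (by gcongr)
    set θ := √(2 * Real.pi * Real.exp 1) ^ d * (coveringDensity bd rd / nu d)
    have : 0 ≤ θ := by positivity
    calc Real.exp 1 * θ ^ T * coveringDensity b₀ r₀ ≤ Real.exp 1 * θ ^ T * (8 * n) := by gcongr
      _ = 8 * Real.exp 1 * n * θ ^ T := by ring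

lemma IsRobustCovering.exists_eventually_exists_isLatticeCovering (hd : 0 < d)
    (hrob : IsRobustCovering bd rd) {γ : ℝ}
    (hγ : √(2 * Real.pi * Real.exp 1) ^ d * (coveringDensity bd rd / nu d) = ((2 : ℝ) ^ d) ^ γ) :
    ∃ C : ℝ, 0 < C ∧ ∀ᶠ n : ℕ in Filter.atTop,
      ∃ (b : Fin n → EuclideanSpace ℝ (Fin n)) (r : ℝ), 0 < r ∧ IsLatticeCovering b r ∧
        coveringDensity b r ≤ C * (n * Real.log n ^ γ) := by
  refine ⟨8 * Real.exp 1 * ((2 ^ d * 40000) ^ γ + 40000 ^ γ), by positivity, ?_⟩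
  filter_upwards [hrob.eventually_exists_isLatticeCovering_of_le_pow hd,
    eventually_exists_pow_mem_Icc hd (by norm_num : (0 : ℝ) < 40000),
    Filter.eventually_gt_atTop 1] with n hcover ⟨T, hT, hdT⟩ hn
  obtain ⟨b, r, hr, hb, hdens⟩ := hcover T hT.1 hdT
  have hT' : ((2 : ℝ) ^ d) ^ T ∈ Set.Icc (40000 * Real.log n) (2 ^ d * 40000 * Real.log n) := by
    rwa [mul_assoc]
  refine ⟨b, r, hr, hb, hdens.trans ?_⟩
  rw [hγ, Real.rpow_pow_comm (by positivity)]
  calc 8 * Real.exp 1 * n * (((2 : ℝ) ^ d) ^ T) ^ γ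
      ≤ 8 * Real.exp 1 * n * (((2 ^ d * 40000) ^ γ + 40000 ^ γ) * Real.log n ^ γ) := by
        gcongr
        exact rpow_le_of_mem_Icc γ (by norm_num) (by positivity)
          (Real.log_pos (by exact_mod_cast hn)) hT'
    _ = 8 * Real.exp 1 * ((2 ^ d * 40000) ^ γ + 40000 ^ γ) * (n * Real.log n ^ γ) := by ring

end RobustBound

lemma exists_forall_isLatticeCovering_of_eventually {f : ℕ → ℝ} (hf : ∀ n ≥ 2, 0 < f n) {C : ℝ}
    (hC : 0 < C) (h : ∀ᶠ n : ℕ in Filter.atTop,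
      ∃ (b : Fin n → EuclideanSpace ℝ (Fin n)) (r : ℝ), 0 < r ∧ IsLatticeCovering b r ∧
        coveringDensity b r ≤ C * f n) :
    ∃ C : ℝ, 0 < C ∧ ∀ n ≥ 2, ∃ (b : Fin n → EuclideanSpace ℝ (Fin n)) (r : ℝ), 0 < r ∧
      IsLatticeCovering b r ∧ coveringDensity b r ≤ C * f n := by
  obtain ⟨N, hN⟩ := Filter.eventually_atTop.1 h
  let F (n : ℕ) : ℝ :=
    |coveringDensity (fun i ↦ EuclideanSpace.basisFun (Fin n) ℝ i) √n / f n|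
  have sum_nonneg : 0 ≤ ∑ n ∈ Finset.range N, F n := Finset.sum_nonneg fun _ _ ↦ abs_nonneg _
  refine ⟨C + ∑ n ∈ Finset.range N, F n, by positivity, fun n hn ↦ ?_⟩
  have f_pos := hf n hn
  rcases le_or_gt N n with hNn | hnN
  · obtain ⟨b, r, hr, hb, hdens⟩ := hN n hNn
    exact ⟨b, r, hr, hb, hdens.trans (by gcongr; linarith)⟩
  · refine ⟨_, √n, by positivity, isLatticeCovering_basisFun n, (div_le_iff₀ f_pos).1 ?_⟩
    have le_sum : F n ≤ ∑ n ∈ Finset.range N, F n :=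
      Finset.single_le_sum (fun _ _ ↦ abs_nonneg _) (Finset.mem_range.2 hnN)
    linarith [le_abs_self (coveringDensity (fun i ↦ EuclideanSpace.basisFun (Fin n) ℝ i) √n / f n)]

theorem general_parallelepiped_bound_general (d : ℕ) (hd : 1 ≤ d) (D : ℝ)
    (hrob : ∃ (bd : Fin d → EuclideanSpace ℝ (Fin d)) (rd : ℝ),
      IsRobustCovering bd rd ∧ coveringDensity bd rd = D) :
    ∃ C : ℝ, 0 < C ∧ ∀ n : ℕ, 2 ≤ n →
      ∃ (b : Fin n → EuclideanSpace ℝ (Fin n)) (r : ℝ), 0 < r ∧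
        IsLatticeCovering b r ∧
        coveringDensity b r ≤
          C * n * Real.log n ^
            (Real.logb 2 (2 * Real.pi * Real.exp 1) / 2 -
              (1 / d) * Real.logb 2 (nu d / D)) := by
  obtain ⟨bd, rd, hrob, rfl⟩ := hrob
  have hD := coveringDensity_pos hrob.1.1 (hrob.radius_pos hd)
  obtain ⟨C, hC, hcover⟩ := hrob.exists_eventually_exists_isLatticeCovering hd
    (sqrt_pow_mul_div_eq_rpow hd (by positivity) hD (nu_pos d))
  simp only [mul_assoc _ (Nat.cast _ : ℝ)]
  refine exists_forall_isLatticeCovering_of_eventually (fun n hn ↦ ?_) hC hcover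
  have := Real.log_pos (by exact_mod_cast hn : (1 : ℝ) < n)
  positivity

/-- **Theorem 1.4.** If there is a robust lattice covering of `ℝ^d` with density `D ≤ ν_d`,
then there is a constant `C` such that for every `n ≥ 2` there is a lattice covering of
`ℝⁿ` by balls of density at most `C · n · (ln n)^γ`, where
`γ = (1/2) log₂ (2πe) − (1/d) log₂ (ν_d / D)`. -/
theorem general_parallelepiped_bound (d : ℕ) (hd : 1 ≤ d) (D : ℝ)
    (hrob : ∃ (bd : Fin d → EuclideanSpace ℝ (Fin d)) (rd : ℝ),
      IsRobustCovering bd rd ∧ coveringDensity bd rd = D)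
    (hDle : D ≤ nu d) :
    ∃ C : ℝ, 0 < C ∧ ∀ n : ℕ, 2 ≤ n →
      ∃ (b : Fin n → EuclideanSpace ℝ (Fin n)) (r : ℝ), 0 < r ∧
        IsLatticeCovering b r ∧
        coveringDensity b r ≤
          C * n * Real.log n ^
            (Real.logb 2 (2 * Real.pi * Real.exp 1) / 2 -
              (1 / d) * Real.logb 2 (nu d / D)) :=
  general_parallelepiped_bound_general d hd D hrob

end
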